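/- A pair (X, Y) of topological spaces with Y ⊂ X is homeomorphic to the pair (𝕀^ω × ℓ₂(κ), 𝕀^ω × ℓ₂ᶠ(κ)) for an infinite cardinal κ if and only if: (1) the space X is homeomorphic to ℓ₂(κ); (2) the space Y can be written as a countable union of locally compact spaces; and (3) the space Y absorbs compact subsets of X, in the sense that for each compact subset K ⊂ X, each compact subset B ⊂ K ∩ Y, and each open cover 𝒰 of X there is a topological embedding h : K → Y such that h|B = id|B and h is 𝒰-near to the identity embedding id : K → X. -/

import Mathlib

/-!
The theorem rests on two facts: a set in a Hilbert space that is a countable union of locally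
compact sets and absorbs compacta is unique up to a homeomorphism of the whole space
(`exists_homeo_of_absorbs`), and the model `𝕀^ω × ℓ₂ᶠ(κ)` is such a set in `𝕀^ω × ℓ₂(κ)`, which is
itself homeomorphic to `ℓ₂(κ)`.  Both conditions on `Y` are invariant under homeomorphisms of pairs,
so the two facts give both directions.

**The cube is absorbed** (`nonempty_cube_l2Space`).  A point can be deleted from `ℓ₂` by a map of the
form `x ↦ x + p (ω x)`, up to a radial rescaling, where `p` is a path without a limit at its end
(`exists_deletion`).  Polar coordinates then give `ℓ₂ ≃ₜ ℓ₂^ω` (`nonempty_l2_homeo_pow`), rotations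
in the countable power give `ℓ₂ × [0,∞) ≃ₜ ℓ₂` (`nonempty_l2_half`), hence `ℓ₂ × [0,1] ≃ₜ ℓ₂`, and
passing to countable powers `ℓ₂ × 𝕀^ω ≃ₜ ℓ₂`.

**Unknotting compacta** (`unknot`).  An embedding of a compactum `K` that is close to the identity and
fixed on `B ⊆ K` is realised by a homeomorphism of `ℓ₂(ι)` that moves points little and only near
`K`.  This is Klee's trick: along a closed subspace `geomV` transversal enough to the compacta one
projects injectively, and shears built from extensions of maps defined on compacta
(`exists_extension`, `exists_shear`) carry one graph to another.

**Uniqueness.**  Stone's argument cuts a countable union of locally compact sets into countably many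
unions of discrete families of compacta (`exists_dc_union`).  Unknotting all members of a discrete
family at once pushes such a union into an absorbing set without moving what has already been placed
(`exists_push`).  An alternating infinite composition of such pushes, kept convergent by choosing each
one small, takes one absorbing set onto the other.

**The model.**  The points with exactly `n` nonzero coordinates form a locally compact layer
(`layer_locallyCompact`).  To absorb a compactum (`model_absorbs`), cut off the small coordinates to
reach finite support, mark the result so that it leaves the projection of the compactum, and store
separating functions in late coordinates of the cube; the size of this deformation vanishes exactly
on `B`, and the resulting map is injective.
-/

noncomputable section
open Set Topology

/-- The Hilbert cube `𝕀^ω`. -/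
abbrev HilbertCube : Type := ℕ → Set.Icc (0:ℝ) 1

/-- The Hilbert space `ℓ₂(ι)` of square-summable real families indexed by `ι`. -/
abbrev l2Space (ι : Type u) : Type u := ↥(lp (fun _ : ι => ℝ) 2)

/-- `ℓ₂ᶠ(ι)`: the set of finitely supported elements of `ℓ₂(ι)`,
i.e. the linear hull of the standard orthonormal basis. -/
def l2fin (ι : Type u) : Set (l2Space ι) := {x | {i | (x : ∀ _ : ι, ℝ) i ≠ 0}.Finite}

/-- The density `dens X` of a topological space: the smallest cardinality of a dense subset. -/
def dens (X : Type u) [TopologicalSpace X] : Cardinal.{u} :=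
  sInf {c | ∃ s : Set X, Dense s ∧ Cardinal.mk s = c}

/-- A family of sets is an open cover of the space. -/
def IsOpenCover {X : Type*} [TopologicalSpace X] (𝒰 : Set (Set X)) : Prop :=
  (∀ U ∈ 𝒰, IsOpen U) ∧ ⋃₀ 𝒰 = Set.univ

/-- The covering dimension of `X` is at most `n`: every open cover admits an open
refinement in which every point lies in at most `n + 1` members. -/
def CovDimLE (X : Type*) [TopologicalSpace X] (n : ℕ) : Prop :=
  ∀ 𝒰 : Set (Set X), IsOpenCover 𝒰 →
    ∃ 𝒱 : Set (Set X), IsOpenCover 𝒱 ∧ (∀ V ∈ 𝒱, ∃ U ∈ 𝒰, V ⊆ U) ∧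
      ∀ x : X, {V ∈ 𝒱 | x ∈ V}.Finite ∧ {V ∈ 𝒱 | x ∈ V}.ncard ≤ n + 1

/-- A topological space is finite-dimensional if it has finite covering dimension. -/
def TopFinDim (X : Type*) [TopologicalSpace X] : Prop := ∃ n, CovDimLE X n

/-- A closed set `A ⊆ X` is a `Z`-set if the maps of the Hilbert cube into `X`
missing `A` are dense in `C(𝕀^ω, X)` with the compact-open topology. -/
def IsZSet {X : Type*} [TopologicalSpace X] (A : Set X) : Prop :=
  IsClosed A ∧ Dense {f : C(HilbertCube, X) | Set.range f ∩ A = ∅}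

/-- `A` has infinite codimension in `B`: the linear hull of `A` has infinite
codimension in the linear hull of `B`. -/
def InfiniteCodimIn {E : Type*} [AddCommGroup E] [Module ℝ E] (A B : Set E) : Prop :=
  ¬ Module.Finite ℝ
    (↥(Submodule.span ℝ B) ⧸ (Submodule.span ℝ A).comap (Submodule.span ℝ B).subtype)

namespace West

open Filter

/-! ### Tools for `ℓ₂`-sums -/

section Kadec

variable {ι : Type*} {G : Type*} [NormedAddCommGroup G]

/-- The `ℓ₂`-sum of copies of `G` indexed by `ι`. -/
abbrev L2 (ι : Type*) (G : Type*) [NormedAddCommGroup G] : Type _ := ↥(lp (fun _ : ι => G) 2)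

lemma memlp_iff {f : ι → G} : Memℓp f 2 ↔ Summable fun i => ‖f i‖ ^ 2 := by
  have h := memℓp_gen_iff (E := fun _ : ι => G) (f := f) (p := 2) (by norm_num)
  simpa using h

/-- Constructor of an element of the `ℓ₂`-sum from square-summability. -/
def l2mk (f : ι → G) (h : Summable fun i => ‖f i‖ ^ 2) : L2 ι G := ⟨f, memlp_iff.2 h⟩

@[simp] lemma l2mk_apply (f : ι → G) (h : Summable fun i => ‖f i‖ ^ 2) (i : ι) :
    (l2mk f h : ι → G) i = f i := rfl

lemma l2_summable (x : L2 ι G) : Summable fun i => ‖x i‖ ^ 2 := memlp_iff.1 x.2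

lemma l2_norm_sq (x : L2 ι G) : ‖x‖ ^ 2 = ∑' i, ‖x i‖ ^ 2 := by
  have h := lp.norm_rpow_eq_tsum (p := 2) (by norm_num) x
  simpa using h

lemma l2_apply_le (x : L2 ι G) (i : ι) : ‖x i‖ ≤ ‖x‖ := lp.norm_apply_le_norm (by norm_num) x i

lemma l2_ext {x y : L2 ι G} (h : ∀ i, x i = y i) : x = y := lp.ext (funext h)

lemma l2_continuous_apply [NormedSpace ℝ G] (i : ι) : Continuous fun x : L2 ι G => x i := by
  have : LipschitzWith 1 fun x : L2 ι G => x i := by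
    refine LipschitzWith.of_dist_le_mul fun x y => ?_
    rw [dist_eq_norm, dist_eq_norm, ← Pi.sub_apply, ← lp.coeFn_sub]
    simpa using l2_apply_le (x - y) i
  exact this.continuous

variable [InnerProductSpace ℝ G]

/-- Coordinatewise convergence together with convergence of norms implies norm convergence. -/
lemma kadec_tendsto {α : Type*} {l : Filter α} {f : α → L2 ι G} {g : L2 ι G}
    (hc : ∀ i, Tendsto (fun a => f a i) l (𝓝 (g i)))
    (hn : Tendsto (fun a => ‖f a‖) l (𝓝 ‖g‖)) : Tendsto f l (𝓝 g) := by
  classical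
  have hin : Tendsto (fun a => inner ℝ (f a) g) l (𝓝 (inner ℝ g g)) := by
    rw [Metric.tendsto_nhds]
    intro ε hε
    set C := 2 * ‖g‖ + 1 with hC
    have hCpos : 0 < C := by positivity
    have hs := (lp.hasSum_single (p := 2) (by norm_num) g)
    have h1 : ∀ᶠ s : Finset ι in atTop, dist (∑ i ∈ s, lp.single 2 i (g i)) g < ε / (2 * C) :=
      (Metric.tendsto_nhds.1 hs) _ (by positivity)
    obtain ⟨s, hs⟩ := h1.exists
    set v : L2 ι G := ∑ i ∈ s, lp.single 2 i (g i) with hv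
    have hiv : Tendsto (fun a => inner ℝ (f a) v) l (𝓝 (inner ℝ g v)) := by
      have e : ∀ w : L2 ι G, inner ℝ w v = ∑ i ∈ s, inner ℝ (w i) (g i) := by
        intro w
        rw [hv, inner_sum]
        refine Finset.sum_congr rfl fun i _ => ?_
        rw [lp.inner_single_right]
      simp only [e]
      exact tendsto_finsetSum _ fun i _ => ((hc i).inner tendsto_const_nhds)
    have h2 := (Metric.tendsto_nhds.1 hiv) (ε / 2) (by positivity)
    have h3 : ∀ᶠ a in l, ‖f a‖ < ‖g‖ + 1 := hn.eventually_lt_const (by linarith)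
    filter_upwards [h2, h3] with a ha hb
    have hd : ‖g - v‖ < ε / (2 * C) := by rw [← dist_eq_norm, dist_comm]; exact hs
    have e : inner ℝ (f a) g - inner ℝ g g =
        (inner ℝ (f a) v - inner ℝ g v) + inner ℝ (f a - g) (g - v) := by
      simp only [inner_sub_left, inner_sub_right]; ring
    rw [Real.dist_eq] at ha ⊢
    rw [e]
    have h4 : |inner ℝ (f a - g) (g - v)| ≤ C * ‖g - v‖ := by
      refine (abs_real_inner_le_norm _ _).trans ?_
      gcongr
      refine (norm_sub_le _ _).trans ?_
      linarith
    have h5 : C * ‖g - v‖ < ε / 2 := by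
      calc C * ‖g - v‖ < C * (ε / (2 * C)) := by gcongr
        _ = ε / 2 := by field_simp
    calc _ ≤ |inner ℝ (f a) v - inner ℝ g v| + |inner ℝ (f a - g) (g - v)| := abs_add_le _ _
      _ < ε := by linarith
  rw [tendsto_iff_norm_sub_tendsto_zero]
  have h6 : Tendsto (fun a => ‖f a‖ ^ 2 - 2 * inner ℝ (f a) g + ‖g‖ ^ 2) l (𝓝 0) := by
    have := ((hn.pow 2).sub (hin.const_mul 2)).add (tendsto_const_nhds (x := ‖g‖ ^ 2))
    rw [real_inner_self_eq_norm_sq] at this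
    convert this using 2
    ring
  have h7 : Tendsto (fun a => √(‖f a‖ ^ 2 - 2 * inner ℝ (f a) g + ‖g‖ ^ 2)) l (𝓝 0) := by
    simpa using h6.sqrt
  refine h7.congr fun a => ?_
  rw [← norm_sub_sq_real, Real.sqrt_sq (norm_nonneg _)]

lemma kadec_continuous {α : Type*} [TopologicalSpace α] {f : α → L2 ι G}
    (hc : ∀ i, Continuous (fun a => f a i)) (hn : Continuous (fun a => ‖f a‖)) :
    Continuous f :=
  continuous_iff_continuousAt.2 fun a =>
    kadec_tendsto (fun i => (hc i).continuousAt) hn.continuousAt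

/-- A map into an `ℓ₂`-sum with continuous coordinates and a square-summable majorant is
continuous. -/
lemma dominated_continuous {α : Type*} [TopologicalSpace α] {f : α → L2 ι G} {c : ι → ℝ}
    (hs : Summable fun i => c i ^ 2) (hb : ∀ a i, ‖f a i‖ ≤ c i)
    (hc : ∀ i, Continuous (fun a => f a i)) : Continuous f := by
  refine kadec_continuous hc ?_
  have h : Continuous fun a => ‖f a‖ ^ 2 := by
    simp only [l2_norm_sq]
    refine continuous_tsum (fun i => (hc i).norm.pow 2) hs fun i _ => ?_
    rw [Real.norm_of_nonneg (by positivity)]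
    gcongr
    exact hb _ i
  have h2 := h.sqrt
  simpa [Real.sqrt_sq (norm_nonneg _)] using h2

end Kadec

/-! ### Parametrized fixed points -/

/-- A family of `1/2`-contractions depending continuously on a parameter has a unique
fixed point depending continuously on the parameter. -/
lemma exists_param_fixedPoint {P X : Type*} [TopologicalSpace P] [MetricSpace X] [CompleteSpace X]
    [Nonempty X] (T : P → X → X) (hT : ∀ p x y, dist (T p x) (T p y) ≤ 1 / 2 * dist x y)
    (hc : ∀ x, Continuous fun p => T p x) :
    ∃ s : P → X, Continuous s ∧ (∀ p, T p (s p) = s p) ∧ ∀ p x, T p x = x → x = s p := by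
  have hK : ∀ p, ContractingWith (1 / 2) (T p) := fun p =>
    ⟨by rw [← NNReal.coe_lt_coe]; norm_num, LipschitzWith.of_dist_le_mul fun x y => by
      simpa using hT p x y⟩
  refine ⟨fun p => ContractingWith.fixedPoint (T p) (hK p), ?_,
    fun p => (hK p).fixedPoint_isFixedPt, fun p x hx => (hK p).fixedPoint_unique hx⟩
  rw [continuous_iff_continuousAt]
  intro p
  set x := ContractingWith.fixedPoint (T p) (hK p) with hx
  have hfix : T p x = x := (hK p).fixedPoint_isFixedPt
  rw [ContinuousAt, tendsto_iff_dist_tendsto_zero]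
  have h1 : Tendsto (fun q => 2 * dist x (T q x)) (𝓝 p) (𝓝 0) := by
    have : Tendsto (fun q => T q x) (𝓝 p) (𝓝 x) := by
      have := (hc x).continuousAt (x := p)
      rwa [ContinuousAt, hfix] at this
    have := (tendsto_const_nhds (x := x)).dist this
    simpa using this.const_mul 2
  refine squeeze_zero (fun _ => dist_nonneg) (fun q => ?_) h1
  have := (hK q).dist_le_of_fixedPoint x (hK q).fixedPoint_isFixedPt
  rw [dist_comm]
  refine this.trans (le_of_eq ?_)
  simp
  ring

/-! ### Cut-off functions -/

/-- Truncation of a real number to `[0, 1]`. -/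
def clamp (a : ℝ) : ℝ := max 0 (min 1 a)

lemma clamp_nonneg (a : ℝ) : 0 ≤ clamp a := le_max_left _ _

lemma clamp_le_one (a : ℝ) : clamp a ≤ 1 := max_le zero_le_one (min_le_left _ _)

lemma clamp_continuous : Continuous clamp := by unfold clamp; fun_prop

lemma clamp_eq_one {a : ℝ} (h : 1 ≤ a) : clamp a = 1 := by simp [clamp, h]

lemma clamp_eq_zero {a : ℝ} (h : a ≤ 0) : clamp a = 0 := by
  unfold clamp
  rw [max_eq_left]
  exact (min_le_right _ _).trans h

lemma clamp_sub_le (a b : ℝ) : |clamp a - clamp b| ≤ |a - b| := by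
  unfold clamp
  rw [max_comm 0, max_comm 0]
  refine (abs_max_sub_max_le_abs _ _ _).trans ?_
  refine (abs_min_sub_min_le_max _ _ _ _).trans ?_
  simp

/-- The cut-off `θ_k`, equal to `1` for `s ≤ 2⁻ᵏ` and to `0` for `s ≥ 2¹⁻ᵏ`. -/
def theta (k : ℕ) (s : ℝ) : ℝ := clamp (2 - 2 ^ k * s)

lemma theta_nonneg (k : ℕ) (s : ℝ) : 0 ≤ theta k s := clamp_nonneg _

lemma theta_le_one (k : ℕ) (s : ℝ) : theta k s ≤ 1 := clamp_le_one _

lemma theta_continuous (k : ℕ) : Continuous (theta k) :=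
  clamp_continuous.comp (by fun_prop)

lemma theta_eq_one {k : ℕ} {s : ℝ} (h : 2 ^ k * s ≤ 1) : theta k s = 1 :=
  clamp_eq_one (by linarith)

lemma theta_eq_zero {k : ℕ} {s : ℝ} (h : 2 ≤ 2 ^ k * s) : theta k s = 0 :=
  clamp_eq_zero (by linarith)

lemma theta_lipschitz (k : ℕ) (s t : ℝ) : |theta k s - theta k t| ≤ 2 ^ k * |s - t| := by
  refine (clamp_sub_le _ _).trans (le_of_eq ?_)
  have h : (2 - 2 ^ k * s) - (2 - 2 ^ k * t) = -(2 ^ k * (s - t)) := by ring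
  rw [h, abs_neg, abs_mul, abs_of_pos (show (0:ℝ) < 2 ^ k by positivity)]

lemma exists_pow_mul_ge {s : ℝ} (hs : 0 < s) (c : ℝ) : ∃ N : ℕ, ∀ k ≥ N, c ≤ 2 ^ k * s := by
  have h : Tendsto (fun k : ℕ => (2:ℝ) ^ k * s) atTop atTop :=
    (tendsto_pow_atTop_atTop_of_one_lt (by norm_num)).atTop_mul_const hs
  exact eventually_atTop.1 (h.eventually_ge_atTop c)

end West

namespace West
open Filter

/-! ### Deleting a point from `ℓ₂` -/

section Deletion

/-- The weights `4⁻ⁿ⁻¹` of the auxiliary norm `omg`. -/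
def wgt (n : ℕ) : ℝ := (1 / 4) ^ n / 4

lemma wgt_pos (n : ℕ) : 0 < wgt n := by unfold wgt; positivity

lemma wgt_hasSum : HasSum wgt (1 / 3) := by
  have := (hasSum_geometric_of_lt_one (r := (1/4 : ℝ)) (by norm_num) (by norm_num)).div_const 4
  have h : ((1:ℝ) - 1 / 4)⁻¹ / 4 = 1 / 3 := by norm_num
  rwa [h] at this

/-- The weighted `ℓ₁`-norm `∑ wₙ |aₙ|` of a bounded sequence. -/
def omg (a : ℕ → ℝ) : ℝ := ∑' n, wgt n * |a n|

lemma omg_summable {a : ℕ → ℝ} {C : ℝ} (h : ∀ n, |a n| ≤ C) : Summable fun n => wgt n * |a n| :=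
  Summable.of_nonneg_of_le (fun n => mul_nonneg (wgt_pos n).le (abs_nonneg _))
    (fun n => mul_le_mul_of_nonneg_left (h n) (wgt_pos n).le) (wgt_hasSum.summable.mul_right C)

lemma omg_nonneg (a : ℕ → ℝ) : 0 ≤ omg a :=
  tsum_nonneg fun n => mul_nonneg (wgt_pos n).le (abs_nonneg _)

lemma abs_le_norm (x : L2 ℕ ℝ) (n : ℕ) : |x n| ≤ ‖x‖ := l2_apply_le x n

lemma omg_eq_zero {a : ℕ → ℝ} {C : ℝ} (h : ∀ n, |a n| ≤ C) (h0 : omg a = 0) (n : ℕ) : a n = 0 := by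
  have h1 := (omg_summable h).hasSum
  rw [show ∑' n, wgt n * |a n| = 0 from h0] at h1
  have h2 := (hasSum_zero_iff_of_nonneg
    (fun n => mul_nonneg (wgt_pos n).le (abs_nonneg (a n)))).1 h1
  have h3 := congrFun h2 n
  simpa [(wgt_pos n).ne'] using h3

lemma omg_sub_le {a b : ℕ → ℝ} {C D : ℝ} (ha : ∀ n, |a n| ≤ C) (hb : ∀ n, |b n| ≤ C) {v : ℕ → ℝ}
    (h : ∀ n, wgt n * |a n - b n| ≤ v n) (hv : HasSum v D) : |omg a - omg b| ≤ D := by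
  have h1 : omg a - omg b = ∑' n, (wgt n * |a n| - wgt n * |b n|) :=
    ((omg_summable ha).tsum_sub (omg_summable hb)).symm
  rw [h1, ← Real.norm_eq_abs]
  refine tsum_of_norm_bounded hv fun n => ?_
  rw [← mul_sub, norm_mul, Real.norm_of_nonneg (wgt_pos n).le]
  exact (mul_le_mul_of_nonneg_left (abs_abs_sub_abs_le_abs_sub _ _) (wgt_pos n).le).trans (h n)

lemma omg_smul (c : ℝ) (hc : 0 ≤ c) (x : L2 ℕ ℝ) : omg ⇑(c • x) = c * omg x := by
  unfold omg
  rw [← tsum_mul_left]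
  refine tsum_congr fun n => ?_
  simp [abs_mul, abs_of_nonneg hc]
  ring

lemma omg_pos {x : L2 ℕ ℝ} (hx : x ≠ 0) : 0 < omg x := by
  refine (omg_nonneg _).lt_of_ne fun h => hx ?_
  exact l2_ext fun n => omg_eq_zero (abs_le_norm x) h.symm n

lemma omg_continuous_sub (a : ℕ → ℝ) {C : ℝ} (ha : ∀ n, |a n| ≤ C) :
    Continuous fun x : L2 ℕ ℝ => omg (fun n => x n - a n) := by
  have : LipschitzWith 1 fun x : L2 ℕ ℝ => omg (fun n => x n - a n) := by
    refine LipschitzWith.of_dist_le_mul fun x y => ?_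
    rw [Real.dist_eq, NNReal.coe_one, one_mul, dist_eq_norm]
    have h := omg_sub_le (a := fun n => x n - a n) (b := fun n => y n - a n)
      (C := ‖x‖ + ‖y‖ + C) (v := fun n => wgt n * ‖x - y‖) (D := 1 / 3 * ‖x - y‖) ?_ ?_ ?_ ?_
    · exact h.trans (by linarith [norm_nonneg (x - y)])
    · intro n
      exact (abs_sub _ _).trans
        (by linarith [abs_le_norm x n, ha n, norm_nonneg y])
    · intro n
      exact (abs_sub _ _).trans
        (by linarith [abs_le_norm y n, ha n, norm_nonneg x])
    · intro n
      refine mul_le_mul_of_nonneg_left ?_ (wgt_pos n).le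
      have := abs_le_norm (x - y) n
      simpa using this
    · exact wgt_hasSum.mul_right _
  exact this.continuous

lemma omg_continuous : Continuous fun x : L2 ℕ ℝ => omg x := by
  simpa using omg_continuous_sub 0 (C := 0) (by simp)

lemma summable_theta {t : ℝ} (ht : 0 < t) : Summable fun n => ‖theta n t‖ ^ 2 := by
  obtain ⟨N, hN⟩ := exists_pow_mul_ge ht 2
  refine summable_of_hasFiniteSupport ((Set.finite_lt_nat N).subset fun n hn => ?_)
  by_contra h
  exact hn (by simp [theta_eq_zero (hN n (not_lt.1 h))])

/-- The path `t ↦ (θ₀(t), θ₁(t), …)` in `ℓ₂`, which has no limit as `t → 0`. -/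
def pth (t : ℝ) : L2 ℕ ℝ := if h : 0 < t then l2mk (fun n => theta n t) (summable_theta h) else 0

lemma pth_apply {t : ℝ} (h : 0 < t) (n : ℕ) : pth t n = theta n t := by
  rw [pth, dif_pos h, l2mk_apply]

lemma pth_zero : pth 0 = 0 := by simp [pth]

lemma pth_eq_zero {t : ℝ} (h : 2 ≤ t) : pth t = 0 := by
  refine l2_ext fun n => ?_
  rw [pth_apply (by linarith), theta_eq_zero]
  · rfl
  · have : (1:ℝ) ≤ 2 ^ n := one_le_pow₀ (by norm_num)
    nlinarith

lemma pth_continuousAt {t : ℝ} (ht : 0 < t) : ContinuousAt pth t := by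
  obtain ⟨N, hN⟩ := exists_pow_mul_ge (half_pos ht) 2
  have h : (fun s => ∑ n ∈ Finset.range N, lp.single 2 n (theta n s) : ℝ → L2 ℕ ℝ) =ᶠ[𝓝 t] pth := by
    filter_upwards [lt_mem_nhds (half_lt_self ht)] with s hs
    refine l2_ext fun n => ?_
    rw [pth_apply ((half_pos ht).trans hs), lp.coeFn_sum, Finset.sum_apply]
    by_cases hn : n < N
    · rw [Finset.sum_eq_single n]
      · rw [lp.single_apply_self]
      · intro b _ hb
        rw [lp.single_apply_ne _ _ _ hb.symm]
      · simp [hn]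
    · rw [Finset.sum_eq_zero, theta_eq_zero]
      · exact (hN n (not_lt.1 hn)).trans (by gcongr)
      · intro b hb
        have : n ≠ b := by
          rintro rfl
          exact hn (Finset.mem_range.1 hb)
        rw [lp.single_apply_ne _ _ _ this]
  refine ContinuousAt.congr ?_ h
  refine Continuous.continuousAt ?_
  refine continuous_finsetSum _ fun n _ => ?_
  refine dominated_continuous (c := fun i => if i = n then 1 else 0) ?_ ?_ ?_
  · refine summable_of_hasFiniteSupport ((Set.finite_singleton n).subset fun i hi => ?_)
    by_contra h
    simp at h
    simp [h] at hi
  · intro s i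
    by_cases hi : i = n
    · subst hi
      rw [lp.single_apply_self]
      simp only [if_pos]
      rw [Real.norm_of_nonneg (theta_nonneg _ _)]
      exact theta_le_one _ _
    · rw [lp.single_apply_ne _ _ _ hi]
      simp [hi]
  · intro i
    by_cases hi : i = n
    · subst hi
      simp only [lp.single_apply_self]
      exact theta_continuous _
    · simp only [lp.single_apply_ne _ _ _ hi]
      exact continuous_const

/-- The map `x ↦ x + p(ω(x))` sends `ℓ₂ \ {0}` homeomorphically onto `ℓ₂`. -/
lemma exists_deletion_aux : ∃ e : L2 ℕ ℝ → L2 ℕ ℝ, Continuous e ∧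
    (∀ x : L2 ℕ ℝ, x ≠ 0 → e (x + pth (omg x)) = x) ∧ ∀ y, e y ≠ 0 ∧ e y + pth (omg (e y)) = y := by
  have hb : ∀ (y : L2 ℕ ℝ) t n, |y n - theta n t| ≤ ‖y‖ + 1 := fun y t n => by
    refine (abs_sub _ _).trans (add_le_add (abs_le_norm y n) ?_)
    rw [abs_of_nonneg (theta_nonneg _ _)]
    exact theta_le_one _ _
  obtain ⟨s, hsc, hs, hsu⟩ := exists_param_fixedPoint
    (fun (y : L2 ℕ ℝ) (t : ℝ) => omg (fun n => y n - theta n t)) (fun y t u => by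
      rw [Real.dist_eq, Real.dist_eq]
      refine omg_sub_le (hb y t) (hb y u) (v := fun n => (1/2) ^ n / 4 * |t - u|) ?_ ?_
      · intro n
        have h1 : y n - theta n t - (y n - theta n u) = theta n u - theta n t := by ring
        rw [h1]
        have h2 := theta_lipschitz n u t
        rw [abs_sub_comm u t] at h2
        refine (mul_le_mul_of_nonneg_left h2 (wgt_pos n).le).trans (le_of_eq ?_)
        have h3 : (1/4 : ℝ) ^ n * 2 ^ n = (1/2) ^ n := by rw [← mul_pow]; norm_num
        unfold wgt
        rw [← h3]; ring
      · have := (hasSum_geometric_of_lt_one (r := (1/2 : ℝ)) (by norm_num) (by norm_num))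
        have := (this.div_const 4).mul_right |t - u|
        have h : ((1:ℝ) - 1 / 2)⁻¹ / 4 = 1 / 2 := by norm_num
        rwa [h] at this)
    (fun t => omg_continuous_sub _ (C := 1) fun n => by
      rw [abs_of_nonneg (theta_nonneg _ _)]
      exact theta_le_one _ _)
  have hpos : ∀ y, 0 < s y := by
    intro y
    have h0 : 0 ≤ s y := by rw [← hs y]; exact omg_nonneg _
    refine h0.lt_of_ne fun h => ?_
    have h1 := hs y
    rw [← h] at h1
    have h2 := omg_eq_zero (hb y 0) h1
    have h3 := (l2_summable y).tendsto_atTop_zero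
    have h4 : ∀ n, ‖y n‖ ^ 2 = 1 := fun n => by
      have := h2 n
      rw [theta_eq_one (by simp), sub_eq_zero] at this
      simp [this]
    simp only [h4] at h3
    exact one_ne_zero (tendsto_nhds_unique tendsto_const_nhds h3)
  have hco : ∀ (y : L2 ℕ ℝ) (t : ℝ), 0 < t → ⇑(y - pth t) = fun n => y n - theta n t := by
    intro y t ht
    funext n
    rw [lp.coeFn_sub, Pi.sub_apply, pth_apply ht]
  refine ⟨fun y => y - pth (s y), ?_, ?_, ?_⟩
  · refine continuous_id.sub (continuous_iff_continuousAt.2 fun y => ?_)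
    exact (pth_continuousAt (hpos y)).comp hsc.continuousAt
  · intro x hx
    have h : omg x = s (x + pth (omg x)) := by
      refine hsu _ _ ?_
      rw [← hco _ _ (omg_pos hx)]
      simp
    simp only [← h]
    simp
  · intro y
    have h1 : omg ⇑(y - pth (s y)) = s y := by
      rw [hco _ _ (hpos y)]
      exact hs y
    refine ⟨fun h => ?_, by simp only [h1]; simp⟩
    simp only at h
    rw [h] at h1
    have : omg ⇑(0 : L2 ℕ ℝ) = 0 := by simp [omg]
    exact (hpos y).ne' (h1.symm.trans this)

/-- A radial homeomorphism of `ℓ₂`, identity on the unit ball, sending points of norm at least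
`2` to points with `omg ≥ 2`. -/
def rad (y : L2 ℕ ℝ) : L2 ℕ ℝ := (1 + 2 * max 0 (‖y‖ - 1) / omg y) • y

/-- The inverse of `rad`. -/
def radInv (z : L2 ℕ ℝ) : L2 ℕ ℝ := ((omg z + 2 * min ‖z‖ 1) / (omg z + 2 * ‖z‖)) • z

lemma rad_of_le {y : L2 ℕ ℝ} (h : ‖y‖ ≤ 1) : rad y = y := by
  rw [rad, max_eq_left (by linarith)]; simp

lemma radInv_of_le {y : L2 ℕ ℝ} (h : ‖y‖ ≤ 1) : radInv y = y := by
  by_cases hy : y = 0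
  · simp [hy, radInv]
  · have := omg_pos hy
    rw [radInv, min_eq_left h, div_self, one_smul]
    positivity

lemma ne_zero_of_one_le {y : L2 ℕ ℝ} (h : 1 ≤ ‖y‖) : y ≠ 0 := by
  rintro rfl
  simp at h
  linarith

lemma rad_continuous : Continuous rad := by
  refine continuous_iff_continuousAt.2 fun y => ?_
  rcases lt_or_ge ‖y‖ 1 with h | h
  · have : (id : L2 ℕ ℝ → L2 ℕ ℝ) =ᶠ[𝓝 y] rad := by
      filter_upwards [continuous_norm.continuousAt.eventually_lt_const h] with z hz
      exact (rad_of_le hz.le).symm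
    exact continuousAt_id.congr this
  · have := (omg_pos (ne_zero_of_one_le h)).ne'
    have h2 := omg_continuous
    unfold rad
    fun_prop (disch := assumption)

lemma radInv_continuous : Continuous radInv := by
  refine continuous_iff_continuousAt.2 fun y => ?_
  rcases lt_or_ge ‖y‖ 1 with h | h
  · have : (id : L2 ℕ ℝ → L2 ℕ ℝ) =ᶠ[𝓝 y] radInv := by
      filter_upwards [continuous_norm.continuousAt.eventually_lt_const h] with z hz
      exact (radInv_of_le hz.le).symm
    exact continuousAt_id.congr this
  · have := (omg_pos (ne_zero_of_one_le h))
    have h3 : omg y + 2 * ‖y‖ ≠ 0 := by positivity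
    have h2 := omg_continuous
    unfold radInv
    fun_prop (disch := assumption)

lemma rad_radInv (z : L2 ℕ ℝ) : rad (radInv z) = z := by
  rcases le_or_gt ‖z‖ 1 with h | h
  · rw [radInv_of_le h, rad_of_le h]
  · have ho := omg_pos (ne_zero_of_one_le h.le)
    set c := (omg z + 2) / (omg z + 2 * ‖z‖) with hc
    have hcp : 0 < c := by positivity
    have h1 : radInv z = c • z := by rw [radInv, min_eq_right h.le, mul_one]
    have h2 : c * ‖z‖ - 1 = omg z * (‖z‖ - 1) / (omg z + 2 * ‖z‖) := by
      rw [hc]; field_simp; ring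
    rw [h1, rad, omg_smul _ hcp.le, norm_smul, Real.norm_of_nonneg hcp.le, max_eq_right, smul_smul,
      h2]
    · convert one_smul ℝ z using 2
      rw [hc]; field_simp; ring
    · rw [h2]
      have : 0 < ‖z‖ - 1 := by linarith
      positivity

lemma radInv_rad (z : L2 ℕ ℝ) : radInv (rad z) = z := by
  rcases le_or_gt ‖z‖ 1 with h | h
  · rw [rad_of_le h, radInv_of_le h]
  · have ho := omg_pos (ne_zero_of_one_le h.le)
    have hz : 0 < ‖z‖ - 1 := by linarith
    set c := 1 + 2 * (‖z‖ - 1) / omg z with hc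
    have hcp : 0 < c := by positivity
    have hc1 : 1 ≤ c := by rw [hc]; linarith [show 0 < 2 * (‖z‖ - 1) / omg z by positivity]
    have h1 : rad z = c • z := by rw [rad, max_eq_right hz.le]
    have h2 : c * omg z = omg z + 2 * (‖z‖ - 1) := by
      rw [hc]; field_simp
    rw [h1, radInv, omg_smul _ hcp.le, norm_smul, Real.norm_of_nonneg hcp.le, min_eq_right,
      smul_smul]
    · convert one_smul ℝ z using 2
      have h3 : c * omg z + 2 * (c * ‖z‖) = c * (omg z + 2 * ‖z‖) := by ring
      rw [h3, h2]
      field_simp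
      ring
    · nlinarith

/-- A homeomorphism `d` from `ℓ₂ \ {0}` onto `ℓ₂`, with inverse `e`, at bounded distance from the
identity. -/
theorem exists_deletion : ∃ d e : L2 ℕ ℝ → L2 ℕ ℝ, (∀ x, x ≠ 0 → ContinuousAt d x) ∧ Continuous e ∧
    (∀ x, x ≠ 0 → e (d x) = x) ∧ (∀ y, e y ≠ 0) ∧ (∀ y, d (e y) = y) ∧
    (∀ x, x ≠ 0 → ‖d x - x‖ ≤ 4) ∧ ∀ y, ‖e y - y‖ ≤ 4 := by
  obtain ⟨e, hec, hed, hde⟩ := exists_deletion_aux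
  have hr0 : ∀ x, x ≠ 0 → rad x ≠ 0 := fun x hx h => hx <| by
    rw [← radInv_rad x, h]
    exact radInv_of_le (by simp)
  have hr1 : ∀ x, x ≠ 0 → radInv x ≠ 0 := fun x hx h => hx <| by
    rw [← rad_radInv x, h]
    exact rad_of_le (by simp)
  set d : L2 ℕ ℝ → L2 ℕ ℝ := fun x => radInv (rad x + pth (omg (rad x))) with hd
  set e' : L2 ℕ ℝ → L2 ℕ ℝ := fun x => radInv (e (rad x)) with he'
  have hed' : ∀ x, x ≠ 0 → e' (d x) = x := by
    intro x hx
    simp only [hd, he', rad_radInv]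
    rw [hed _ (hr0 x hx), radInv_rad]
  have hde' : ∀ x, d (e' x) = x := by
    intro x
    simp only [hd, he', rad_radInv]
    rw [(hde _).2, radInv_rad]
  have he0 : ∀ y, e' y ≠ 0 := fun y => hr1 _ (hde _).1
  have hid : ∀ x : L2 ℕ ℝ, 2 ≤ ‖x‖ → d x = x := by
    intro x hx
    have hx0 : x ≠ 0 := ne_zero_of_one_le (by linarith)
    have ho := omg_pos hx0
    have : 2 ≤ omg (rad x) := by
      rw [rad, omg_smul _ (by positivity), max_eq_right (by linarith)]
      have : (1 + 2 * (‖x‖ - 1) / omg x) * omg x = omg x + 2 * (‖x‖ - 1) := by field_simp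
      rw [this]; linarith
    simp only [hd]
    rw [pth_eq_zero this, add_zero, radInv_rad]
  have hbd : ∀ x, x ≠ 0 → ‖d x - x‖ ≤ 4 := by
    intro x hx
    rcases le_or_gt 2 ‖x‖ with h | h
    · simp [hid x h]
    · have : ‖d x‖ < 2 := by
        by_contra! h2
        have h3 := hid _ h2
        have h4 := hed' (d x) (ne_zero_of_one_le (by linarith))
        rw [h3, hed' x hx] at h4
        rw [← h4] at h2
        linarith
      exact (norm_sub_le _ _).trans (by linarith)
  refine ⟨d, e', ?_, ?_, hed', he0, hde', hbd, ?_⟩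
  · intro x hx
    have h1 := pth_continuousAt (omg_pos (hr0 x hx))
    have h2 : ContinuousAt (fun x => pth (omg (rad x))) x :=
      ContinuousAt.comp (f := fun x => omg (rad x)) h1
        (omg_continuous.comp rad_continuous).continuousAt
    exact radInv_continuous.continuousAt.comp (rad_continuous.continuousAt.add h2)
  · exact radInv_continuous.comp (hec.comp rad_continuous)
  · intro y
    have := hbd (e' y) (he0 y)
    rwa [hde', norm_sub_rev] at this

end Deletion
end West

namespace West
open Filter

/-! ### Reindexing `ℓ₂`-sums -/

section Reindex

variable {G : Type*} [NormedAddCommGroup G] [InnerProductSpace ℝ G]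

lemma norm_eq_of_sq {A B : Type*} [NormedAddCommGroup A] [NormedAddCommGroup B] {a : A} {b : B}
    (h : ‖a‖ ^ 2 = ‖b‖ ^ 2) : ‖a‖ = ‖b‖ :=
  (sq_eq_sq₀ (norm_nonneg _) (norm_nonneg _)).1 h

/-- Reindexing of an `ℓ₂`-sum along a bijection. -/
def l2Reindex {α β : Type*} (σ : α ≃ β) : L2 α G ≃ₗᵢ[ℝ] L2 β G where
  toFun x := l2mk (fun b => x (σ.symm b)) ((σ.symm.summable_iff (f := fun i => ‖x i‖ ^ 2)).2
    (l2_summable x))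
  invFun y := l2mk (fun a => y (σ a)) ((σ.summable_iff (f := fun i => ‖y i‖ ^ 2)).2
    (l2_summable y))
  map_add' x y := l2_ext fun b => by simp
  map_smul' c x := l2_ext fun b => by simp
  left_inv x := l2_ext fun a => by simp
  right_inv x := l2_ext fun a => by simp
  norm_map' x := norm_eq_of_sq <| by
    rw [l2_norm_sq, l2_norm_sq]
    exact σ.symm.tsum_eq (fun i => ‖x i‖ ^ 2)

/-- The iterated `ℓ₂`-sum is the `ℓ₂`-sum over the product. -/
def l2Flat (α β : Type*) : L2 α (L2 β G) ≃ₗᵢ[ℝ] L2 (α × β) G where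
  toFun x := l2mk (fun p => x p.1 p.2) ((summable_prod_of_nonneg fun _ => by positivity).2
    ⟨fun i => l2_summable (x i), by
      simpa only [← l2_norm_sq] using l2_summable x⟩)
  invFun y := l2mk (fun i => l2mk (fun j => y (i, j))
      ((summable_prod_of_nonneg fun _ => by positivity).1 (l2_summable y)|>.1 i))
    (by
      simp only [l2_norm_sq, l2mk_apply]
      exact ((summable_prod_of_nonneg fun _ => by positivity).1 (l2_summable y)).2)
  map_add' x y := l2_ext fun b => by simp
  map_smul' c x := l2_ext fun b => by simp
  left_inv x := l2_ext fun a => l2_ext fun b => by simp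
  right_inv x := l2_ext fun a => by simp
  norm_map' x := norm_eq_of_sq <| by
    have hs : Summable fun p : α × β => ‖x p.1 p.2‖ ^ 2 :=
      (summable_prod_of_nonneg fun _ => by positivity).2
        ⟨fun i => l2_summable (x i), by simpa only [← l2_norm_sq] using l2_summable x⟩
    rw [l2_norm_sq, l2_norm_sq]
    simp only [l2_norm_sq]
    exact hs.tsum_prod

@[simp] lemma l2Reindex_apply {α β : Type*} (σ : α ≃ β) (x : L2 α G) (b : β) :
    l2Reindex σ x b = x (σ.symm b) := rfl

@[simp] lemma l2Flat_apply (α β : Type*) (x : L2 α (L2 β G)) (p : α × β) :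
    l2Flat α β x p = x p.1 p.2 := rfl

lemma summable_elim {α β : Type*} (x : L2 α G) (y : L2 β G) :
    Summable fun i => ‖Sum.elim x y i‖ ^ 2 :=
  ((l2_summable x).hasSum.sum (f := fun i => ‖Sum.elim x y i‖ ^ 2) (l2_summable y).hasSum).summable

/-- The `ℓ₂`-sum over a disjoint union splits as a product. -/
def l2Sum (α β : Type*) : L2 (α ⊕ β) G ≃ₜ L2 α G × L2 β G where
  toFun x := (l2mk (fun a => x (.inl a)) ((l2_summable x).comp_injective Sum.inl_injective),
    l2mk (fun a => x (.inr a)) ((l2_summable x).comp_injective Sum.inr_injective))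
  invFun p := l2mk (Sum.elim p.1 p.2) (summable_elim p.1 p.2)
  left_inv x := l2_ext fun a => by cases a <;> simp
  right_inv p := Prod.ext (l2_ext fun a => by simp) (l2_ext fun a => by simp)
  continuous_toFun := by
    refine Continuous.prodMk ?_ ?_
    · refine LipschitzWith.continuous (K := 1) (LipschitzWith.of_dist_le_mul fun x y => ?_)
      rw [NNReal.coe_one, one_mul, dist_eq_norm, dist_eq_norm]
      refine le_of_sq_le_sq ?_ (norm_nonneg _)
      rw [l2_norm_sq, l2_norm_sq]
      exact tsum_comp_le_tsum_of_inj (l2_summable (x - y)) (fun _ => by positivity)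
        Sum.inl_injective
    · refine LipschitzWith.continuous (K := 1) (LipschitzWith.of_dist_le_mul fun x y => ?_)
      rw [NNReal.coe_one, one_mul, dist_eq_norm, dist_eq_norm]
      refine le_of_sq_le_sq ?_ (norm_nonneg _)
      rw [l2_norm_sq, l2_norm_sq]
      exact tsum_comp_le_tsum_of_inj (l2_summable (x - y)) (fun _ => by positivity)
        Sum.inr_injective
  continuous_invFun := by
    refine kadec_continuous ?_ ?_
    · rintro (a | b)
      · exact (l2_continuous_apply a).comp continuous_fst
      · exact (l2_continuous_apply b).comp continuous_snd
    · have h : ∀ p : L2 α G × L2 β G, ‖l2mk (Sum.elim p.1 p.2)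
          (summable_elim p.1 p.2)‖ = √(‖p.1‖ ^ 2 + ‖p.2‖ ^ 2) := by
        intro p
        rw [← Real.sqrt_sq (norm_nonneg (l2mk _ _)), l2_norm_sq, l2_norm_sq, l2_norm_sq]
        congr 1
        exact ((l2_summable p.1).hasSum.sum (f := fun i => ‖Sum.elim p.1 p.2 i‖ ^ 2)
          (l2_summable p.2).hasSum).tsum_eq
      simp only [h]
      fun_prop

end Reindex

end West

namespace West
open Filter

/-! ### `ℓ₂` is homeomorphic to its countable power -/

section Power

/-- Prepend a term to a sequence. -/
def ncons {A : Type*} (a : A) (x : ℕ → A) : ℕ → A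
  | 0 => a
  | n + 1 => x n

@[simp] lemma ncons_zero {A : Type*} (a : A) (x : ℕ → A) : ncons a x 0 = a := rfl
@[simp] lemma ncons_succ {A : Type*} (a : A) (x : ℕ → A) (n : ℕ) : ncons a x (n + 1) = x n := rfl

lemma summable_ncons (r : ℝ) (b : L2 ℕ ℝ) : Summable fun n => ‖ncons r b n‖ ^ 2 := by
  rw [← summable_nat_add_iff 1]
  exact l2_summable b

lemma norm_sq_eq_head_tail (x : L2 ℕ ℝ) : ‖x‖ ^ 2 = x 0 ^ 2 + ∑' n, ‖x (n + 1)‖ ^ 2 := by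
  rw [l2_norm_sq, (l2_summable x).tsum_eq_zero_add]
  simp

/-- `ℝ × ℓ₂` is homeomorphic to `ℓ₂` by prepending a coordinate. -/
def consH : ℝ × L2 ℕ ℝ ≃ₜ L2 ℕ ℝ where
  toFun p := l2mk (ncons p.1 p.2) (summable_ncons _ _)
  invFun x := (x 0, l2mk (fun n => x (n + 1)) ((summable_nat_add_iff 1).2 (l2_summable x)))
  left_inv p := Prod.ext rfl (l2_ext fun n => rfl)
  right_inv x := l2_ext fun n => by cases n <;> rfl
  continuous_toFun := by
    refine kadec_continuous ?_ ?_
    · rintro (_ | n)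
      · exact continuous_fst
      · exact (l2_continuous_apply n).comp continuous_snd
    · have h : ∀ p : ℝ × L2 ℕ ℝ, ‖l2mk (ncons p.1 p.2) (summable_ncons _ _)‖ =
          √(p.1 ^ 2 + ‖p.2‖ ^ 2) := by
        intro p
        rw [← Real.sqrt_sq (norm_nonneg (l2mk _ _)), norm_sq_eq_head_tail, l2_norm_sq]
        rfl
      simp only [h]
      fun_prop
  continuous_invFun := by
    refine Continuous.prodMk (l2_continuous_apply 0) ?_
    refine kadec_continuous (fun n => l2_continuous_apply (n + 1)) ?_
    have h : ∀ x : L2 ℕ ℝ, ‖l2mk (fun n => x (n + 1))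
        ((summable_nat_add_iff 1).2 (l2_summable x))‖ = √(‖x‖ ^ 2 - x 0 ^ 2) := by
      intro p
      rw [← Real.sqrt_sq (norm_nonneg (l2mk _ _)), norm_sq_eq_head_tail p, l2_norm_sq]
      simp
    simp only [h]
    exact ((continuous_norm.pow 2).sub ((l2_continuous_apply 0).pow 2)).sqrt

@[simp] lemma consH_zero (p : ℝ × L2 ℕ ℝ) : consH p 0 = p.1 := rfl
@[simp] lemma consH_succ (p : ℝ × L2 ℕ ℝ) (n : ℕ) : consH p (n + 1) = p.2 n := rfl
@[simp] lemma consH_symm_fst (x : L2 ℕ ℝ) : (consH.symm x).1 = x 0 := rfl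
@[simp] lemma consH_symm_snd (x : L2 ℕ ℝ) (n : ℕ) : (consH.symm x).2 n = x (n + 1) := rfl

lemma consH_norm_sq (p : ℝ × L2 ℕ ℝ) : ‖consH p‖ ^ 2 = p.1 ^ 2 + ‖p.2‖ ^ 2 := by
  rw [norm_sq_eq_head_tail, l2_norm_sq p.2]
  rfl

/-- The sequences in `ℓ₂` with positive terms. -/
def Pos : Set (L2 ℕ ℝ) := {r | ∀ n, 0 < r n}

lemma summable_eps (c : ℝ) : Summable fun n : ℕ => (c * (1 / 2 : ℝ) ^ n) ^ 2 := by
  have h : ∀ n : ℕ, (c * (1 / 2 : ℝ) ^ n) ^ 2 = c ^ 2 * (1 / 4) ^ n := fun n => by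
    rw [mul_pow, ← pow_mul, mul_comm n 2, pow_mul]; norm_num
  simp only [h]
  exact (summable_geometric_of_lt_one (by norm_num) (by norm_num)).mul_left _

lemma summable_sq_of_le {G : Type*} [NormedAddCommGroup G] {f : ℕ → G} {c : ℝ}
    (h : ∀ n, ‖f n‖ ≤ c * (1 / 2 : ℝ) ^ n) : Summable fun n => ‖f n‖ ^ 2 :=
  Summable.of_nonneg_of_le (fun _ => by positivity)
    (fun n => pow_le_pow_left₀ (norm_nonneg _) (h n) 2) (summable_eps c)

/-- Coordinatewise application of a map at bounded distance from the identity, at scale `2⁻ⁿ` in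
the `n`-th coordinate. -/
lemma exists_scaled_map {Z : Set (L2 ℕ ℝ)} (hZ : ∀ r : ℝ, 0 < r → ∀ z ∈ Z, r • z ∈ Z)
    {d : L2 ℕ ℝ → L2 ℕ ℝ} (hd : ∀ x ∈ Z, ContinuousAt d x) (hb : ∀ x ∈ Z, ‖d x - x‖ ≤ 4) :
    ∃ f : {x : L2 ℕ (L2 ℕ ℝ) // ∀ n, x n ∈ Z} → L2 ℕ (L2 ℕ ℝ), Continuous f ∧
      ∀ x n, f x n = (1 / 2 : ℝ) ^ n • d ((2 : ℝ) ^ n • x.1 n) := by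
  have hk : ∀ n : ℕ, (1 / 2 : ℝ) ^ n * 2 ^ n = 1 := fun n => by rw [← mul_pow]; norm_num
  have hbd : ∀ (x : {x : L2 ℕ (L2 ℕ ℝ) // ∀ n, x n ∈ Z}) n,
      ‖(1 / 2 : ℝ) ^ n • (d ((2 : ℝ) ^ n • x.1 n) - (2 : ℝ) ^ n • x.1 n)‖ ≤ 4 * (1 / 2) ^ n := by
    intro x n
    rw [norm_smul, Real.norm_of_nonneg (by positivity), mul_comm]
    gcongr
    exact hb _ (hZ _ (by positivity) _ (x.2 n))
  refine ⟨fun x => x.1 + l2mk _ (summable_sq_of_le (hbd x)), ?_, ?_⟩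
  · refine continuous_subtype_val.add (dominated_continuous (summable_eps 4) hbd fun n => ?_)
    simp only [l2mk_apply]
    have h1 : Continuous fun x : {x : L2 ℕ (L2 ℕ ℝ) // ∀ n, x n ∈ Z} => (2 : ℝ) ^ n • x.1 n :=
      continuous_const.fun_smul ((l2_continuous_apply n).comp continuous_subtype_val)
    refine Continuous.fun_smul (f := fun _ => (1 / 2 : ℝ) ^ n) continuous_const (Continuous.fun_sub ?_ h1)
    rw [continuous_iff_continuousAt]
    intro x
    exact ContinuousAt.comp (f := fun x : {x : L2 ℕ (L2 ℕ ℝ) // ∀ n, x n ∈ Z} =>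
      (2 : ℝ) ^ n • x.1 n) (hd _ (hZ _ (by positivity) _ (x.2 n))) h1.continuousAt
  · intro x n
    simp [smul_sub, smul_smul]

/-- `ℓ₂(ℓ₂)` is homeomorphic to its subspace of sequences with no zero term. -/
lemma nonempty_nonzero_homeo :
    Nonempty ({x : L2 ℕ (L2 ℕ ℝ) // ∀ n, x n ∈ ({0}ᶜ : Set (L2 ℕ ℝ))} ≃ₜ L2 ℕ (L2 ℕ ℝ)) := by
  obtain ⟨d, e, hd, he, hed, he0, hde, hbd, hbe⟩ := exists_deletion
  have hk : ∀ n : ℕ, (1 / 2 : ℝ) ^ n * 2 ^ n = 1 := fun n => by rw [← mul_pow]; norm_num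
  have hk' : ∀ n : ℕ, (2 : ℝ) ^ n * (1 / 2 : ℝ) ^ n = 1 := fun n => by rw [← mul_pow]; norm_num
  have hZ : ∀ r : ℝ, 0 < r → ∀ z ∈ ({0}ᶜ : Set (L2 ℕ ℝ)), r • z ∈ ({0}ᶜ : Set (L2 ℕ ℝ)) := by
    intro r hr z hz
    simpa [hr.ne'] using hz
  obtain ⟨f, hfc, hf⟩ := exists_scaled_map hZ (d := d) (fun x hx => hd x hx) (fun x hx => hbd x hx)
  obtain ⟨g, hgc, hg⟩ := exists_scaled_map (Z := univ) (fun _ _ _ _ => trivial) (d := e)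
    (fun x _ => he.continuousAt) (fun x _ => hbe x)
  refine ⟨⟨⟨f, fun y => ⟨g ⟨y, fun _ => trivial⟩, fun n => ?_⟩, fun x => ?_, fun y => ?_⟩, hfc, ?_⟩⟩
  · rw [hg]
    exact hZ _ (by positivity) _ (he0 _)
  · refine Subtype.ext (l2_ext fun n => ?_)
    simp only [hg, hf, smul_smul, hk', one_smul]
    rw [hed _ (hZ _ (by positivity) _ (x.2 n)), smul_smul, hk, one_smul]
  · refine l2_ext fun n => ?_
    simp only [hg, hf, smul_smul, hk', one_smul, hde, hk]
  · exact Continuous.subtype_mk (hgc.comp (Continuous.subtype_mk continuous_id _)) _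

/-- Polar coordinates in each summand of an `ℓ₂`-sum. -/
def polarH {F : Type*} [NormedAddCommGroup F] [InnerProductSpace ℝ F] (Z : Set F)
    (h0 : (0 : F) ∉ Z) (hZ : ∀ r : ℝ, 0 < r → ∀ z ∈ Z, r • z ∈ Z) :
    {x : L2 ℕ F // ∀ n, x n ∈ Z} ≃ₜ Pos × (ℕ → {u : F // u ∈ Z ∧ ‖u‖ = 1}) :=
  have hp : ∀ z ∈ Z, 0 < ‖z‖ := fun z hz => norm_pos_iff.2 fun h => h0 (h ▸ hz)
  have hs : ∀ p : Pos × (ℕ → {u : F // u ∈ Z ∧ ‖u‖ = 1}), ∀ n,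
      ‖p.1.1 n • (p.2 n).1‖ = p.1.1 n := fun p n => by
    rw [norm_smul, (p.2 n).2.2, mul_one, Real.norm_of_nonneg (p.1.2 n).le]
  have hs2 : ∀ p : Pos × (ℕ → {u : F // u ∈ Z ∧ ‖u‖ = 1}),
      Summable fun n => ‖p.1.1 n • (p.2 n).1‖ ^ 2 := fun p => by
    simp only [hs]
    simpa using l2_summable p.1.1
  { toFun := fun x => (⟨l2mk (fun n => ‖x.1 n‖) (by simpa using l2_summable x.1),
        fun n => hp _ (x.2 n)⟩,
      fun n => ⟨‖x.1 n‖⁻¹ • x.1 n, hZ _ (inv_pos.2 (hp _ (x.2 n))) _ (x.2 n), by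
        rw [norm_smul, norm_inv, norm_norm, inv_mul_cancel₀ (hp _ (x.2 n)).ne']⟩)
    invFun := fun p => ⟨l2mk (fun n => p.1.1 n • (p.2 n).1) (hs2 p),
      fun n => hZ _ (p.1.2 n) _ (p.2 n).2.1⟩
    left_inv := fun x => Subtype.ext (l2_ext fun n => by
      simp [smul_smul, mul_inv_cancel₀ (hp _ (x.2 n)).ne'])
    right_inv := fun p => Prod.ext (Subtype.ext (l2_ext fun n => by
        simp only [l2mk_apply]
        exact hs p n)) (funext fun n => Subtype.ext (by
          simp only [l2mk_apply, hs, smul_smul]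
          rw [inv_mul_cancel₀ (p.1.2 n).ne', one_smul]))
    continuous_toFun := by
      refine Continuous.prodMk (Continuous.subtype_mk (kadec_continuous (fun n => ?_) ?_) _)
        (continuous_pi fun n => Continuous.subtype_mk ?_ _)
      · exact ((l2_continuous_apply n).comp continuous_subtype_val).norm
      · have : ∀ x : {x : L2 ℕ F // ∀ n, x n ∈ Z}, ‖l2mk (fun n => ‖x.1 n‖)
            (by simpa using l2_summable x.1)‖ = ‖x.1‖ := fun x => norm_eq_of_sq (by
          simp [l2_norm_sq])
        simp only [this]
        exact continuous_subtype_val.norm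
      · have h1 : Continuous fun x : {x : L2 ℕ F // ∀ n, x n ∈ Z} => x.1 n :=
          (l2_continuous_apply n).comp continuous_subtype_val
        exact (h1.norm.inv₀ fun x => (hp _ (x.2 n)).ne').smul h1
    continuous_invFun := by
      refine Continuous.subtype_mk (kadec_continuous (fun n => ?_) ?_) _
      · simp only [l2mk_apply]
        refine Continuous.smul ((l2_continuous_apply n).comp
          (continuous_subtype_val.comp continuous_fst)) (continuous_subtype_val.comp
            ((continuous_apply n).comp continuous_snd))
      · have : ∀ p : Pos × (ℕ → {u : F // u ∈ Z ∧ ‖u‖ = 1}), ‖l2mk (fun n => p.1.1 n • (p.2 n).1)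
            (hs2 p)‖ = ‖p.1.1‖ := fun p => norm_eq_of_sq (by
          rw [l2_norm_sq, l2_norm_sq]
          refine tsum_congr fun n => ?_
          rw [l2mk_apply, hs, Real.norm_of_nonneg (p.1.2 n).le])
        simp only [this]
        exact (continuous_subtype_val.comp continuous_fst).norm }

lemma Pos_smul (r : ℝ) (hr : 0 < r) (z : L2 ℕ ℝ) (hz : z ∈ Pos) : r • z ∈ Pos := fun n => by
  simpa [hr] using hz n

/-- The positive part of the unit sphere is homeomorphic to `Pos`, by central projection onto the
hyperplane where the first coordinate equals `1`. -/
def gnomonicH : {u : L2 ℕ ℝ // u ∈ Pos ∧ ‖u‖ = 1} ≃ₜ Pos where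
  toFun u := ⟨(u.1 0)⁻¹ • (consH.symm u.1).2, Pos_smul _ (inv_pos.2 (u.2.1 0)) _
    fun n => u.2.1 (n + 1)⟩
  invFun b := ⟨(√(1 + ‖b.1‖ ^ 2))⁻¹ • consH (1, b.1), Pos_smul _ (by positivity) _ (by
      rintro (_ | n)
      · exact one_pos
      · exact b.2 n), by
    have h : ‖consH (1, b.1)‖ = √(1 + ‖b.1‖ ^ 2) := by
      rw [← Real.sqrt_sq (norm_nonneg (consH _)), consH_norm_sq]; simp
    rw [norm_smul, h, norm_inv, Real.norm_of_nonneg (by positivity), inv_mul_cancel₀]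
    positivity⟩
  left_inv u := by
    have hu := u.2.1 0
    have h1 : ‖u.1‖ ^ 2 = u.1 0 ^ 2 + ‖(consH.symm u.1).2‖ ^ 2 := by
      have := consH_norm_sq (consH.symm u.1)
      rwa [Homeomorph.apply_symm_apply, consH_symm_fst] at this
    rw [u.2.2, one_pow] at h1
    have h2 : √(1 + ‖(u.1 0)⁻¹ • (consH.symm u.1).2‖ ^ 2) = (u.1 0)⁻¹ := by
      rw [norm_smul, Real.norm_of_nonneg (by positivity), Real.sqrt_eq_iff_mul_self_eq_of_pos
        (by positivity)]
      field_simp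
      linarith
    refine Subtype.ext (l2_ext fun n => ?_)
    simp only [h2]
    cases n
    · simp
    · simp [hu.ne']
  right_inv b := by
    refine Subtype.ext (l2_ext fun n => ?_)
    have h : √(1 + ‖b.1‖ ^ 2) ≠ 0 := by positivity
    simp [h]
  continuous_toFun := by
    refine Continuous.subtype_mk (Continuous.fun_smul (Continuous.fun_inv₀ ?_ fun u => (u.2.1 0).ne') ?_) _
    · exact (l2_continuous_apply 0).comp continuous_subtype_val
    · exact continuous_snd.comp (consH.symm.continuous.comp continuous_subtype_val)
  continuous_invFun := by
    refine Continuous.subtype_mk (Continuous.fun_smul (Continuous.fun_inv₀ ?_ fun b => ?_) ?_) _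
    · fun_prop
    · positivity
    · exact consH.continuous.comp (continuous_const.prodMk continuous_subtype_val)

/-- `A × A^ω ≃ A^ω`. -/
def nconsH (A : Type*) [TopologicalSpace A] : A × (ℕ → A) ≃ₜ (ℕ → A) where
  toFun p := ncons p.1 p.2
  invFun x := (x 0, fun n => x (n + 1))
  left_inv p := rfl
  right_inv x := funext fun n => by cases n <;> rfl
  continuous_toFun := continuous_pi fun n => by
    cases n
    · exact continuous_fst
    · exact (continuous_apply _).comp continuous_snd
  continuous_invFun := by fun_prop

/-- `(A × B)^ω ≃ A^ω × B^ω`. -/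
def arrowProdH (A B : Type*) [TopologicalSpace A] [TopologicalSpace B] :
    (ℕ → A × B) ≃ₜ (ℕ → A) × (ℕ → B) where
  toFun x := (fun n => (x n).1, fun n => (x n).2)
  invFun p n := (p.1 n, p.2 n)
  left_inv p := rfl
  right_inv x := rfl
  continuous_toFun := by fun_prop
  continuous_invFun := by fun_prop

/-- `(A^ω)^ω ≃ A^ω`. -/
def arrowArrowH (A : Type*) [TopologicalSpace A] : (ℕ → ℕ → A) ≃ₜ (ℕ → A) where
  toFun x n := x n.unpair.1 n.unpair.2
  invFun x i j := x (Nat.pair i j)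
  left_inv p := by simp
  right_inv x := by simp
  continuous_toFun := by fun_prop
  continuous_invFun := by fun_prop

/-- Coordinatewise homeomorphism of countable powers. -/
def arrowCongrH {A B : Type*} [TopologicalSpace A] [TopologicalSpace B] (h : A ≃ₜ B) :
    (ℕ → A) ≃ₜ (ℕ → B) := Homeomorph.piCongrRight fun _ => h

/-- `ℓ₂(ℓ₂)` is isometric to `ℓ₂`. -/
def flatNat : L2 ℕ (L2 ℕ ℝ) ≃ₜ L2 ℕ ℝ :=
  ((l2Flat ℕ ℕ).trans (l2Reindex Nat.pairEquiv)).toHomeomorph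

lemma flatNat_apply (x : L2 ℕ (L2 ℕ ℝ)) (n : ℕ) : flatNat x n = x n.unpair.1 n.unpair.2 := rfl

/-- `Pos ≃ Pos^ω`. -/
def posPowH : Pos ≃ₜ (ℕ → Pos) :=
  have h : {x : L2 ℕ (L2 ℕ ℝ) // ∀ n, x n ∈ Pos} ≃ₜ Pos :=
    flatNat.subtype fun x => ⟨fun hx n => hx _ _, fun hx i j => by
      have := hx (Nat.pair i j)
      rwa [flatNat_apply, Nat.unpair_pair] at this⟩
  have h0 : (0 : L2 ℕ ℝ) ∉ Pos := fun h => lt_irrefl _ (h 0)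
  h.symm.trans ((polarH Pos h0 Pos_smul).trans
    (((Homeomorph.refl Pos).prodCongr (arrowCongrH gnomonicH)).trans (nconsH Pos)))

/-- The unit sphere of `ℓ₂`. -/
abbrev Sph : Type := {u : L2 ℕ ℝ // u ∈ ({0}ᶜ : Set (L2 ℕ ℝ)) ∧ ‖u‖ = 1}

lemma nonempty_l2_homeo_pos : Nonempty (L2 ℕ ℝ ≃ₜ Pos × (ℕ → Sph)) := by
  obtain ⟨f⟩ := nonempty_nonzero_homeo
  refine ⟨flatNat.symm.trans (f.symm.trans (polarH _ (by simp) ?_))⟩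
  intro r hr z hz
  simpa [hr.ne'] using hz

theorem nonempty_l2_homeo_pow : Nonempty ((ℕ → L2 ℕ ℝ) ≃ₜ L2 ℕ ℝ) := by
  obtain ⟨f⟩ := nonempty_l2_homeo_pos
  exact ⟨(arrowCongrH f).trans ((arrowProdH _ _).trans
    ((posPowH.symm.prodCongr (arrowArrowH _)).trans f.symm))⟩

end Power

end West

namespace West
open Filter

/-! ### Rotations in a countable power -/

section Rotation

variable {F : Type*} [NormedAddCommGroup F] [NormedSpace ℝ F]

/-- Cosine of the `n`-th rotation angle at time `t`. -/
def ca (n : ℕ) (t : ℝ) : ℝ := Real.cos (theta n t * (Real.pi / 2))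
/-- Sine of the `n`-th rotation angle at time `t`. -/
def sa (n : ℕ) (t : ℝ) : ℝ := Real.sin (theta n t * (Real.pi / 2))

lemma ca_sa (n : ℕ) (t : ℝ) : ca n t ^ 2 + sa n t ^ 2 = 1 := Real.cos_sq_add_sin_sq _

lemma ca_continuous (n : ℕ) : Continuous (ca n) :=
  Real.continuous_cos.comp ((theta_continuous n).mul continuous_const)

lemma sa_continuous (n : ℕ) : Continuous (sa n) :=
  Real.continuous_sin.comp ((theta_continuous n).mul continuous_const)

lemma ca_of_small {n : ℕ} {t : ℝ} (h : 2 ^ n * t ≤ 1) : ca n t = 0 := by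
  simp [ca, theta_eq_one h]

lemma sa_of_small {n : ℕ} {t : ℝ} (h : 2 ^ n * t ≤ 1) : sa n t = 1 := by
  simp [sa, theta_eq_one h]

lemma ca_of_large {n : ℕ} {t : ℝ} (h : 2 ≤ 2 ^ n * t) : ca n t = 1 := by
  simp [ca, theta_eq_zero h]

lemma sa_of_large {n : ℕ} {t : ℝ} (h : 2 ≤ 2 ^ n * t) : sa n t = 0 := by
  simp [sa, theta_eq_zero h]

/-- The `n`-th coordinate after the first `n` rotations, the `k`-th one taking place in the plane
of the coordinates `k` and `k + 1`. -/
def carry (z : ℕ → F) (t : ℝ) : ℕ → F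
  | 0 => z 0
  | n + 1 => -(sa n t • carry z t n) + ca n t • z (n + 1)

/-- The effect of performing all rotations at time `t`. For `t > 0` only finitely many of them are
nontrivial; as `t → 0` the result tends to the shift of `z`. -/
def rot (z : ℕ → F) (t : ℝ) (n : ℕ) : F := ca n t • carry z t n + sa n t • z (n + 1)

/-- Backward recursion recovering `carry` from `rot`, started `k` steps ahead. -/
def bcarry (w : ℕ → F) (t : ℝ) : ℕ → ℕ → F
  | 0, n => w n
  | k + 1, n => ca n t • w n - sa n t • bcarry w t k (n + 1)

/-- The value of `carry` recovered from `rot`; meaningful for `t > 0`. -/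
def ucarry (w : ℕ → F) (t : ℝ) (n : ℕ) : F := bcarry w t ⌈2 / t⌉₊ n

/-- The inverse of `rot` for `t > 0`. -/
def unrot (w : ℕ → F) (t : ℝ) : ℕ → F
  | 0 => ucarry w t 0
  | n + 1 => sa n t • w n + ca n t • ucarry w t (n + 1)

lemma ceil_large {t : ℝ} (ht : 0 < t) {n : ℕ} (hn : ⌈2 / t⌉₊ ≤ n) : 2 ≤ 2 ^ n * t := by
  have h1 : 2 / t ≤ n := (Nat.le_ceil _).trans (by exact_mod_cast hn)
  have h2 : (n : ℝ) ≤ 2 ^ n := by exact_mod_cast (Nat.lt_two_pow_self).le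
  rw [div_le_iff₀ ht] at h1
  nlinarith

lemma eq_bcarry {w c : ℕ → F} {t : ℝ} {N : ℕ} (hN : ∀ n ≥ N, 2 ≤ 2 ^ n * t)
    (hc : ∀ n, c n = ca n t • w n - sa n t • c (n + 1)) (k n : ℕ) (h : N ≤ n + k) :
    c n = bcarry w t k n := by
  induction k generalizing n with
  | zero => rw [hc, ca_of_large (hN n h), sa_of_large (hN n h)]; simp [bcarry]
  | succ k ih => rw [hc, bcarry, ih (n + 1) (by omega)]

lemma bcarry_stable {w : ℕ → F} {t : ℝ} {N : ℕ} (hN : ∀ n ≥ N, 2 ≤ 2 ^ n * t)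
    (k n : ℕ) (h : N ≤ n + k) : bcarry w t (k + 1) n = bcarry w t k n := by
  induction k generalizing n with
  | zero => simp [bcarry, ca_of_large (hN n h), sa_of_large (hN n h)]
  | succ k ih => rw [bcarry, ih (n + 1) (by omega), ← bcarry]

lemma ucarry_rel {t : ℝ} (ht : 0 < t) (w : ℕ → F) (n : ℕ) :
    ucarry w t n = ca n t • w n - sa n t • ucarry w t (n + 1) := by
  rw [ucarry, ← bcarry_stable (N := ⌈2 / t⌉₊) (fun n hn => ceil_large ht hn) _ _ (by omega), bcarry,
    ucarry]

lemma carry_unrot {t : ℝ} (ht : 0 < t) (w : ℕ → F) (n : ℕ) :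
    carry (unrot w t) t n = ucarry w t n := by
  induction n with
  | zero => rfl
  | succ n ih =>
    rw [carry, ih, unrot, ucarry_rel ht w n]
    have h : ucarry w t (n + 1) = (ca n t ^ 2 + sa n t ^ 2) • ucarry w t (n + 1) := by
      rw [ca_sa, one_smul]
    conv_rhs => rw [h]
    module

lemma rot_unrot {t : ℝ} (ht : 0 < t) (w : ℕ → F) : rot (unrot w t) t = w := by
  funext n
  rw [rot, carry_unrot ht, unrot, ucarry_rel ht w n]
  have h : w n = (ca n t ^ 2 + sa n t ^ 2) • w n := by rw [ca_sa, one_smul]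
  conv_rhs => rw [h]
  module

lemma ucarry_rot {t : ℝ} (ht : 0 < t) (z : ℕ → F) (n : ℕ) : ucarry (rot z t) t n = carry z t n := by
  refine (eq_bcarry (N := ⌈2 / t⌉₊) (fun n hn => ceil_large ht hn) (fun n => ?_) _ _
    (by omega)).symm
  rw [rot, carry]
  have h : carry z t n = (ca n t ^ 2 + sa n t ^ 2) • carry z t n := by rw [ca_sa, one_smul]
  conv_lhs => rw [h]
  module

lemma unrot_rot {t : ℝ} (ht : 0 < t) (z : ℕ → F) : unrot (rot z t) t = z := by
  funext n
  cases n with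
  | zero => rw [unrot, ucarry_rot ht]; rfl
  | succ n =>
    rw [unrot, ucarry_rot ht, rot, carry]
    have h : z (n + 1) = (ca n t ^ 2 + sa n t ^ 2) • z (n + 1) := by rw [ca_sa, one_smul]
    conv_rhs => rw [h]
    module

lemma rot_small (z : ℕ → F) {t : ℝ} {n : ℕ} (h : 2 ^ n * t ≤ 1) : rot z t n = z (n + 1) := by
  simp [rot, ca_of_small h, sa_of_small h]

lemma unrot_small (w : ℕ → F) {t : ℝ} (ht : 0 < t) {n : ℕ} (h : 2 ^ n * t ≤ 1) :
    unrot w t (n + 1) = w n := by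
  rw [← rot_small (unrot w t) h, rot_unrot ht]

lemma carry_continuous (n : ℕ) : Continuous fun p : (ℕ → F) × ℝ => carry p.1 p.2 n := by
  induction n with
  | zero => simp only [carry]; fun_prop
  | succ n ih =>
    simp only [carry]
    have h1 := ca_continuous n
    have h2 := sa_continuous n
    fun_prop

lemma rot_continuous : Continuous fun p : (ℕ → F) × ℝ => rot p.1 p.2 := by
  refine continuous_pi fun n => ?_
  have h1 := ca_continuous n
  have h2 := sa_continuous n
  have h3 := carry_continuous (F := F) n
  unfold rot
  fun_prop

lemma bcarry_continuous (k n : ℕ) : Continuous fun p : (ℕ → F) × ℝ => bcarry p.1 p.2 k n := by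
  induction k generalizing n with
  | zero => simp only [bcarry]; fun_prop
  | succ k ih =>
    simp only [bcarry]
    have h1 := ca_continuous n
    have h2 := sa_continuous n
    have h3 := ih (n + 1)
    fun_prop

lemma ucarry_continuousAt {p : (ℕ → F) × ℝ} (hp : 0 < p.2) (n : ℕ) :
    ContinuousAt (fun p : (ℕ → F) × ℝ => ucarry p.1 p.2 n) p := by
  obtain ⟨N, hN⟩ := exists_pow_mul_ge (half_pos hp) 2
  refine (bcarry_continuous N n).continuousAt.congr ?_
  filter_upwards [continuous_snd.continuousAt.eventually_const_lt (half_lt_self hp)] with q hq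
  refine (eq_bcarry (N := N) (fun m hm => (hN m hm).trans (by gcongr))
    (fun n => ucarry_rel ((half_pos hp).trans hq) _ n) _ _ (by omega)).symm

lemma unrot_continuousAt {p : (ℕ → F) × ℝ} (hp : 0 < p.2) :
    ContinuousAt (fun p : (ℕ → F) × ℝ => unrot p.1 p.2) p := by
  refine continuousAt_pi.2 fun n => ?_
  cases n with
  | zero => exact ucarry_continuousAt hp 0
  | succ n =>
    simp only [unrot]
    have h1 := (ca_continuous n)
    have h2 := (sa_continuous n)
    have h3 := ucarry_continuousAt hp (n + 1)
    fun_prop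

end Rotation

/-! ### `ℓ₂ × [0, ∞)` is homeomorphic to `ℓ₂` -/

section HalfSpace

/-- The space `ℓ₂ × ℝ` with the punctured axis `{0} × (ℝ \ {0})` removed. -/
abbrev Rsp : Type := {p : L2 ℕ ℝ × ℝ // p.1 = 0 → p.2 = 0}

/-- Deleting a point in each slice `ℓ₂ × {τ}`, `τ ≠ 0`, at scale `τ`. -/
lemma nonempty_homeo_rsp : Nonempty ((L2 ℕ ℝ × ℝ) ≃ₜ Rsp) := by
  obtain ⟨d, e, hd, he, hed, he0, hde, hbd, hbe⟩ := exists_deletion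
  have hsq : ∀ {A : Type} [TopologicalSpace A] {u : A → L2 ℕ ℝ} {τ : A → ℝ} {a : A},
      ContinuousAt τ a → τ a = 0 → (∀ b, τ b ≠ 0 → ‖u b‖ ≤ 4) →
      ContinuousAt (fun b => τ b • u b) a := by
    intro A _ u τ a hτ h0 hu
    rw [ContinuousAt, h0, zero_smul]
    refine squeeze_zero_norm (a := fun b => 4 * |τ b|) (fun b => ?_) ?_
    · by_cases h : τ b = 0
      · simp [h]
      · rw [norm_smul, Real.norm_eq_abs, mul_comm]
        gcongr
        exact hu b h
    · have := (hτ.abs).const_mul 4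
      simpa [ContinuousAt, h0] using this
  have hk : ∀ (t : ℝ) (x y : L2 ℕ ℝ), t ≠ 0 → x + t • (y - t⁻¹ • x) = t • y := by
    intro t x y ht
    rw [smul_sub, smul_smul, mul_inv_cancel₀ ht, one_smul]
    abel
  let f : L2 ℕ ℝ × ℝ → L2 ℕ ℝ := fun p => p.1 + p.2 • (e (p.2⁻¹ • p.1) - p.2⁻¹ • p.1)
  let g : L2 ℕ ℝ × ℝ → L2 ℕ ℝ := fun p => p.1 + p.2 • (d (p.2⁻¹ • p.1) - p.2⁻¹ • p.1)
  have hf : ∀ p : L2 ℕ ℝ × ℝ, p.2 ≠ 0 → f p = p.2 • e (p.2⁻¹ • p.1) := fun p hp => hk _ _ _ hp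
  have hg : ∀ p : L2 ℕ ℝ × ℝ, p.2 ≠ 0 → g p = p.2 • d (p.2⁻¹ • p.1) := fun p hp => hk _ _ _ hp
  have hf0 : ∀ p : L2 ℕ ℝ × ℝ, p.2 ≠ 0 → f p ≠ 0 := by
    intro p hp h
    rw [hf p hp, smul_eq_zero] at h
    exact h.elim hp (he0 _)
  have hgs : ∀ p : Rsp, p.1.2 ≠ 0 → p.1.2⁻¹ • p.1.1 ≠ 0 := fun p hp h => by
    rcases smul_eq_zero.1 h with h | h
    · exact hp (inv_eq_zero.1 h)
    · exact hp (p.2 h)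
  refine ⟨⟨⟨fun p => ⟨(f p, p.2), fun h => ?_⟩, fun p => (g p.1, p.1.2), fun p => ?_, fun p => ?_⟩,
    ?_, ?_⟩⟩
  · by_contra h2
    exact hf0 p h2 h
  · refine Prod.ext ?_ rfl
    by_cases hp : p.2 = 0
    · simp [f, g, hp]
    · show g (f p, p.2) = p.1
      rw [hg _ (by exact hp)]
      simp only [hf _ hp]
      rw [smul_smul p.2⁻¹, inv_mul_cancel₀ hp, one_smul, hde, smul_smul, mul_inv_cancel₀ hp,
        one_smul]
  · refine Subtype.ext (Prod.ext ?_ rfl)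
    by_cases hp : p.1.2 = 0
    · simp [f, g, hp]
    · show f (g p.1, p.1.2) = p.1.1
      rw [hf _ (by exact hp)]
      simp only [hg _ hp]
      rw [smul_smul p.1.2⁻¹, inv_mul_cancel₀ hp, one_smul, hed _ (hgs p hp), smul_smul,
        mul_inv_cancel₀ hp, one_smul]
  · refine Continuous.subtype_mk (Continuous.prodMk ?_ continuous_snd) _
    refine continuous_fst.add (continuous_iff_continuousAt.2 fun p => ?_)
    by_cases hp : p.2 = 0
    · exact hsq continuousAt_snd hp fun b _ => hbe _
    · have h1 : ContinuousAt (fun p : L2 ℕ ℝ × ℝ => p.2⁻¹ • p.1) p := by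
        fun_prop (disch := assumption)
      exact continuousAt_snd.smul ((ContinuousAt.comp (f := fun p : L2 ℕ ℝ × ℝ => p.2⁻¹ • p.1)
        he.continuousAt h1).sub h1)
  · refine Continuous.prodMk ?_ (continuous_snd.comp continuous_subtype_val)
    refine (continuous_fst.comp continuous_subtype_val).add
      (continuous_iff_continuousAt.2 fun p => ?_)
    have h2 : ContinuousAt (fun p : Rsp => p.1.2) p :=
      (continuous_snd.comp continuous_subtype_val).continuousAt
    by_cases hp : p.1.2 = 0
    · exact hsq h2 hp fun b hb => hbd _ (hgs b hb)
    · have h1 : ContinuousAt (fun p : Rsp => p.1.2⁻¹ • p.1.1) p := by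
        fun_prop (disch := assumption)
      exact h2.smul ((ContinuousAt.comp (f := fun p : Rsp => p.1.2⁻¹ • p.1.1)
        (hd _ (hgs p hp)) h1).sub h1)

/-- Multiplied by `ℓ₂^ω`, the space `Rsp` becomes a half-line. Polar-type coordinates identify
`Rsp` minus the origin with `ℓ₂ × (0, ∞)`, and the `ℓ₂`-coordinate is rotated into the sequence
`ℓ₂^ω` at a depth tending to infinity at the origin. -/
lemma nonempty_rsp_half : Nonempty ((ℕ → L2 ℕ ℝ) × Rsp ≃ₜ (ℕ → L2 ℕ ℝ) × Ici (0:ℝ)) := by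
  classical
  obtain ⟨d, e, hd, he, hed, he0, hde, -, -⟩ := exists_deletion
  -- the point of `ℓ₂` recording the direction of `p` and the ratio `τ / ‖e‖`
  let dir : L2 ℕ ℝ × ℝ → L2 ℕ ℝ := fun p => (Real.exp (p.2 / ‖p.1‖) * ‖p.1‖⁻¹) • p.1
  have hdir0 : ∀ p : L2 ℕ ℝ × ℝ, p.1 ≠ 0 → dir p ≠ 0 := fun p hp => by
    have := norm_pos_iff.2 hp
    exact smul_ne_zero (by positivity) hp
  have hdirn : ∀ p : L2 ℕ ℝ × ℝ, p.1 ≠ 0 → ‖dir p‖ = Real.exp (p.2 / ‖p.1‖) := fun p hp => by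
    have := norm_pos_iff.2 hp
    simp only [dir]
    rw [norm_smul, Real.norm_of_nonneg (by positivity), mul_assoc, inv_mul_cancel₀ this.ne',
      mul_one]
  let rho : L2 ℕ ℝ × ℝ → ℝ := fun p => ‖p.1‖ + |p.2|
  have hrho : ∀ p : L2 ℕ ℝ × ℝ, p.1 ≠ 0 → 0 < rho p := fun p hp => by
    have := norm_pos_iff.2 hp
    simp only [rho]; positivity
  have hrho0 : ∀ p : Rsp, p.1.1 = 0 → rho p.1 = 0 := fun p hp => by
    simp [rho, hp, p.2 hp]
  -- the inverse: norm of the first component, and the point itself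
  let nrm : L2 ℕ ℝ → ℝ → ℝ := fun v r => r / (1 + |Real.log ‖v‖|)
  let pt : L2 ℕ ℝ → ℝ → L2 ℕ ℝ × ℝ := fun v r => ((nrm v r * ‖v‖⁻¹) • v, Real.log ‖v‖ * nrm v r)
  have hpt : ∀ p : L2 ℕ ℝ × ℝ, p.1 ≠ 0 → pt (dir p) (rho p) = p := by
    intro p hp
    have h0 := norm_pos_iff.2 hp
    have h1 : nrm (dir p) (rho p) = ‖p.1‖ := by
      simp only [nrm, rho]
      rw [hdirn p hp, Real.log_exp, abs_div, abs_norm]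
      field_simp
    refine Prod.ext ?_ ?_
    · simp only [pt]
      rw [h1, hdirn p hp]
      simp only [dir]
      rw [smul_smul]
      convert one_smul ℝ p.1 using 2
      field_simp
    · simp only [pt]
      rw [h1, hdirn p hp, Real.log_exp]
      field_simp
  have hptn : ∀ v : L2 ℕ ℝ, v ≠ 0 → ∀ r, 0 ≤ r → ‖(pt v r).1‖ = nrm v r := fun v hv r hr => by
    have := norm_pos_iff.2 hv
    simp only [pt, nrm]
    rw [norm_smul, Real.norm_of_nonneg (by positivity), mul_assoc, inv_mul_cancel₀ this.ne',
      mul_one]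
  have hnpos : ∀ v r, 0 < r → 0 < nrm v r := fun v r hr => by simp only [nrm]; positivity
  have hpt0 : ∀ v : L2 ℕ ℝ, v ≠ 0 → ∀ r, 0 < r → (pt v r).1 ≠ 0 := fun v hv r hr => by
    rw [← norm_pos_iff, hptn v hv r hr.le]
    exact hnpos v r hr
  have hrpt : ∀ v : L2 ℕ ℝ, v ≠ 0 → ∀ r, 0 < r → rho (pt v r) = r := fun v hv r hr => by
    simp only [rho]
    rw [hptn v hv r hr.le]
    simp only [pt, nrm]
    rw [abs_mul, abs_of_pos (hnpos v r hr)]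
    simp only [nrm]
    field_simp
  have hdpt : ∀ v : L2 ℕ ℝ, v ≠ 0 → ∀ r, 0 < r → dir (pt v r) = v := fun v hv r hr => by
    have h0 := norm_pos_iff.2 hv
    have h1 := hnpos v r hr
    simp only [dir]
    rw [hptn v hv r hr.le]
    simp only [pt]
    rw [mul_div_assoc, div_self h1.ne', mul_one, Real.exp_log h0, smul_smul]
    convert one_smul ℝ v using 2
    field_simp
  have hdirc : ∀ p : L2 ℕ ℝ × ℝ, p.1 ≠ 0 → ContinuousAt dir p := fun p hp => by
    have h0 : ‖p.1‖ ≠ 0 := norm_ne_zero_iff.2 hp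
    simp only [dir]
    fun_prop (disch := assumption)
  have hrhoc : Continuous rho := by simp only [rho]; fun_prop
  have hptc : Continuous fun q : (L2 ℕ ℝ) × ℝ => pt (e q.1) q.2 := by
    have h0 : ∀ q : (L2 ℕ ℝ) × ℝ, ‖e q.1‖ ≠ 0 := fun q => norm_ne_zero_iff.2 (he0 _)
    have h1 : ∀ q : (L2 ℕ ℝ) × ℝ, 1 + |Real.log ‖e q.1‖| ≠ 0 := fun q => by positivity
    simp only [pt, nrm]
    fun_prop (disch := assumption)
  let f : (ℕ → L2 ℕ ℝ) × Rsp → (ℕ → L2 ℕ ℝ) := fun q => if q.2.1.1 = 0 then q.1 else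
    rot (ncons (d (dir q.2.1)) q.1) (rho q.2.1)
  let g : (ℕ → L2 ℕ ℝ) × Ici (0:ℝ) → (ℕ → L2 ℕ ℝ) := fun q => if q.2.1 = 0 then q.1 else
    fun n => unrot q.1 q.2.1 (n + 1)
  let k : (ℕ → L2 ℕ ℝ) × Ici (0:ℝ) → L2 ℕ ℝ × ℝ := fun q => pt (e (unrot q.1 q.2.1 0)) q.2.1
  have hncons : ∀ y : ℕ → L2 ℕ ℝ, ncons (y 0) (fun n => y (n + 1)) = y := fun y => by
    funext n; cases n <;> rfl
  have hkmem : ∀ q, (k q).1 = 0 → (k q).2 = 0 := fun q h => by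
    by_cases hq : q.2.1 = 0
    · simp [k, pt, nrm, hq]
    · exact absurd h (hpt0 _ (he0 _) _ (lt_of_le_of_ne q.2.2 (Ne.symm hq)))
  have hk0 : ∀ q, q.2.1 = 0 → k q = 0 := fun q hq => by
    simp [k, pt, nrm, hq]
  refine ⟨⟨⟨fun q => (f q, ⟨rho q.2.1, by simp only [rho, mem_Ici]; positivity⟩),
    fun q => (g q, ⟨k q, hkmem q⟩), fun q => ?_, fun q => ?_⟩, ?_, ?_⟩⟩
  · by_cases hq : q.2.1.1 = 0
    · have h0 := hrho0 _ hq
      refine Prod.ext ?_ (Subtype.ext ?_)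
      · simp [f, g, hq, h0]
      · simp only
        rw [hk0 _ h0]
        exact Prod.ext hq.symm (q.2.2 hq).symm
    · have h0 := hrho _ hq
      have h1 : f q = rot (ncons (d (dir q.2.1)) q.1) (rho q.2.1) := if_neg hq
      refine Prod.ext ?_ (Subtype.ext ?_)
      · simp only [g]
        rw [if_neg h0.ne']
        simp only [h1, unrot_rot h0]
        rfl
      · simp only [k, h1, unrot_rot h0, ncons_zero]
        rw [hed _ (hdir0 _ hq), hpt _ hq]
  · by_cases hq : q.2.1 = 0
    · have h0 := hk0 q hq
      refine Prod.ext ?_ (Subtype.ext ?_)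
      · simp [f, g, hq, h0]
      · simp only [h0, hq]
        simp [rho]
    · have hq' : 0 < q.2.1 := lt_of_le_of_ne q.2.2 (Ne.symm hq)
      have h0 := hpt0 _ (he0 (unrot q.1 q.2.1 0)) _ hq'
      refine Prod.ext ?_ (Subtype.ext ?_)
      · simp only [f, k]
        rw [if_neg h0, hrpt _ (he0 _) _ hq', hdpt _ (he0 _) _ hq', hde]
        simp only [g]
        rw [if_neg hq, hncons, rot_unrot hq']
      · simp only [k]
        exact hrpt _ (he0 _) _ hq'
  · have hr : Continuous fun q : (ℕ → L2 ℕ ℝ) × Rsp => rho q.2.1 :=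
      hrhoc.comp (continuous_subtype_val.comp continuous_snd)
    refine Continuous.prodMk ?_ (Continuous.subtype_mk hr _)
    refine continuous_iff_continuousAt.2 fun q => ?_
    by_cases hq : q.2.1.1 = 0
    · refine continuousAt_pi.2 fun n => ?_
      refine ((continuous_apply n).comp continuous_fst).continuousAt.congr ?_
      have h1 : ∀ᶠ q' in 𝓝 q, 2 ^ n * rho q'.2.1 < 1 :=
        (continuous_const.mul hr).continuousAt.eventually_lt_const (by simp [hrho0 _ hq])
      filter_upwards [h1] with q' hq'
      simp only [f, Function.comp]
      split_ifs
      · rfl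
      · rw [rot_small _ hq'.le, ncons_succ]
    · have h1 : ∀ᶠ q' : (ℕ → L2 ℕ ℝ) × Rsp in 𝓝 q, q'.2.1.1 ≠ 0 :=
        (continuous_fst.comp (continuous_subtype_val.comp continuous_snd)).continuousAt.eventually_ne
          hq
      have h2 : (fun q : (ℕ → L2 ℕ ℝ) × Rsp => rot (ncons (d (dir q.2.1)) q.1) (rho q.2.1))
          =ᶠ[𝓝 q] f := by
        filter_upwards [h1] with q' hq'
        simp [f, hq']
      refine ContinuousAt.congr ?_ h2
      have h3 : ContinuousAt (fun q : (ℕ → L2 ℕ ℝ) × Rsp => d (dir q.2.1)) q :=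
        ContinuousAt.comp (f := fun q : (ℕ → L2 ℕ ℝ) × Rsp => dir q.2.1) (hd _ (hdir0 _ hq))
          (ContinuousAt.comp (f := fun q : (ℕ → L2 ℕ ℝ) × Rsp => q.2.1) (hdirc _ hq)
            (continuous_subtype_val.comp continuous_snd).continuousAt)
      have h4 : ContinuousAt (fun q : (ℕ → L2 ℕ ℝ) × Rsp => ncons (d (dir q.2.1)) q.1) q :=
        ContinuousAt.comp (f := fun q : (ℕ → L2 ℕ ℝ) × Rsp => (d (dir q.2.1), q.1))
          (nconsH (L2 ℕ ℝ)).continuous.continuousAt (h3.prodMk continuousAt_fst)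
      exact ContinuousAt.comp (f := fun q : (ℕ → L2 ℕ ℝ) × Rsp =>
        (ncons (d (dir q.2.1)) q.1, rho q.2.1)) rot_continuous.continuousAt
          (h4.prodMk hr.continuousAt)
  · have hr : Continuous fun q : (ℕ → L2 ℕ ℝ) × Ici (0:ℝ) => q.2.1 :=
      continuous_subtype_val.comp continuous_snd
    have hu : ∀ q : (ℕ → L2 ℕ ℝ) × Ici (0:ℝ), q.2.1 ≠ 0 →
        ContinuousAt (fun q : (ℕ → L2 ℕ ℝ) × Ici (0:ℝ) => unrot q.1 q.2.1) q := fun q hq =>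
      ContinuousAt.comp (f := fun q : (ℕ → L2 ℕ ℝ) × Ici (0:ℝ) => (q.1, q.2.1))
        (unrot_continuousAt (lt_of_le_of_ne q.2.2 (Ne.symm hq)))
          (continuousAt_fst.prodMk hr.continuousAt)
    refine Continuous.prodMk ?_ (Continuous.subtype_mk ?_ _)
    · refine continuous_iff_continuousAt.2 fun q => ?_
      by_cases hq : q.2.1 = 0
      · refine continuousAt_pi.2 fun n => ?_
        refine ((continuous_apply n).comp continuous_fst).continuousAt.congr ?_
        have h1 : ∀ᶠ q' in 𝓝 q, 2 ^ n * q'.2.1 < 1 :=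
          (continuous_const.mul hr).continuousAt.eventually_lt_const (by simp [hq])
        filter_upwards [h1] with q' hq'
        simp only [g, Function.comp]
        split_ifs with h
        · rfl
        · exact (unrot_small _ (lt_of_le_of_ne q'.2.2 (Ne.symm h)) hq'.le).symm
      · have h1 : ∀ᶠ q' : (ℕ → L2 ℕ ℝ) × Ici (0:ℝ) in 𝓝 q, q'.2.1 ≠ 0 :=
          hr.continuousAt.eventually_ne hq
        have h2 : (fun (q : (ℕ → L2 ℕ ℝ) × Ici (0:ℝ)) n => unrot q.1 q.2.1 (n + 1)) =ᶠ[𝓝 q] g := by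
          filter_upwards [h1] with q' hq'
          simp only [g, if_neg hq']
        refine ContinuousAt.congr ?_ h2
        exact continuousAt_pi.2 fun n => (continuousAt_pi.1 (hu q hq)) (n + 1)
    · refine continuous_iff_continuousAt.2 fun q => ?_
      by_cases hq : q.2.1 = 0
      · have hb : ∀ q, ‖k q‖ ≤ q.2.1 := fun q => by
          have h0 : 0 ≤ q.2.1 := q.2.2
          have hl := abs_nonneg (Real.log ‖e (unrot q.1 q.2.1 0)‖)
          refine max_le ?_ ?_
          · simp only [k]
            rw [hptn _ (he0 _) _ h0]
            exact div_le_self h0 (by linarith)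
          · simp only [k, pt, nrm]
            rw [Real.norm_eq_abs, abs_mul, abs_of_nonneg (show 0 ≤
              q.2.1 / (1 + |Real.log ‖e (unrot q.1 q.2.1 0)‖|) by positivity), mul_div_assoc',
              div_le_iff₀ (by positivity)]
            nlinarith
        rw [ContinuousAt, hk0 q hq]
        refine squeeze_zero_norm hb ?_
        have := hr.continuousAt (x := q)
        rwa [ContinuousAt, hq] at this
      · exact ContinuousAt.comp (f := fun q : (ℕ → L2 ℕ ℝ) × Ici (0:ℝ) =>
          (unrot q.1 q.2.1 0, q.2.1)) hptc.continuousAt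
            (((continuousAt_pi.1 (hu q hq)) 0).prodMk hr.continuousAt)

theorem nonempty_l2_half : Nonempty (L2 ℕ ℝ × Ici (0:ℝ) ≃ₜ L2 ℕ ℝ) := by
  obtain ⟨a⟩ := nonempty_l2_homeo_pow
  obtain ⟨b⟩ := nonempty_rsp_half
  obtain ⟨c⟩ := nonempty_homeo_rsp
  let r := Homeomorph.refl
  exact ⟨(a.symm.prodCongr (r _)).trans <| b.symm.trans <| ((r _).prodCongr c.symm).trans <|
    (Homeomorph.prodAssoc _ _ _).symm.trans <|
    (((Homeomorph.prodComm _ _).trans ((nconsH _).trans a)).prodCongr (r _)).trans <|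
    (Homeomorph.prodComm _ _).trans consH⟩

end HalfSpace
end West

namespace West
open Filter

/-! ### Absorption of the Hilbert cube by `ℓ₂(ι)` -/

/-- The half-strip `[-1, 1] × [0, ∞)` is a half-plane. -/
def stripH : Icc (-1:ℝ) 1 × Ici (0:ℝ) ≃ₜ ℝ × Ici (0:ℝ) where
  toFun p := (p.1.1 * max 1 (p.2.1 + |p.1.1|),
    ⟨p.2.1 + |p.1.1| - |p.1.1 * max 1 (p.2.1 + |p.1.1|)|, by
      obtain ⟨⟨t, ht⟩, ⟨y, hy⟩⟩ := p
      have h1 : |t| ≤ 1 := abs_le.2 ht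
      have hy : 0 ≤ y := hy
      simp only [mem_Ici, abs_mul]
      have := abs_nonneg t
      rw [abs_of_pos (a := max 1 (y + |t|)) (lt_of_lt_of_le one_pos (le_max_left _ _))]
      rcases max_cases 1 (y + |t|) with h | h <;> rw [h.1] <;> nlinarith⟩)
  invFun q := (⟨q.1 / max 1 (|q.1| + q.2.1), by
      obtain ⟨a, ⟨b, hb⟩⟩ := q
      have hb : 0 ≤ b := hb
      rw [mem_Icc, ← abs_le, abs_div, abs_of_pos (a := max 1 (|a| + b))
        (lt_of_lt_of_le one_pos (le_max_left _ _)),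
        div_le_one (lt_of_lt_of_le one_pos (le_max_left _ _))]
      exact (le_add_of_nonneg_right hb).trans (le_max_right _ _)⟩,
    ⟨|q.1| + q.2.1 - |q.1 / max 1 (|q.1| + q.2.1)|, by
      obtain ⟨a, ⟨b, hb⟩⟩ := q
      have hb : 0 ≤ b := hb
      rw [mem_Ici, abs_div, abs_of_pos (a := max 1 (|a| + b))
        (lt_of_lt_of_le one_pos (le_max_left _ _))]
      have : |a| / max 1 (|a| + b) ≤ |a| := div_le_self (abs_nonneg _) (le_max_left _ _)
      simp only
      linarith⟩)
  left_inv p := by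
    obtain ⟨⟨t, ht⟩, ⟨y, hy⟩⟩ := p
    have h0 : max 1 (y + |t|) ≠ 0 := (lt_of_lt_of_le one_pos (le_max_left _ _)).ne'
    simp only [Prod.mk.injEq, Subtype.mk.injEq]
    simp only [add_sub_cancel]
    rw [mul_div_assoc, div_self h0, mul_one]
    simp
  right_inv q := by
    obtain ⟨a, ⟨b, hb⟩⟩ := q
    have h0 : max 1 (|a| + b) ≠ 0 := (lt_of_lt_of_le one_pos (le_max_left _ _)).ne'
    simp only [Prod.mk.injEq, Subtype.mk.injEq]
    simp only [sub_add_cancel]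
    rw [div_mul_cancel₀ _ h0]
    simp
  continuous_toFun := by fun_prop
  continuous_invFun := by
    have h0 : ∀ q : ℝ × Ici (0:ℝ), max 1 (|q.1| + q.2.1) ≠ 0 := fun q =>
      (lt_of_lt_of_le one_pos (le_max_left _ _)).ne'
    fun_prop (disch := assumption)

/-- `[0, 1]` and `[-1, 1]` are homeomorphic. -/
def unitH : Icc (0:ℝ) 1 ≃ₜ Icc (-1:ℝ) 1 where
  toFun t := ⟨2 * t - 1, by have := t.2.1; have := t.2.2; constructor <;> linarith⟩
  invFun t := ⟨(t + 1) / 2, by have := t.2.1; have := t.2.2; constructor <;> linarith⟩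
  left_inv t := Subtype.ext (by simp)
  right_inv t := Subtype.ext (by simp; ring)
  continuous_toFun := by fun_prop
  continuous_invFun := by fun_prop

lemma nonempty_interval_l2 : Nonempty (Icc (0:ℝ) 1 × L2 ℕ ℝ ≃ₜ L2 ℕ ℝ) := by
  obtain ⟨a⟩ := nonempty_l2_half
  let r := Homeomorph.refl
  -- `I × E = I × [0, ∞) × E = ℝ × [0, ∞) × E = E`
  exact ⟨(unitH.prodCongr (a.symm.trans (Homeomorph.prodComm _ _))).trans <|
    (Homeomorph.prodAssoc _ _ _).symm.trans <| (stripH.prodCongr (r _)).trans <|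
    (Homeomorph.prodAssoc _ _ _).trans <|
    ((r ℝ).prodCongr ((Homeomorph.prodComm _ _).trans a)).trans consH⟩

lemma nonempty_cube_l2 : Nonempty (HilbertCube × L2 ℕ ℝ ≃ₜ L2 ℕ ℝ) := by
  obtain ⟨a⟩ := nonempty_interval_l2
  obtain ⟨b⟩ := nonempty_l2_homeo_pow
  exact ⟨((Homeomorph.refl _).prodCongr b.symm).trans <| (arrowProdH _ _).symm.trans <|
    (arrowCongrH a).trans b⟩

theorem nonempty_cube_l2Space (ι : Type u) [Infinite ι] :
    Nonempty (HilbertCube × l2Space ι ≃ₜ l2Space ι) := by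
  obtain ⟨a⟩ := nonempty_cube_l2
  have : Nonempty (ι ≃ ℕ ⊕ ι) := by
    rw [← Cardinal.lift_mk_eq'.{u, u}]
    simp only [Cardinal.mk_sum, Cardinal.mk_nat, Cardinal.lift_aleph0, Cardinal.lift_add,
      Cardinal.lift_lift, Cardinal.lift_uzero, Cardinal.lift_id]
    exact (Cardinal.add_eq_right (Cardinal.aleph0_le_mk ι) (Cardinal.aleph0_le_mk ι)).symm
  obtain ⟨σ⟩ := this
  let c : l2Space ι ≃ₜ L2 ℕ ℝ × l2Space ι :=
    (l2Reindex (G := ℝ) σ).toHomeomorph.trans (l2Sum ℕ ι)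
  exact ⟨((Homeomorph.refl _).prodCongr c).trans <| (Homeomorph.prodAssoc _ _ _).symm.trans <|
    (a.prodCongr (Homeomorph.refl _)).trans c.symm⟩

end West

namespace West
open Filter

/-! ### Extension of maps and shears -/

/-- A case of Dugundji's extension theorem: a map from a compact subset of a metric space to a
convex subset `C` of a normed space extends to a map to `C` of the whole space. -/
lemma exists_extension {D X E : Type*} [TopologicalSpace D] [CompactSpace D] [MetricSpace X]
    [NormedAddCommGroup E] [NormedSpace ℝ E] {k : D → X} (hk : Continuous k)
    (hki : Function.Injective k) {f : D → E} (hf : Continuous f) {C : Set E} (hC : Convex ℝ C)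
    (hne : C.Nonempty) (hfC : ∀ d, f d ∈ C) :
    ∃ F : X → E, Continuous F ∧ (∀ x, F x ∈ C) ∧ ∀ d, F (k d) = f d := by
  classical
  rcases isEmpty_or_nonempty D with hD | hD
  · obtain ⟨c, hc⟩ := hne
    exact ⟨fun _ => c, continuous_const, fun _ => hc, fun d => hD.elim d⟩
  have hemb : IsClosedEmbedding k := hk.isClosedEmbedding hki
  set A := range k with hA
  have hAc : IsClosed A := hemb.isClosed_range
  have hAn : A.Nonempty := range_nonempty k
  -- off `A`, values are averages of values of `f` at almost nearest points
  let t : (Aᶜ : Set X) → Set E := fun x =>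
    convexHull ℝ (f '' {d | dist x.1 (k d) < 2 * Metric.infDist x.1 A})
  obtain ⟨g, hg⟩ := exists_continuous_forall_mem_convex_of_local_const (t := t)
    (fun x => convex_convexHull ℝ _) (fun x => by
      have hpos : 0 < Metric.infDist x.1 A := (hAc.notMem_iff_infDist_pos hAn).1 x.2
      obtain ⟨a, ⟨d, rfl⟩, hd⟩ := (Metric.infDist_lt_iff hAn (r := 2 * Metric.infDist x.1 A)).1
        (by linarith)
      refine ⟨f d, ?_⟩
      have h1 : ∀ᶠ y : (Aᶜ : Set X) in 𝓝 x, dist y.1 (k d) < 2 * Metric.infDist y.1 A := by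
        refine ContinuousAt.eventually_lt ?_ ?_ hd
        · fun_prop
        · exact (continuous_const.mul
            ((Metric.continuous_infDist_pt A).comp continuous_subtype_val)).continuousAt
      filter_upwards [h1] with y hy
      exact subset_convexHull ℝ _ ⟨d, hy, rfl⟩)
  let F : X → E := fun x => if hx : x ∈ A then f hx.choose else g ⟨x, hx⟩
  have hFk : ∀ d, F (k d) = f d := fun d => by
    have hx : k d ∈ A := mem_range_self d
    simp only [F, dif_pos hx]
    rw [hki hx.choose_spec]
  have hFC : ∀ x, F x ∈ C := fun x => by
    by_cases hx : x ∈ A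
    · simp only [F, dif_pos hx]; exact hfC _
    · simp only [F, dif_neg hx]
      refine convexHull_min ?_ hC (hg ⟨x, hx⟩)
      rintro _ ⟨d, -, rfl⟩
      exact hfC d
  refine ⟨F, continuous_iff_continuousAt.2 fun x => ?_, hFC, hFk⟩
  by_cases hx : x ∈ A
  · obtain ⟨d₀, rfl⟩ := hx
    rw [Metric.continuousAt_iff]
    intro ε hε
    have h1 : f ⁻¹' Metric.ball (f d₀) ε ∈ 𝓝 d₀ :=
      hf.continuousAt.preimage_mem_nhds (Metric.ball_mem_nhds _ hε)
    rw [hemb.isEmbedding.isInducing.nhds_eq_comap, mem_comap] at h1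
    obtain ⟨W, hW, hWs⟩ := h1
    obtain ⟨δ, hδ, hδW⟩ := Metric.mem_nhds_iff.1 hW
    refine ⟨δ / 3, by positivity, fun {x} hxd => ?_⟩
    by_cases hx : x ∈ A
    · obtain ⟨d, rfl⟩ := hx
      rw [hFk, hFk]
      exact hWs (hδW (show dist _ _ < δ by linarith))
    · rw [hFk]
      simp only [F, dif_neg hx]
      refine convexHull_min ?_ (convex_ball (f d₀) ε) (hg ⟨x, hx⟩)
      rintro _ ⟨d, hd, rfl⟩
      refine hWs (hδW ?_)
      have h2 : Metric.infDist x A ≤ dist x (k d₀) := Metric.infDist_le_dist_of_mem ⟨d₀, rfl⟩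
      have h3 : dist x (k d) < 2 * Metric.infDist x A := hd
      have h4 := dist_triangle_left (k d) (k d₀) x
      show dist _ _ < δ
      linarith
  · have h1 : ContinuousOn F Aᶜ := by
      rw [continuousOn_iff_continuous_domRestrict]
      have : (Aᶜ).domRestrict F = g := by
        funext y
        exact dif_neg y.2
      rw [this]
      exact g.continuous
    exact h1.continuousAt (hAc.isOpen_compl.mem_nhds hx)

section Shear

variable {E : Type*} [NormedAddCommGroup E] [NormedSpace ℝ E] [CompleteSpace E]

/-- A shear along `ker P`, damped by a cut-off `μ` of small slope, is a homeomorphism. -/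
lemma exists_shear (P : E →L[ℝ] E) {μ : E → ℝ} {L M : ℝ}
    (hμ : ∀ x y, |μ x - μ y| ≤ L * dist x y) (hL : 0 ≤ L) {φ : E → E} (hφ : Continuous φ)
    (hP : ∀ x, P (φ x) = 0) (hM : ∀ x, ‖φ x‖ ≤ M) (hLM : L * M ≤ 1 / 2) :
    ∃ T : E ≃ₜ E, ∀ x, T x = x + μ x • φ (P x) := by
  have hμc : Continuous μ := by
    have : LipschitzWith L.toNNReal μ := LipschitzWith.of_dist_le_mul fun x y => by
      rw [Real.dist_eq, Real.coe_toNNReal _ hL]; exact hμ x y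
    exact this.continuous
  obtain ⟨s, hs, hfix, huniq⟩ := exists_param_fixedPoint (P := E) (X := E)
    (fun y x => y - μ x • φ (P y)) (fun p x y => by
      rw [dist_eq_norm, sub_sub_sub_cancel_left, ← sub_smul, norm_smul, Real.norm_eq_abs]
      calc |μ y - μ x| * ‖φ (P p)‖ ≤ (L * dist y x) * M :=
            mul_le_mul (hμ _ _) (hM _) (norm_nonneg _) (by positivity)
        _ = (L * M) * dist x y := by rw [dist_comm]; ring
        _ ≤ _ := by gcongr) (fun x => by fun_prop)
  refine ⟨⟨⟨fun x => x + μ x • φ (P x), s, fun x => ?_, fun y => ?_⟩, by fun_prop, hs⟩, fun x => rfl⟩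
  · refine (huniq _ _ ?_).symm
    simp [hP]
  · have h := hfix y
    have hPs : P (s y) = P y := by
      conv_lhs => rw [← h]
      simp [hP]
    simp only [hPs]
    nth_rewrite 1 [← h]
    simp

/-- Shears with prescribed translation vectors `f d` over the compact set of the points
`P (k d)`. -/
lemma exists_shear_of_compact (P : E →L[ℝ] E) {μ : E → ℝ} {L M : ℝ}
    (hμ : ∀ x y, |μ x - μ y| ≤ L * dist x y) (hL : 0 ≤ L) (hM : 0 ≤ M) (hLM : L * M ≤ 1 / 2)
    {D : Type*} [TopologicalSpace D] [CompactSpace D] {k f : D → E} (hk : Continuous k)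
    (hki : ∀ d d', P (k d) = P (k d') → d = d') (hf : Continuous f) (hfP : ∀ d, P (f d) = 0)
    (hfM : ∀ d, ‖f d‖ ≤ M) :
    ∃ T : E ≃ₜ E, (∀ x, ∃ v, ‖v‖ ≤ M ∧ P v = 0 ∧ T x = x + μ x • v) ∧
      ∀ d x, P x = P (k d) → T x = x + μ x • f d := by
  obtain ⟨F, hF, hFC, hFk⟩ := exists_extension (k := fun d => P (k d)) (by fun_prop)
    (fun d d' h => hki d d' h) hf
    (C := Metric.closedBall 0 M ∩ (P.ker : Set E))
    ((convex_closedBall _ _).inter P.ker.convex)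
    ⟨0, by simp [hM], by simp⟩
    (fun d => ⟨by simpa using hfM d, by simpa using hfP d⟩)
  have h1 : ∀ x, ‖F x‖ ≤ M := fun x => by simpa using (hFC x).1
  have h2 : ∀ x, P (F x) = 0 := fun x => by simpa using (hFC x).2
  obtain ⟨T, hT⟩ := exists_shear P hμ hL hF h2 h1 hLM
  exact ⟨T, fun x => ⟨F (P x), h1 _, h2 _, hT x⟩, fun d x hx => by rw [hT, hx, hFk]⟩

/-- Klee's trick: a homeomorphism `h` between compacta that are both graphs over the kernel of a
projection `Q`, a little displaced by `h`, extends to a homeomorphism of the whole space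
supported near the part `K` of its domain and fixing the part `B` on which `h` is the
identity. -/
lemma unknot_core (Q : E →L[ℝ] E) (hQQ : ∀ x, Q (Q x) = Q x) (hQ1 : ∀ x, ‖Q x‖ ≤ ‖x‖)
    (hQ2 : ∀ x, ‖x - Q x‖ ≤ ‖x‖) {D : Type*} [TopologicalSpace D] [CompactSpace D]
    {i h kk : D → E} (hi : Continuous i) (hh : Continuous h) (hkk : Continuous kk)
    {η δ : ℝ} (hη : 0 < η) (hδ : 12 * η ≤ δ)
    (hkki : Function.Injective kk) (hQk : ∀ d, Q (kk d) = kk d) (hkn : ∀ d, ‖kk d‖ ≤ η / 2)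
    (hQi : ∀ d, ‖Q (i d)‖ ≤ 3 / 2 * η)
    (hii : ∀ d d', i d - Q (i d) = i d' - Q (i d') → d = d')
    (hhi : ∀ d d', h d - Q (h d) = h d' - Q (h d') → d = d')
    {K B : Set E} (hB : ∀ d, i d ∈ B → h d = i d)
    (hhn : ∀ d, ‖h d - i d‖ ≤ η) :
    ∃ g : E ≃ₜ E, (∀ d, i d ∈ K → g (i d) = h d) ∧ (∀ d, i d ∈ B → g (i d) = i d) ∧
      (∀ x, 4 * δ ≤ Metric.infDist x K → g x = x) ∧ ∀ x, ‖g x - x‖ ≤ 11 * η := by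
  have hδ0 : 0 < δ := by linarith
  set P : E →L[ℝ] E := ContinuousLinearMap.id ℝ E - Q with hPdef
  have hP : ∀ x, P x = x - Q x := fun x => rfl
  have hPQ : ∀ x, P (Q x) = 0 := fun x => by rw [hP, hQQ, sub_self]
  have hQP : ∀ x, Q (P x) = 0 := fun x => by rw [hP, map_sub, hQQ, sub_self]
  let μ : ℝ → E → ℝ := fun a x => clamp (a - Metric.infDist x K / δ)
  have hμ : ∀ a x y, |μ a x - μ a y| ≤ (1 / δ) * dist x y := fun a x y => by
    refine (clamp_sub_le _ _).trans ?_
    have h1 := (Metric.lipschitz_infDist_pt K).dist_le_mul x y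
    rw [Real.dist_eq] at h1
    have h2 : (a - Metric.infDist x K / δ) - (a - Metric.infDist y K / δ) =
      -((1 / δ) * (Metric.infDist x K - Metric.infDist y K)) := by ring
    rw [h2, abs_neg, abs_mul, abs_of_pos (show 0 < 1 / δ by positivity)]
    gcongr
    simpa using h1
  have hμ0 : ∀ a x, 0 ≤ μ a x := fun a x => clamp_nonneg _
  have hμ1 : ∀ a x, μ a x ≤ 1 := fun a x => clamp_le_one _
  have hμe : ∀ a x, Metric.infDist x K ≤ (a - 1) * δ → μ a x = 1 := fun a x hx =>
    clamp_eq_one (by rw [← div_le_iff₀ hδ0] at hx; linarith)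
  have hμz : ∀ a x, a * δ ≤ Metric.infDist x K → μ a x = 0 := fun a x hx =>
    clamp_eq_zero (by rw [← le_div_iff₀ hδ0] at hx; linarith)
  have hdist : ∀ x y r, ‖y - x‖ ≤ r → x ∈ K → Metric.infDist y K ≤ r := fun x y r hr hx =>
    (Metric.infDist_le_dist_of_mem hx).trans (by rwa [dist_eq_norm])
  have hδL : 0 ≤ 1 / δ := by positivity
  have hsm : ∀ a x (v : E) M, ‖v‖ ≤ M → ‖μ a x • v‖ ≤ M := fun a x v M hv => by
    rw [norm_smul, Real.norm_of_nonneg (hμ0 a x)]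
    exact (mul_le_of_le_one_left (norm_nonneg _) (hμ1 a x)).trans hv
  have hLM : ∀ M, M ≤ 6 * η → 1 / δ * M ≤ 1 / 2 := fun M hM => by
    rw [one_div_mul_eq_div, div_le_iff₀ hδ0]; linarith
  obtain ⟨g₁, hg₁, hg₁k⟩ := exists_shear_of_compact P (hμ 4) hδL (M := 2 * η) (by positivity)
    (hLM _ (by linarith)) (k := i) (f := fun d => kk d - Q (i d)) hi hii (by fun_prop)
    (fun d => by rw [map_sub, hPQ, ← hQk, hPQ, sub_zero])
    (fun d => (norm_sub_le _ _).trans (by linarith [hkn d, hQi d]))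
  obtain ⟨g₂, hg₂, hg₂k⟩ := exists_shear_of_compact Q (hμ 2) hδL (M := η) (by positivity)
    (hLM _ (by linarith)) (k := kk) (f := fun d => P (h d - i d)) hkk
    (fun d d' hd => hkki (by rw [← hQk d, ← hQk d', hd])) (by fun_prop)
    (fun d => hQP _) (fun d => by rw [hP]; exact (hQ2 _).trans (hhn d))
  have hg₁n : ∀ x, ‖g₁ x - x‖ ≤ 2 * η := fun x => by
    obtain ⟨v, hv, -, hx⟩ := hg₁ x
    rw [hx, add_sub_cancel_left]; exact hsm _ _ _ _ hv
  have hg₂n : ∀ x, ‖g₂ x - x‖ ≤ η := fun x => by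
    obtain ⟨v, hv, -, hx⟩ := hg₂ x
    rw [hx, add_sub_cancel_left]; exact hsm _ _ _ _ hv
  have hg₁P : ∀ x, P (g₁ x) = P x := fun x => by
    obtain ⟨v, -, hv, hx⟩ := hg₁ x
    rw [hx, map_add, map_smul, hv, smul_zero, add_zero]
  let z : E → E := fun x => g₁.symm (g₂ (g₁ x))
  have hz : Continuous z := by simp only [z]; fun_prop
  have hgz : ∀ x, g₁ (z x) = g₂ (g₁ x) := fun x => g₁.apply_symm_apply _
  have hzn : ∀ x, ‖z x - x‖ ≤ 5 * η := fun x => by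
    have e : z x - x = -(g₁ (z x) - z x) + (g₂ (g₁ x) - g₁ x) + (g₁ x - x) := by
      rw [hgz]; abel
    rw [e]
    refine (norm_add₃_le).trans ?_
    rw [norm_neg]
    linarith [hg₁n (z x), hg₂n (g₁ x), hg₁n x]
  have hiK : ∀ d, i d ∈ K → μ 4 (i d) = 1 := fun d hd => hμe _ _ (by
    rw [Metric.infDist_zero_of_mem hd]; linarith)
  -- on `K` the composition `z` already has the right component along `ker Q`
  have hzK : ∀ d, i d ∈ K → P (z (i d)) = P (h d) := fun d hd => by
    have h1 : g₁ (i d) = P (i d) + kk d := by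
      rw [hg₁k d _ rfl, hiK d hd, one_smul, hP]; abel
    have h2 : Q (g₁ (i d)) = Q (kk d) := by rw [h1, map_add, hQP, zero_add]
    have h3 : μ 2 (g₁ (i d)) = 1 := hμe _ _ (hdist _ _ _ ((hg₁n _).trans (by linarith)) hd)
    rw [← hg₁P, hgz, hg₂k d _ h2, h3, one_smul, h1]
    have h4 : P (kk d) = 0 := by rw [← hQk, hPQ]
    have h5 : ∀ y, P (P y) = P y := fun y => by rw [hP (P y), hQP, sub_zero]
    rw [map_add, map_add, h4, h5, h5, map_sub]
    abel
  have hzB : ∀ d, i d ∈ B → z (i d) = i d := fun d hd => by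
    have h0 : g₂ (g₁ (i d)) = g₁ (i d) := by
      by_cases hd3 : Metric.infDist (i d) K ≤ 3 * δ
      · have h1 : g₁ (i d) = P (i d) + kk d := by
          rw [hg₁k d _ rfl, hμe 4 _ (by linarith), one_smul, hP]; abel
        have h2 : Q (g₁ (i d)) = Q (kk d) := by rw [h1, map_add, hQP, zero_add]
        rw [hg₂k d _ h2, hB d hd, sub_self, map_zero, smul_zero, add_zero]
      · obtain ⟨v, -, -, hx⟩ := hg₂ (g₁ (i d))
        have h1 := Metric.infDist_le_infDist_add_dist (s := K) (x := i d) (y := g₁ (i d))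
        have h2 := hg₁n (i d)
        rw [← dist_eq_norm, dist_comm] at h2
        rw [hx, hμz _ _ (by linarith), zero_smul, add_zero]
    simp only [z]
    rw [h0, g₁.symm_apply_apply]
  obtain ⟨s, hs, hsk⟩ := exists_shear_of_compact P (hμ 2) hδL (M := 6 * η) (by positivity)
    (hLM _ le_rfl) (k := h) (f := fun d => Q (h d) - Q (z (i d))) hh hhi (by fun_prop)
    (fun d => by rw [map_sub, hPQ, hPQ, sub_zero])
    (fun d => by
      rw [← map_sub]
      refine (hQ1 _).trans ?_
      have e : h d - z (i d) = (h d - i d) - (z (i d) - i d) := by abel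
      rw [e]
      exact (norm_sub_le _ _).trans (by linarith [hhn d, hzn (i d)]))
  have hsn : ∀ x, ‖s x - x‖ ≤ 6 * η := fun x => by
    obtain ⟨v, hv, -, hx⟩ := hs x
    rw [hx, add_sub_cancel_left]; exact hsm _ _ _ _ hv
  refine ⟨((g₁.trans g₂).trans g₁.symm).trans s, fun d hd => ?_, fun d hd => ?_, fun x hx => ?_,
    fun x => ?_⟩
  · show s (z (i d)) = h d
    rw [hsk d _ (hzK d hd), hμe 2 _ (hdist _ _ _ ((hzn _).trans (by linarith)) hd), one_smul]
    have h1 := hzK d hd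
    rw [hP, hP] at h1
    rw [sub_eq_sub_iff_add_eq_add] at h1
    rw [← add_sub_assoc, h1, add_sub_cancel_right]
  · show s (z (i d)) = i d
    rw [hzB d hd, hsk d _ (by rw [hB d hd]), hzB d hd, hB d hd, sub_self, smul_zero, add_zero]
  · show s (z x) = x
    have h1 : g₁ x = x := by
      obtain ⟨v, -, -, e⟩ := hg₁ x
      rw [e, hμz 4 x hx, zero_smul, add_zero]
    have h2 : g₂ x = x := by
      obtain ⟨v, -, -, e⟩ := hg₂ x
      rw [e, hμz 2 x (by linarith), zero_smul, add_zero]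
    have h3 : z x = x := by
      simp only [z]
      rw [h1, h2, Homeomorph.symm_apply_eq, h1]
    obtain ⟨v, -, -, e⟩ := hs x
    rw [h3, e, hμz 2 x (by linarith), zero_smul, add_zero]
  · show ‖s (z x) - x‖ ≤ _
    have e : s (z x) - x = (s (z x) - z x) + (z x - x) := by abel
    rw [e]
    exact (norm_add_le _ _).trans (by linarith [hsn (z x), hzn x])

end Shear
end West

namespace West
open Filter

/-! ### Unknotting of compacta in `ℓ₂(ι)` -/

/-- A separable metric space has a point-separating sequence of functions to `[0, 1]`. -/
lemma exists_separating (D : Type*) [MetricSpace D] [TopologicalSpace.SeparableSpace D] :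
    ∃ c : ℕ → D → ℝ, (∀ n, Continuous (c n)) ∧ (∀ n d, 0 ≤ c n d) ∧ (∀ n d, c n d ≤ 1) ∧
      ∀ d d', (∀ n, c n d = c n d') → d = d' := by
  rcases isEmpty_or_nonempty D with hD | hD
  · exact ⟨fun _ _ => 0, fun _ => continuous_const, fun _ d => hD.elim d, fun _ d => hD.elim d,
      fun d => hD.elim d⟩
  let q := TopologicalSpace.denseSeq D
  refine ⟨fun n d => min 1 (dist d (q n)), fun n => by fun_prop, fun n d => by positivity,
    fun n d => min_le_left _ _, fun d d' h => ?_⟩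
  by_contra hne
  have hpos : 0 < dist d d' := dist_pos.2 hne
  set ε := min 1 (dist d d' / 2) with hε
  have hε0 : 0 < ε := by positivity
  obtain ⟨n, hn⟩ := (TopologicalSpace.denseRange_denseSeq D).exists_dist_lt d hε0
  have h1 := h n
  have h2 : min 1 (dist d (q n)) < ε := (min_le_right _ _).trans_lt hn
  simp only [h1] at h1 h2
  have h3 : dist d' (q n) < ε := by
    rcases min_lt_iff.1 h2 with h3 | h3
    · exact absurd (min_le_left 1 (dist d d' / 2)) (not_le.2 h3)
    · exact h3
  have h4 : ε ≤ dist d d' / 2 := min_le_right _ _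
  have h5 := dist_triangle_right d d' (q n)
  linarith

section Unknot

variable {ι : Type*}

/-- Along any sequence of distinct indices the coordinates of the points of a compact set tend
to zero uniformly. -/
lemma coord_tendsto_zero {Δ : Set (L2 ι ℝ)} (hΔ : IsCompact Δ) {e : ℕ → ι}
    (he : Function.Injective e) {ε : ℝ} (hε : 0 < ε) :
    ∀ᶠ k in atTop, ∀ x ∈ Δ, |x (e k)| ≤ ε := by
  obtain ⟨t, ht, htΔ⟩ := Metric.totallyBounded_iff.1 hΔ.totallyBounded (ε / 2) (by positivity)
  have h1 : ∀ y ∈ t, ∀ᶠ k in atTop, |y (e k)| < ε / 2 := by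
    intro y _
    have h2 := ((l2_summable y).comp_injective he).tendsto_atTop_zero
    have h3 := h2.eventually_lt_const (show (0:ℝ) < (ε / 2) ^ 2 by positivity)
    filter_upwards [h3] with k hk
    rw [Function.comp_apply, Real.norm_eq_abs] at hk
    exact lt_of_pow_lt_pow_left₀ 2 (by positivity) hk
  rw [← ht.eventually_all] at h1
  filter_upwards [h1] with k hk x hx
  obtain ⟨y, hy, hxy⟩ := mem_iUnion₂.1 (htΔ hx)
  have h4 := l2_apply_le (x - y) (e k)
  rw [lp.coeFn_sub, Pi.sub_apply, Real.norm_eq_abs] at h4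
  rw [Metric.mem_ball, dist_eq_norm] at hxy
  have h5 := hk y hy
  have h6 := abs_sub_abs_le_abs_sub (x (e k)) (y (e k))
  linarith

lemma exists_fast_coords [Infinite ι] {Δ : Set (L2 ι ℝ)} (hΔ : IsCompact Δ) {η : ℝ} (hη : 0 < η) :
    ∃ c : ℕ → ι, Function.Injective c ∧ ∀ m, ∀ x ∈ Δ, |x (c m)| ≤ η * (1 / 4) ^ m := by
  let e := Infinite.natEmbedding ι
  obtain ⟨k, hk, hkΔ⟩ := extraction_forall_of_eventually
    (P := fun m k => ∀ x ∈ Δ, |x (e k)| ≤ η * (1 / 4) ^ m)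
    (fun m => coord_tendsto_zero hΔ e.injective (by positivity))
  exact ⟨fun m => e (k m), e.injective.comp hk.injective, hkΔ⟩

/-- The closed subspace of `ℓ₂(ι)` spanned by the vectors with coordinates `2⁻ʲ` at the places
`c (i, j)`, `j ∈ ℕ`. -/
def geomV (c : ℕ → ι) : Submodule ℝ (L2 ι ℝ) where
  carrier := {x | (∀ a, a ∉ range c → x a = 0) ∧
    ∀ i j, x (c (Nat.pair i j)) = (1 / 2) ^ j * x (c (Nat.pair i 0))}
  add_mem' := by
    rintro x y ⟨h1, h2⟩ ⟨h3, h4⟩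
    refine ⟨fun a ha => ?_, fun i j => ?_⟩
    · rw [lp.coeFn_add, Pi.add_apply, h1 a ha, h3 a ha, add_zero]
    · rw [lp.coeFn_add, Pi.add_apply, Pi.add_apply, h2, h4]; ring
  zero_mem' := ⟨fun _ _ => rfl, fun _ _ => by simp⟩
  smul_mem' := by
    rintro r x ⟨h1, h2⟩
    refine ⟨fun a ha => ?_, fun i j => ?_⟩
    · rw [lp.coeFn_smul, Pi.smul_apply, h1 a ha, smul_zero]
    · rw [lp.coeFn_smul, Pi.smul_apply, Pi.smul_apply, h2, smul_eq_mul, smul_eq_mul]; ring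

lemma isClosed_geomV (c : ℕ → ι) : IsClosed (geomV c : Set (L2 ι ℝ)) := by
  have h : (geomV c : Set (L2 ι ℝ)) = (⋂ a, ⋂ (_ : a ∉ range c), {x | x a = 0}) ∩
      ⋂ i, ⋂ j, {x | x (c (Nat.pair i j)) = (1 / 2) ^ j * x (c (Nat.pair i 0))} := by
    ext x
    simp [geomV]
  rw [h]
  refine IsClosed.inter ?_ ?_
  · exact isClosed_iInter fun a => isClosed_iInter fun _ =>
      isClosed_eq (l2_continuous_apply a) continuous_const
  · exact isClosed_iInter fun i => isClosed_iInter fun j =>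
      isClosed_eq (l2_continuous_apply _) (continuous_const.mul (l2_continuous_apply _))

lemma summable_pair_weights :
    Summable fun m : ℕ => ((1 / 2 : ℝ) ^ m.unpair.1 * (1 / 2) ^ m.unpair.2) ^ 2 := by
  have h1 : Summable fun n : ℕ => ((1 / 2 : ℝ) ^ n) ^ 2 := by simpa using summable_eps 1
  have h2 := h1.mul_of_nonneg h1 (fun n => by positivity) (fun n => by positivity)
  have h3 := (Nat.pairEquiv.symm.summable_iff).2 h2
  refine h3.congr fun m => ?_
  rw [mul_pow]
  rfl

/-- Every compact metric space embeds in an arbitrarily small neighbourhood of zero in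
`geomV c`. -/
lemma exists_small_embedding {c : ℕ → ι} (hc : Function.Injective c) (D : Type*) [MetricSpace D]
    [CompactSpace D] {η : ℝ} (hη : 0 < η) :
    ∃ k : D → L2 ι ℝ, Continuous k ∧ Function.Injective k ∧ (∀ d, k d ∈ geomV c) ∧
      ∀ d, ‖k d‖ ≤ η := by
  classical
  obtain ⟨f, hf, hf0, hf1, hsep⟩ := exists_separating D
  let w : ℕ → ℝ := fun m => (1 / 2 : ℝ) ^ m.unpair.1 * (1 / 2) ^ m.unpair.2
  have hw0 : ∀ m, 0 ≤ w m := fun m => by positivity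
  let W : ι → ℝ := Function.extend c w 0
  have hWc : ∀ m, W (c m) = w m := fun m => hc.extend_apply _ _ _
  have hWn : ∀ a, a ∉ range c → W a = 0 := fun a ha => by
    simp only [W]
    rw [Function.extend_apply' _ _ _ (by simpa using ha)]; rfl
  have hW : Summable fun a => W a ^ 2 := by
    rw [← hc.summable_iff]
    · exact summable_pair_weights.congr fun m => by simp only [Function.comp, hWc, w]
    · intro a ha; simp [hWn a ha]
  let F : D → ι → ℝ := fun d => Function.extend c (fun m => w m * f m.unpair.1 d) 0
  have hFc : ∀ d m, F d (c m) = w m * f m.unpair.1 d := fun d m => hc.extend_apply _ _ _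
  have hFn : ∀ d a, a ∉ range c → F d a = 0 := fun d a ha => by
    simp only [F]
    rw [Function.extend_apply' _ _ _ (by simpa using ha)]; rfl
  have hFW : ∀ d a, ‖F d a‖ ≤ W a := fun d a => by
    by_cases ha : a ∈ range c
    · obtain ⟨m, rfl⟩ := ha
      rw [hFc, hWc, Real.norm_of_nonneg (mul_nonneg (hw0 m) (hf0 _ _))]
      exact mul_le_of_le_one_right (hw0 m) (hf1 _ _)
    · rw [hFn d a ha, hWn a ha, norm_zero]
  have hFs : ∀ d, Summable fun a => ‖F d a‖ ^ 2 := fun d =>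
    hW.of_nonneg_of_le (fun a => by positivity) fun a => by
      gcongr; exact hFW d a
  let k₀ : D → L2 ι ℝ := fun d => l2mk (F d) (hFs d)
  have hk₀ : Continuous k₀ := by
    refine dominated_continuous (c := W) hW hFW fun a => ?_
    show Continuous fun d => F d a
    by_cases ha : a ∈ range c
    · obtain ⟨m, rfl⟩ := ha
      simp only [hFc]
      exact continuous_const.mul (hf _)
    · simp only [hFn _ a ha]
      exact continuous_const
  obtain ⟨C, hC⟩ := (isCompact_range hk₀).isBounded.exists_norm_le
  set r := η / (1 + |C|) with hr
  have hr0 : 0 < r := by positivity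
  refine ⟨fun d => r • k₀ d, hk₀.const_smul r, fun d d' h => hsep _ _ fun n => ?_, fun d => ?_,
    fun d => ?_⟩
  · have h1 : k₀ d = k₀ d' := smul_right_injective _ hr0.ne' h
    have h2 : F d (c (Nat.pair n 0)) = F d' (c (Nat.pair n 0)) :=
      congrArg (fun x : L2 ι ℝ => x (c (Nat.pair n 0))) h1
    rw [hFc, hFc] at h2
    simp only [w, Nat.unpair_pair] at h2
    exact mul_left_cancel₀ (by positivity) h2
  · refine (geomV c).smul_mem _ ⟨fun a ha => hFn d a ha, fun i j => ?_⟩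
    show F d _ = _ * F d _
    rw [hFc, hFc]
    simp only [w, Nat.unpair_pair]
    ring
  · rw [norm_smul, Real.norm_of_nonneg hr0.le, hr, div_mul_eq_mul_div,
      div_le_iff₀ (by positivity)]
    have := hC _ (mem_range_self d)
    have := le_abs_self C
    gcongr
    linarith

lemma geomV_eq_zero {c : ℕ → ι} {η : ℝ} (hη : 0 < η) {x : L2 ι ℝ}
    (hx : x ∈ geomV c) (hxc : ∀ m, |x (c m)| ≤ η * (1 / 4) ^ m) : x = 0 := by
  have h0 : ∀ i, x (c (Nat.pair i 0)) = 0 := fun i => by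
    have h1 : ∀ j : ℕ, |x (c (Nat.pair i 0))| ≤ η * (1 / 2) ^ j := fun j => by
      have h2 := hxc (Nat.pair i j)
      rw [hx.2 i j, abs_mul, abs_of_pos (show (0:ℝ) < (1 / 2) ^ j by positivity)] at h2
      have h3 : (1 / 4 : ℝ) ^ Nat.pair i j ≤ (1 / 4) ^ j :=
        pow_le_pow_of_le_one (by norm_num) (by norm_num) (Nat.right_le_pair i j)
      have h4 : (1 / 4 : ℝ) ^ j = (1 / 2) ^ j * (1 / 2) ^ j := by rw [← mul_pow]; norm_num
      have h5 : (0:ℝ) < (1 / 2) ^ j := by positivity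
      have h6 : (1 / 2) ^ j * |x (c (Nat.pair i 0))| ≤ (1 / 2) ^ j * (η * (1 / 2) ^ j) := by
        calc _ ≤ _ := h2
          _ ≤ η * (1 / 4) ^ j := by gcongr
          _ = _ := by rw [h4]; ring
      exact le_of_mul_le_mul_left h6 h5
    have h2 : Tendsto (fun j : ℕ => η * (1 / 2 : ℝ) ^ j) atTop (𝓝 (η * 0)) :=
      (tendsto_pow_atTop_nhds_zero_of_lt_one (by norm_num) (by norm_num)).const_mul _
    rw [mul_zero] at h2
    exact abs_eq_zero.1 (le_antisymm (ge_of_tendsto' h2 h1) (abs_nonneg _))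
  refine l2_ext fun a => ?_
  by_cases ha : a ∈ range c
  · obtain ⟨m, rfl⟩ := ha
    have := hx.2 m.unpair.1 m.unpair.2
    rw [Nat.pair_unpair] at this
    rw [this, h0, mul_zero]; rfl
  · exact hx.1 a ha

instance geomV_complete (c : ℕ → ι) : CompleteSpace (geomV c) :=
  (isClosed_geomV c).completeSpace_coe

lemma norm_proj_geomV_le {c : ℕ → ι} (hc : Function.Injective c) {η : ℝ} (hη : 0 < η)
    {x : L2 ι ℝ} (hxc : ∀ m, |x (c m)| ≤ η * (1 / 4) ^ m) :
    ‖(geomV c).starProjection x‖ ≤ 3 / 2 * η := by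
  classical
  -- the part `y` of `x` living on the coordinates `c`
  let y : L2 ι ℝ := l2mk (fun a => if a ∈ range c then x a else 0)
    ((l2_summable x).of_nonneg_of_le (fun a => by positivity) fun a => by
      split_ifs
      · exact le_rfl
      · simp; positivity)
  have hy : ∀ a, y a = if a ∈ range c then x a else 0 := fun a => rfl
  have h1 : (geomV c).starProjection (x - y) = 0 := by
    rw [Submodule.starProjection_apply_eq_zero_iff, Submodule.mem_orthogonal]
    intro v hv
    rw [lp.inner_eq_tsum]
    refine (tsum_congr fun a => ?_).trans tsum_zero
    rw [lp.coeFn_sub, Pi.sub_apply, hy]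
    split_ifs with ha
    · simp
    · rw [hv.1 a ha]; simp
  have h2 : (geomV c).starProjection x = (geomV c).starProjection y := by
    rw [map_sub, sub_eq_zero] at h1; exact h1
  rw [h2]
  refine ((geomV c).norm_starProjection_apply_le y).trans ?_
  refine (sq_le_sq₀ (norm_nonneg _) (by positivity)).1 ?_
  rw [l2_norm_sq, ← hc.tsum_eq (f := fun a => ‖y a‖ ^ 2)]
  · have h3 : HasSum (fun m : ℕ => η ^ 2 * (1 / 16 : ℝ) ^ m) (η ^ 2 * (1 - 1 / 16)⁻¹) :=
      (hasSum_geometric_of_lt_one (by norm_num) (by norm_num)).mul_left _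
    have h4 : ∀ m, ‖y (c m)‖ ^ 2 ≤ η ^ 2 * (1 / 16 : ℝ) ^ m := fun m => by
      have h5 : (1 / 16 : ℝ) ^ m = ((1 / 4) ^ m) ^ 2 := by rw [← pow_mul, mul_comm, pow_mul]; norm_num
      rw [hy, if_pos (mem_range_self m), h5, ← mul_pow]
      gcongr
      exact hxc m
    have h5 : Summable fun m => ‖y (c m)‖ ^ 2 :=
      h3.summable.of_nonneg_of_le (fun m => by positivity) h4
    refine (h5.tsum_le_tsum h4 h3.summable).trans ?_
    rw [h3.tsum_eq]
    nlinarith [sq_nonneg η]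
  · intro a ha
    by_contra h
    exact ha (by show ‖y a‖ ^ 2 = 0; rw [hy, if_neg h]; simp)

/-- A small displacement `h` of a compact set `K ∪ B`, trivial on `B`, is realised on `K` by a
homeomorphism of `ℓ₂(ι)` that fixes `B` and the points far from `K`. -/
theorem unknot [Infinite ι] {K B : Set (L2 ι ℝ)} (hK : IsCompact K) (hB : IsCompact B)
    {h : ↥(K ∪ B) → L2 ι ℝ} (hh : Continuous h) (hhi : Function.Injective h)
    (hhB : ∀ d : ↥(K ∪ B), d.1 ∈ B → h d = d) {η δ : ℝ} (hη : 0 < η) (hδ : 12 * η ≤ δ)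
    (hhn : ∀ d : ↥(K ∪ B), ‖h d - d‖ ≤ η) :
    ∃ g : L2 ι ℝ ≃ₜ L2 ι ℝ, (∀ d : ↥(K ∪ B), d.1 ∈ K → g d = h d) ∧ (∀ x ∈ B, g x = x) ∧
      (∀ x, 4 * δ ≤ Metric.infDist x K → g x = x) ∧ ∀ x, ‖g x - x‖ ≤ 11 * η := by
  have : CompactSpace ↥(K ∪ B) := isCompact_iff_compactSpace.1 (hK.union hB)
  let Δ : Set (L2 ι ℝ) := (K ∪ B) ∪ (range (fun p : ↥(K ∪ B) × ↥(K ∪ B) => p.1.1 - p.2.1) ∪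
    range (fun p : ↥(K ∪ B) × ↥(K ∪ B) => h p.1 - h p.2))
  have hΔ : IsCompact Δ := (hK.union hB).union
    ((isCompact_range (by fun_prop)).union (isCompact_range (by fun_prop)))
  obtain ⟨c, hc, hcΔ⟩ := exists_fast_coords hΔ hη
  obtain ⟨kk, hkk, hkki, hkV, hkn⟩ := exists_small_embedding hc ↥(K ∪ B)
    (show 0 < η / 2 by positivity)
  let Q := (geomV c).starProjection
  have hV : ∀ x ∈ Δ, x - Q x = 0 → x = 0 := fun x hx hxQ => by
    refine geomV_eq_zero hη (c := c) ?_ fun m => hcΔ m x hx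
    rw [sub_eq_zero.1 hxQ]
    exact Submodule.starProjection_apply_mem _ _
  obtain ⟨g, hg1, hg2, hg3, hg4⟩ := unknot_core (K := K) (B := B) Q
    (fun x => Submodule.starProjection_eq_self_iff.2 (Submodule.starProjection_apply_mem _ _))
    (fun x => (geomV c).norm_starProjection_apply_le x)
    (fun x => by
      have e : x - Q x = (geomV c)ᗮ.starProjection x :=
        (Submodule.starProjection_orthogonal_val (K := geomV c) x).symm
      rw [e]
      exact (geomV c)ᗮ.norm_starProjection_apply_le x)
    (i := fun d : ↥(K ∪ B) => d.1) continuous_subtype_val hh hkk hη hδ hkki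
    (fun d => Submodule.starProjection_eq_self_iff.2 (hkV d)) hkn
    (fun d => norm_proj_geomV_le hc hη fun m => hcΔ m _ (Or.inl d.2))
    (fun d d' hd => by
      refine Subtype.ext (sub_eq_zero.1 (hV _ (Or.inr (Or.inl ⟨(d, d'), rfl⟩)) ?_))
      rw [← sub_eq_zero] at hd
      simp only [map_sub]
      rw [← hd]; abel)
    (fun d d' hd => by
      refine hhi (sub_eq_zero.1 (hV _ (Or.inr (Or.inr ⟨(d, d'), rfl⟩)) ?_))
      rw [← sub_eq_zero] at hd
      simp only [map_sub]
      rw [← hd]; abel)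
    hhB hhn
  exact ⟨g, hg1, fun x hx => hg2 ⟨x, Or.inr hx⟩ hx, hg3, hg4⟩

end Unknot
end West

namespace West
open Filter

/-! ### Discrete families of compacta and locally compact sets -/

section Decomp

variable {X : Type*}

/-- Every point has a closed neighbourhood whose intersection with `C` is compact; for closed `C`
in a regular space this means that the subspace `C` is locally compact. -/
def LC [TopologicalSpace X] (C : Set X) : Prop := ∀ x, ∃ N ∈ 𝓝 x, IsClosed N ∧ IsCompact (C ∩ N)

lemma LC.empty [TopologicalSpace X] : LC (∅ : Set X) := fun x =>
  ⟨univ, univ_mem, isClosed_univ, by simp⟩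

lemma LC.union [TopologicalSpace X] {C C' : Set X} (h : LC C) (h' : LC C') : LC (C ∪ C') :=
  fun x => by
    obtain ⟨N, hN, hNc, hCN⟩ := h x
    obtain ⟨N', hN', hNc', hCN'⟩ := h' x
    refine ⟨N ∩ N', inter_mem hN hN', hNc.inter hNc', ?_⟩
    have e : (C ∪ C') ∩ (N ∩ N') = ((C ∩ N) ∩ N') ∪ ((C' ∩ N') ∩ N) := by
      ext y; simp only [mem_inter_iff, mem_union]; tauto
    rw [e]
    exact (hCN.inter_right hNc').union (hCN'.inter_right hNc)

lemma LC.image [TopologicalSpace X] {C : Set X} (h : LC C) (g : X ≃ₜ X) : LC (g '' C) := fun x => by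
  obtain ⟨N, hN, hNc, hCN⟩ := h (g.symm x)
  refine ⟨g '' N, ?_, g.isClosed_image.2 hNc, ?_⟩
  · rw [g.image_eq_preimage_symm]
    exact g.symm.continuous.continuousAt.preimage_mem_nhds hN
  · rw [← image_inter g.injective]
    exact hCN.image g.continuous

/-- A family of compacta `K α` with open neighbourhoods `W α` forming a discrete family. The index
type is the space itself, with empty sets for superfluous indices. -/
structure DiscreteFam [TopologicalSpace X] (K W : X → Set X) : Prop where
  compact : ∀ α, IsCompact (K α)
  isOpen : ∀ α, IsOpen (W α)
  subset : ∀ α, K α ⊆ W α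
  discrete : ∀ x, ∃ N ∈ 𝓝 x, ∀ α β, (W α ∩ N).Nonempty → (W β ∩ N).Nonempty → α = β

lemma DiscreteFam.eq_of_mem [TopologicalSpace X] {K W : X → Set X} (h : DiscreteFam K W)
    {x α β : X} (hα : x ∈ W α) (hβ : x ∈ W β) : α = β := by
  obtain ⟨N, hN, hd⟩ := h.discrete x
  exact hd α β ⟨x, hα, mem_of_mem_nhds hN⟩ ⟨x, hβ, mem_of_mem_nhds hN⟩

lemma DiscreteFam.image [TopologicalSpace X] {K W : X → Set X} (h : DiscreteFam K W) (g : X ≃ₜ X) :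
    DiscreteFam (fun α => g '' K α) (fun α => g '' W α) where
  compact α := (h.compact α).image g.continuous
  isOpen α := g.isOpen_image.2 (h.isOpen α)
  subset α := image_mono (h.subset α)
  discrete x := by
    obtain ⟨N, hN, hd⟩ := h.discrete (g.symm x)
    refine ⟨g '' N, ?_, fun α β hα hβ => hd α β ?_ ?_⟩
    · rw [g.image_eq_preimage_symm]
      exact g.symm.continuous.continuousAt.preimage_mem_nhds hN
    · rw [← image_inter g.injective] at hα
      exact hα.of_image
    · rw [← image_inter g.injective] at hβ
      exact hβ.of_image

lemma DiscreteFam.lc [TopologicalSpace X] [RegularSpace X] {K W : X → Set X}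
    (h : DiscreteFam K W) : LC (⋃ α, K α) := fun x => by
  obtain ⟨N, hN, hd⟩ := h.discrete x
  obtain ⟨N', hN', hNc', hNN'⟩ := exists_mem_nhds_isClosed_subset hN
  refine ⟨N', hN', hNc', ?_⟩
  by_cases hne : ∃ α, (K α ∩ N').Nonempty
  · obtain ⟨α, hα⟩ := hne
    have e : (⋃ α, K α) ∩ N' = K α ∩ N' := by
      refine Subset.antisymm ?_ (inter_subset_inter_left _ (subset_iUnion K α))
      rintro y ⟨hy, hyN⟩
      obtain ⟨β, hβ⟩ := mem_iUnion.1 hy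
      have : β = α := hd β α ⟨y, h.subset β hβ, hNN' hyN⟩
        (hα.mono (inter_subset_inter (h.subset α) hNN'))
      exact ⟨this ▸ hβ, hyN⟩
    rw [e]
    exact (h.compact α).inter_right hNc'
  · have e : (⋃ α, K α) ∩ N' = ∅ := by
      rw [eq_empty_iff_forall_notMem]
      rintro y ⟨hy, hyN⟩
      obtain ⟨β, hβ⟩ := mem_iUnion.1 hy
      exact hne ⟨β, y, hβ, hyN⟩
    rw [e]
    exact isCompact_empty

/-- `A` is the union of a discrete family of compacta. -/
def DC [TopologicalSpace X] (A : Set X) : Prop :=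
  ∃ K W : X → Set X, DiscreteFam K W ∧ A = ⋃ α, K α

variable [MetricSpace X]

/-- A locally compact subspace of a metric space is a countable union of unions of discrete families
of compacta: this is the argument of Stone's paracompactness theorem. -/
lemma exists_dc_of_locallyCompact (F : Set X) [LocallyCompactSpace F] :
    ∃ A : ℕ → Set X, (∀ m, DC (A m)) ∧ F = ⋃ m, A m := by
  classical
  have h0 : ∀ x : X, ∃ N O : Set X, x ∈ F →
      IsCompact N ∧ N ⊆ F ∧ IsOpen O ∧ x ∈ O ∧ O ∩ F ⊆ N := by
    intro x
    by_cases hx : x ∈ F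
    · obtain ⟨N, hN, hNx⟩ := exists_compact_mem_nhds (⟨x, hx⟩ : F)
      rw [nhds_subtype_eq_comap, mem_comap] at hNx
      obtain ⟨U, hU, hUN⟩ := hNx
      obtain ⟨O, hOU, hO, hxO⟩ := mem_nhds_iff.1 hU
      refine ⟨(↑) '' N, O, fun _ => ⟨hN.image continuous_subtype_val, ?_, hO, hxO, ?_⟩⟩
      · rintro _ ⟨y, -, rfl⟩; exact y.2
      · rintro y ⟨hy, hyF⟩
        exact ⟨⟨y, hyF⟩, hUN (hOU hy), rfl⟩
    · exact ⟨∅, ∅, fun h => absurd h hx⟩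
  choose N O hNO using h0
  let K : ℕ → X → Set X := fun m x => {z | x ∈ F ∧ z ∈ F ∧ Metric.ball z ((1 / 2) ^ m) ⊆ O x ∧
    ∀ y ∈ F, WellOrderingRel y x → z ∉ O y}
  have hpow : ∀ m : ℕ, (0:ℝ) < (1 / 2) ^ m := fun m => by positivity
  have hKO : ∀ m x z, z ∈ K m x → z ∈ O x := fun m x z hz =>
    hz.2.2.1 (Metric.mem_ball_self (hpow m))
  have hcomp : ∀ m x, IsCompact (K m x) := by
    intro m x
    by_cases hx : x ∈ F
    · obtain ⟨h1, h2, h3, h4, h5⟩ := hNO x hx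
      have e : K m x = N x ∩ ({z | Metric.ball z ((1 / 2) ^ m) ⊆ O x} ∩
          ⋂ y ∈ F, ⋂ (_ : WellOrderingRel y x), (O y)ᶜ) := by
        ext z
        simp only [mem_inter_iff, mem_iInter, mem_compl_iff, mem_ofPred_eq]
        constructor
        · intro hz
          exact ⟨h5 ⟨hKO m x z hz, hz.2.1⟩, hz.2.2.1, hz.2.2.2⟩
        · rintro ⟨ha, hb, hc⟩
          exact ⟨hx, h2 ha, hb, hc⟩
      rw [e]
      refine h1.inter_right (IsClosed.inter ?_ ?_)
      · have e2 : {z | Metric.ball z ((1 / 2) ^ m) ⊆ O x} =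
            ⋂ w ∈ (O x)ᶜ, {z | (1 / 2 : ℝ) ^ m ≤ dist w z} := by
          ext z
          simp only [mem_iInter, mem_ofPred_eq, mem_compl_iff]
          constructor
          · intro h w hw
            by_contra hlt
            exact hw (h (not_le.1 hlt))
          · intro h w hw
            by_contra hwO
            exact absurd (h w hwO) (not_le.2 hw)
        rw [e2]
        exact isClosed_biInter fun w _ => isClosed_le continuous_const (by fun_prop)
      · exact isClosed_biInter fun y hy => isClosed_iInter fun _ =>
          (hNO y hy).2.2.1.isClosed_compl
    · have e : K m x = ∅ := by
        rw [eq_empty_iff_forall_notMem]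
        exact fun z hz => hx hz.1
      rw [e]; exact isCompact_empty
  have hsep : ∀ m x x' z z', z ∈ K m x → z' ∈ K m x' → dist z z' < (1 / 2) ^ m → x = x' := by
    have aux : ∀ m x x' z z', z ∈ K m x → z' ∈ K m x' → dist z z' < (1 / 2) ^ m →
        ¬ WellOrderingRel x x' := by
      intro m x x' z z' hz hz' hd hlt
      exact hz'.2.2.2 x hz.1 hlt (hz.2.2.1 (by rwa [Metric.mem_ball, dist_comm]))
    intro m x x' z z' hz hz' hd
    rcases trichotomous_of WellOrderingRel x x' with h | h | h
    · exact absurd h (aux m x x' z z' hz hz' hd)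
    · exact h
    · exact absurd h (aux m x' x z' z hz' hz (by rwa [dist_comm]))
  refine ⟨fun m => ⋃ x, K m x, fun m => ⟨K m, fun x => Metric.thickening ((1 / 2) ^ m / 4) (K m x),
    ⟨hcomp m, fun x => Metric.isOpen_thickening, fun x => Metric.self_subset_thickening
      (by have := hpow m; positivity) _, fun w => ?_⟩, rfl⟩, ?_⟩
  · have hm := hpow m
    refine ⟨Metric.ball w ((1 / 2) ^ m / 8), Metric.ball_mem_nhds _ (by positivity), ?_⟩
    rintro x x' ⟨a, ha, haw⟩ ⟨b, hb, hbw⟩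
    obtain ⟨z, hz, haz⟩ := Metric.mem_thickening_iff.1 ha
    obtain ⟨z', hz', hbz⟩ := Metric.mem_thickening_iff.1 hb
    rw [Metric.mem_ball] at haw hbw
    refine hsep m x x' z z' hz hz' ?_
    have h1 := dist_triangle4 z a b z'
    have h2 := dist_triangle_right a b w
    rw [dist_comm z a] at h1
    linarith
  · refine Subset.antisymm (fun z hz => ?_) ?_
    · have hne : {x | x ∈ F ∧ z ∈ O x}.Nonempty := ⟨z, hz, (hNO z hz).2.2.2.1⟩
      let x := WellFounded.min (IsWellFounded.wf (r := (WellOrderingRel : X → X → Prop))) _ hne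
      have hx : x ∈ F ∧ z ∈ O x := WellFounded.min_mem _ _ hne
      obtain ⟨ε, hε, hεO⟩ := Metric.isOpen_iff.1 (hNO x hx.1).2.2.1 z hx.2
      obtain ⟨m, hm⟩ := exists_pow_lt_of_lt_one hε (show (1 / 2 : ℝ) < 1 by norm_num)
      refine mem_iUnion₂.2 ⟨m, x, hx.1, hz, (Metric.ball_subset_ball hm.le).trans hεO,
        fun y hy hlt hzy => ?_⟩
      exact WellFounded.not_lt_min _ _ (show y ∈ {x | x ∈ F ∧ z ∈ O x} from ⟨hy, hzy⟩) hlt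
    · exact iUnion₂_subset fun m x z hz => hz.2.1

lemma exists_dc_union {Y : Set X} {F : ℕ → Set X} (hY : Y = ⋃ n, F n)
    (hF : ∀ n, LocallyCompactSpace (F n)) :
    ∃ A : ℕ → Set X, (∀ m, DC (A m)) ∧ Y = ⋃ m, A m := by
  choose A hA hFA using fun n => exists_dc_of_locallyCompact (F n)
  refine ⟨fun m => A m.unpair.1 m.unpair.2, fun m => hA _ _, ?_⟩
  rw [hY]
  ext x
  simp only [mem_iUnion]
  constructor
  · rintro ⟨n, hn⟩
    rw [hFA n] at hn
    obtain ⟨m, hm⟩ := mem_iUnion.1 hn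
    exact ⟨Nat.pair n m, by simpa using hm⟩
  · rintro ⟨m, hm⟩
    exact ⟨m.unpair.1, by rw [hFA]; exact mem_iUnion.2 ⟨_, hm⟩⟩

/-- A set whose traces near all points are compact has compact trace on a neighbourhood of a
compact set. -/
lemma LC.exists_cthickening {C K : Set X} (hC : LC C) (hK : IsCompact K) :
    ∃ r > 0, ∀ s ≤ r, IsCompact (C ∩ Metric.cthickening s K) := by
  choose N hN hNc hCN using hC
  obtain ⟨t, -, ht⟩ := hK.elim_nhds_subcover (fun x => interior (N x))
    (fun x _ => interior_mem_nhds.2 (hN x))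
  obtain ⟨r, hr, hrK⟩ := hK.exists_cthickening_subset_open
    (isOpen_biUnion fun x _ => isOpen_interior) ht
  refine ⟨r, hr, fun s hs => ?_⟩
  have hsK := (Metric.cthickening_mono hs K).trans hrK
  have e : C ∩ Metric.cthickening s K =
      (⋃ x ∈ t, C ∩ N x) ∩ Metric.cthickening s K := by
    ext y
    simp only [mem_inter_iff, mem_iUnion]
    constructor
    · rintro ⟨hyC, hy⟩
      obtain ⟨x, hx, hyx⟩ := mem_iUnion₂.1 (hsK hy)
      exact ⟨⟨x, hx, hyC, interior_subset hyx⟩, hy⟩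
    · rintro ⟨⟨x, hx, hyC, _⟩, hy⟩
      exact ⟨hyC, hy⟩
  rw [e]
  exact (t.isCompact_biUnion fun x _ => hCN x).inter_right Metric.isClosed_cthickening

end Decomp
end West

namespace West
open Filter

/-! ### Pushing locally compact sets into an absorbing set -/

section Push

/-- Absorption of compacta in a metric space, with closeness measured by the metric. -/
def Absorbs {E : Type*} [MetricSpace E] (Y : Set E) : Prop :=
  ∀ K B : Set E, IsCompact K → IsCompact B → B ⊆ K ∩ Y → ∀ ε > 0, ∃ h : K → E,
    Continuous h ∧ Function.Injective h ∧ (∀ k, h k ∈ Y) ∧ (∀ k : K, k.1 ∈ B → h k = k) ∧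
      ∀ k : K, dist (h k) k ≤ ε

variable {ι : Type*} [Infinite ι]

/-- A compact set can be pushed into an absorbing set `Y` by a small homeomorphism with support near
the compactum, without moving a given locally compact part of `Y`. -/
lemma exists_push_one {Y C K W : Set (L2 ι ℝ)} (hY : Absorbs Y) (hC : LC C) (hCY : C ⊆ Y)
    (hK : IsCompact K) (hW : IsOpen W) (hKW : K ⊆ W) {R : Set (L2 ι ℝ × L2 ι ℝ)} (hR : IsOpen R)
    (hd : ∀ x, (x, x) ∈ R) :
    ∃ g : L2 ι ℝ ≃ₜ L2 ι ℝ, (∀ x ∈ C, g x = x) ∧ (∀ x ∈ K, g x ∈ Y) ∧ (∀ x ∉ W, g x = x) ∧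
      ∀ x, (x, g x) ∈ R := by
  rcases K.eq_empty_or_nonempty with rfl | hne
  · exact ⟨Homeomorph.refl _, fun _ _ => rfl, fun _ h => h.elim, fun _ _ => rfl, hd⟩
  obtain ⟨r, hr, hrC⟩ := hC.exists_cthickening hK
  obtain ⟨s, hs, hsW⟩ := hK.exists_cthickening_subset_open hW hKW
  obtain ⟨t, ht, htR⟩ := (hK.image (show Continuous fun x : L2 ι ℝ => (x, x) by fun_prop)
    ).exists_thickening_subset_open hR (by rintro _ ⟨x, -, rfl⟩; exact hd x)
  obtain ⟨δ, hδ, hδr, hδs, hδt⟩ : ∃ δ > 0, 4 * δ ≤ r ∧ 4 * δ ≤ s ∧ 5 * δ ≤ t := by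
    refine ⟨min r (min s t) / 5, by positivity, ?_, ?_, ?_⟩ <;>
    · have h1 := min_le_left r (min s t)
      have h2 := min_le_right r (min s t)
      have h3 := min_le_left s t
      have h4 := min_le_right s t
      linarith
  set B : Set (L2 ι ℝ) := C ∩ Metric.cthickening (4 * δ) K with hBdef
  have hB : IsCompact B := hrC _ hδr
  obtain ⟨h, hc, hi, hv, hb, hn⟩ := hY (K ∪ B) B (hK.union hB) hB
    (fun x hx => ⟨Or.inr hx, hCY hx.1⟩) (δ / 12) (by positivity)
  obtain ⟨g, g1, g2, g3, g4⟩ := unknot hK hB hc hi hb (η := δ / 12) (δ := δ) (by positivity)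
    (by linarith) (fun d => by rw [← dist_eq_norm]; exact hn d)
  have hfar : ∀ x, x ∉ Metric.cthickening (4 * δ) K → g x = x := fun x hx => by
    refine g3 x ?_
    rw [Metric.cthickening_eq_preimage_infEDist] at hx
    by_contra hlt
    apply hx
    simp only [mem_preimage, mem_Iic]
    exact (ENNReal.le_ofReal_iff_toReal_le (Metric.infEDist_ne_top hne) (by positivity)).2
      (not_le.1 hlt).le
  refine ⟨g, fun x hx => ?_, fun x hx => ?_, fun x hx => ?_, fun x => ?_⟩
  · by_cases hxK : x ∈ Metric.cthickening (4 * δ) K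
    · exact g2 x ⟨hx, hxK⟩
    · exact hfar x hxK
  · rw [g1 ⟨x, Or.inl hx⟩ hx]; exact hv _
  · exact hfar x fun h => hx (hsW (Metric.cthickening_mono hδs K h))
  · by_cases hxK : 4 * δ ≤ Metric.infDist x K
    · rw [g3 x hxK]; exact hd x
    · obtain ⟨k, hk, hxk⟩ := (Metric.infDist_lt_iff hne).1 (not_le.1 hxK)
      refine htR (Metric.mem_thickening_iff.2 ⟨(k, k), ⟨k, hk, rfl⟩, ?_⟩)
      rw [Prod.dist_eq, max_lt_iff]
      refine ⟨by simp only; linarith, ?_⟩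
      have h1 := dist_triangle (g x) x k
      have h2 := g4 x
      rw [← dist_eq_norm] at h2
      simp only
      linarith

/-- The map acting as `g α` on the member `W α` of a disjoint family and as the identity
elsewhere. -/
def glueFun {X : Type*} (W : X → Set X) (g : X → X → X) (x : X) : X :=
  open Classical in if h : ∃ α, x ∈ W α then g h.choose x else x

lemma glueFun_of_mem {X : Type*} [TopologicalSpace X] {K W : X → Set X} (hf : DiscreteFam K W)
    {g : X → X → X} {x α : X} (hx : x ∈ W α) : glueFun W g x = g α x := by
  have h : ∃ α, x ∈ W α := ⟨α, hx⟩
  rw [glueFun, dif_pos h, hf.eq_of_mem h.choose_spec hx]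

lemma glueFun_of_notMem {X : Type*} {W : X → Set X}
    {g : X → X → X} {x : X} (hx : ∀ α, x ∉ W α) : glueFun W g x = x := by
  rw [glueFun, dif_neg (not_exists.2 hx)]

lemma glueFun_continuous {X : Type*} [TopologicalSpace X] {K W : X → Set X} (hf : DiscreteFam K W)
    {g : X → X → X} (hg : ∀ α, Continuous (g α)) (hid : ∀ α, ∀ x ∉ W α, g α x = x) :
    Continuous (glueFun W g) := by
  rw [continuous_iff_continuousAt]
  intro x
  obtain ⟨N, hN, hd⟩ := hf.discrete x
  by_cases hne : ∃ α, (W α ∩ N).Nonempty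
  · obtain ⟨α, hα⟩ := hne
    refine (hg α).continuousAt.congr ?_
    filter_upwards [hN] with y hy
    by_cases hyα : y ∈ W α
    · exact (glueFun_of_mem hf hyα).symm
    · rw [hid α y hyα, glueFun_of_notMem]
      intro β hβ
      exact hyα (hd β α ⟨y, hβ, hy⟩ hα ▸ hβ)
  · refine continuousAt_id.congr ?_
    filter_upwards [hN] with y hy
    exact (glueFun_of_notMem fun β hβ => hne ⟨β, y, hβ, hy⟩).symm

/-- Homeomorphisms with supports in a discrete family of sets act simultaneously. -/
def glueH {X : Type*} [TopologicalSpace X] {K W : X → Set X} (hf : DiscreteFam K W)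
    (g : X → X ≃ₜ X) (hid : ∀ α, ∀ x ∉ W α, g α x = x) : X ≃ₜ X :=
  have hid' : ∀ α, ∀ x ∉ W α, (g α).symm x = x := fun α x hx => by
    rw [Homeomorph.symm_apply_eq, hid α x hx]
  have hW : ∀ α, ∀ x ∈ W α, g α x ∈ W α := fun α x hx => by
    by_contra h
    have := hid α _ h
    exact h (((g α).injective this).symm ▸ hx)
  have hW' : ∀ α, ∀ x ∈ W α, (g α).symm x ∈ W α := fun α x hx => by
    by_contra h
    have := hid α _ h
    rw [Homeomorph.apply_symm_apply] at this
    exact h (this ▸ hx)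
  { toFun := glueFun W fun α => g α
    invFun := glueFun W fun α => (g α).symm
    left_inv := fun x => by
      by_cases h : ∃ α, x ∈ W α
      · obtain ⟨α, hα⟩ := h
        rw [glueFun_of_mem hf hα, glueFun_of_mem hf (hW α x hα), Homeomorph.symm_apply_apply]
      · rw [glueFun_of_notMem (not_exists.1 h), glueFun_of_notMem (not_exists.1 h)]
    right_inv := fun x => by
      by_cases h : ∃ α, x ∈ W α
      · obtain ⟨α, hα⟩ := h
        rw [glueFun_of_mem hf hα, glueFun_of_mem hf (hW' α x hα), Homeomorph.apply_symm_apply]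
      · rw [glueFun_of_notMem (not_exists.1 h), glueFun_of_notMem (not_exists.1 h)]
    continuous_toFun := glueFun_continuous hf (fun α => (g α).continuous) hid
    continuous_invFun := glueFun_continuous hf (fun α => (g α).symm.continuous) hid' }

lemma glueH_apply {X : Type*} [TopologicalSpace X] {K W : X → Set X} (hf : DiscreteFam K W)
    (g : X → X ≃ₜ X) (hid : ∀ α, ∀ x ∉ W α, g α x = x) (x : X) :
    glueH hf g hid x = glueFun W (fun α => g α) x := rfl

lemma exists_push {Y C : Set (L2 ι ℝ)} {K W : L2 ι ℝ → Set (L2 ι ℝ)} (hY : Absorbs Y) (hC : LC C)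
    (hCY : C ⊆ Y) (hf : DiscreteFam K W) {R : Set (L2 ι ℝ × L2 ι ℝ)} (hR : IsOpen R)
    (hd : ∀ x, (x, x) ∈ R) :
    ∃ g : L2 ι ℝ ≃ₜ L2 ι ℝ, (∀ x ∈ C, g x = x) ∧ (∀ α, ∀ x ∈ K α, g x ∈ Y) ∧
      ∀ x, (x, g x) ∈ R := by
  choose g g1 g2 g3 g4 using fun α =>
    exists_push_one hY hC hCY (hf.compact α) (hf.isOpen α) (hf.subset α) hR hd
  have key : ∀ x, glueH hf g g3 x = x ∨ ∃ α, glueH hf g g3 x = g α x := fun x => by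
    by_cases h : ∃ α, x ∈ W α
    · obtain ⟨α, hα⟩ := h
      exact Or.inr ⟨α, by rw [glueH_apply, glueFun_of_mem hf hα]⟩
    · exact Or.inl (by rw [glueH_apply, glueFun_of_notMem (not_exists.1 h)])
  refine ⟨glueH hf g g3, fun x hx => ?_, fun α x hx => ?_, fun x => ?_⟩
  · rcases key x with h | ⟨α, h⟩
    · exact h
    · rw [h, g1 α x hx]
  · rw [glueH_apply, glueFun_of_mem hf (hf.subset α hx)]
    exact g2 α x hx
  · rcases key x with h | ⟨α, h⟩
    · rw [h]; exact hd x
    · rw [h]; exact g4 α x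

end Push

/-! ### Uniqueness of absorbing sets by a back-and-forth construction -/

section Unique

/-- A sequence of homeomorphisms that is uniformly Cauchy together with the inverses converges to a
homeomorphism. -/
lemma exists_limit_homeo {E : Type*} [MetricSpace E] [CompleteSpace E] (H : ℕ → E ≃ₜ E)
    (h1 : ∀ n x, dist (H n x) (H (n + 1) x) ≤ 2 / 2 / 2 ^ n)
    (h2 : ∀ n x, dist ((H n).symm x) ((H (n + 1)).symm x) ≤ 2 / 2 / 2 ^ n) :
    ∃ F : E ≃ₜ E, (∀ x, Tendsto (fun n => H n x) atTop (𝓝 (F x))) := by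
  have main : ∀ H : ℕ → E → E, (∀ n, Continuous (H n)) →
      (∀ n x, dist (H n x) (H (n + 1) x) ≤ 2 / 2 / 2 ^ n) →
      ∃ F : E → E, Continuous F ∧ TendstoUniformly H F atTop := by
    intro H hc h
    choose F hF using fun x => cauchySeq_tendsto_of_complete (cauchySeq_of_le_geometric_two (h · x))
    have hu : TendstoUniformly H F atTop := by
      rw [Metric.tendstoUniformly_iff]
      intro ε hε
      have : Tendsto (fun n : ℕ => (2:ℝ) / 2 ^ n) atTop (𝓝 0) := by
        have := (tendsto_pow_atTop_nhds_zero_of_lt_one (r := (1 / 2 : ℝ)) (by norm_num)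
          (by norm_num)).const_mul 2
        simpa [div_eq_mul_inv] using this
      filter_upwards [this.eventually (gt_mem_nhds hε)] with n hn x
      rw [dist_comm]
      exact (dist_le_of_le_geometric_two_of_tendsto (h · x) (hF x) n).trans_lt hn
    exact ⟨F, hu.continuous (Eventually.of_forall hc).frequently, hu⟩
  obtain ⟨F, hFc, hF⟩ := main (fun n => H n) (fun n => (H n).continuous) h1
  obtain ⟨G, hGc, hG⟩ := main (fun n => (H n).symm) (fun n => (H n).symm.continuous) h2
  have hl : ∀ x, G (F x) = x := fun x => by
    have := hG.tendsto_comp (x := F x) hGc.continuousAt (hF.tendsto_at x)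
    simp only [Homeomorph.symm_apply_apply] at this
    exact tendsto_nhds_unique this tendsto_const_nhds
  have hr : ∀ x, F (G x) = x := fun x => by
    have := hF.tendsto_comp (x := G x) hFc.continuousAt (hG.tendsto_at x)
    simp only [Homeomorph.apply_symm_apply] at this
    exact tendsto_nhds_unique this tendsto_const_nhds
  exact ⟨⟨⟨F, G, hl, hr⟩, hFc, hGc⟩, fun x => hF.tendsto_at x⟩

variable {ι : Type*} [Infinite ι]

/-- A homeomorphism `H` matching the locally compact part `C` of `Y₁` into `Y₂` is changed slightly,
off `C`, so as to match `C ∪ A` into `Y₂`. -/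
lemma exists_forward {Y₂ C A : Set (L2 ι ℝ)} (hY₂ : Absorbs Y₂) (H : L2 ι ℝ ≃ₜ L2 ι ℝ)
    (hC : LC C) (hH : ∀ x ∈ C, H x ∈ Y₂) (hA : DC A) {ε : ℝ}
    (hε : 0 < ε) :
    ∃ H' : L2 ι ℝ ≃ₜ L2 ι ℝ, (∀ x ∈ C, H' x = H x) ∧ (∀ x ∈ C ∪ A, H' x ∈ Y₂) ∧
      LC (C ∪ A) ∧ (∀ x, dist (H x) (H' x) ≤ ε) ∧ ∀ x, dist (H.symm x) (H'.symm x) ≤ ε := by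
  obtain ⟨K, W, hf, rfl⟩ := hA
  obtain ⟨g, g1, g2, g3⟩ := exists_push hY₂ (hC.image H) (by rintro _ ⟨x, hx, rfl⟩; exact hH x hx)
    (hf.image H) (R := {p | dist p.1 p.2 < ε ∧ dist (H.symm p.1) (H.symm p.2) < ε})
    (IsOpen.and (isOpen_lt (by fun_prop) (by fun_prop)) (isOpen_lt (by fun_prop) (by fun_prop)))
    (fun x => ⟨by simpa using hε, by simpa using hε⟩)
  refine ⟨H.trans g, fun x hx => g1 _ ⟨x, hx, rfl⟩, ?_, hC.union hf.lc, fun x => (g3 (H x)).1.le,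
    fun x => ?_⟩
  · rintro x (hx | hx)
    · show g (H x) ∈ Y₂
      rw [g1 _ ⟨x, hx, rfl⟩]; exact hH x hx
    · obtain ⟨α, hα⟩ := mem_iUnion.1 hx
      exact g2 α _ ⟨x, hα, rfl⟩
  · have := (g3 (g.symm x)).2.le
    rw [Homeomorph.apply_symm_apply, dist_comm] at this
    exact this

/-- Two absorbing sets that are countable unions of unions of discrete families of compacta are
equivalent under a homeomorphism of the Hilbert space. -/
theorem exists_homeo_of_absorbs {Y₁ Y₂ : Set (L2 ι ℝ)} (h₁ : Absorbs Y₁) (h₂ : Absorbs Y₂)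
    {A₁ A₂ : ℕ → Set (L2 ι ℝ)} (hA₁ : ∀ n, DC (A₁ n)) (hA₂ : ∀ n, DC (A₂ n))
    (e₁ : Y₁ = ⋃ n, A₁ n) (e₂ : Y₂ = ⋃ n, A₂ n) : ∃ F : L2 ι ℝ ≃ₜ L2 ι ℝ, F '' Y₁ = Y₂ := by
  let S := {p : (L2 ι ℝ ≃ₜ L2 ι ℝ) × Set (L2 ι ℝ) // LC p.2 ∧ p.2 ⊆ Y₁ ∧ ∀ x ∈ p.2, p.1 x ∈ Y₂}
  have step : ∀ (n : ℕ) (s : S), ∃ s' : S, s.1.2 ⊆ s'.1.2 ∧ (∀ x ∈ s.1.2, s'.1.1 x = s.1.1 x) ∧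
      A₁ n ⊆ s'.1.2 ∧ A₂ n ⊆ s'.1.1 '' s'.1.2 ∧
      (∀ x, dist (s.1.1 x) (s'.1.1 x) ≤ 2 / 2 / 2 ^ n) ∧
      ∀ x, dist (s.1.1.symm x) (s'.1.1.symm x) ≤ 2 / 2 / 2 ^ n := by
    rintro n ⟨⟨H, C⟩, hC, hCY, hH⟩
    have hε : (0:ℝ) < 1 / 2 / 2 ^ n := by positivity
    have hεε : (2:ℝ) / 2 / 2 ^ n = 1 / 2 / 2 ^ n + 1 / 2 / 2 ^ n := by ring
    obtain ⟨H', a1, a2, a3, a4, a5⟩ := exists_forward h₂ H hC hH (hA₁ n) hε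
    have hCY' : C ∪ A₁ n ⊆ Y₁ := union_subset hCY (e₁ ▸ subset_iUnion A₁ n)
    -- the backward half is the forward step for the inverse homeomorphism
    obtain ⟨J, b1, b2, b3, b4, b5⟩ := exists_forward h₁ H'.symm (a3.image H')
      (by rintro _ ⟨x, hx, rfl⟩; simpa using hCY' hx) (hA₂ n) hε
    have hJ : ∀ x ∈ C ∪ A₁ n, J.symm x = H' x := fun x hx => by
      rw [Homeomorph.symm_apply_eq, b1 _ ⟨x, hx, rfl⟩, Homeomorph.symm_apply_apply]
    have hsub : C ∪ A₁ n ⊆ J '' (H' '' (C ∪ A₁ n) ∪ A₂ n) := fun x hx =>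
      ⟨H' x, Or.inl ⟨x, hx, rfl⟩, by rw [← hJ x hx, Homeomorph.apply_symm_apply]⟩
    refine ⟨⟨(J.symm, J '' (H' '' (C ∪ A₁ n) ∪ A₂ n)), b3.image J, ?_, ?_⟩,
      subset_union_left.trans hsub, fun x hx => ?_, subset_union_right.trans hsub, ?_, fun x => ?_,
      fun x => ?_⟩
    · rintro _ ⟨x, hx, rfl⟩; exact b2 x hx
    · rintro _ ⟨x, hx, rfl⟩
      show J.symm (J x) ∈ Y₂
      rw [Homeomorph.symm_apply_apply]
      rcases hx with ⟨y, hy, rfl⟩ | hx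
      · exact a2 y hy
      · rw [e₂]; exact mem_iUnion.2 ⟨n, hx⟩
    · show J.symm x = H x
      rw [hJ x (Or.inl hx), a1 x hx]
    · intro y hy
      exact ⟨J y, ⟨y, Or.inr hy, rfl⟩, J.symm_apply_apply y⟩
    · rw [hεε]
      exact (dist_triangle _ _ _).trans (add_le_add (a4 x) (b5 x))
    · rw [hεε]
      exact (dist_triangle _ _ _).trans (add_le_add (a5 x) (b4 x))
  choose nxt n1 n2 n3 n4 n5 n6 using step
  let s : ℕ → S := fun n => Nat.rec ⟨(Homeomorph.refl _, ∅), LC.empty, empty_subset _,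
    fun x hx => hx.elim⟩ (fun n s => nxt n s) n
  have hs : ∀ n, s (n + 1) = nxt n (s n) := fun n => rfl
  obtain ⟨F, hF⟩ := exists_limit_homeo (fun n => (s n).1.1) (fun n x => n5 n (s n) x)
    (fun n x => n6 n (s n) x)
  have hmono : ∀ n m, n ≤ m → (s n).1.2 ⊆ (s m).1.2 ∧ ∀ x ∈ (s n).1.2, (s m).1.1 x = (s n).1.1 x := by
    intro n m hnm
    induction m, hnm using Nat.le_induction with
    | base => exact ⟨Subset.rfl, fun _ _ => rfl⟩
    | succ m _ ih =>
      refine ⟨ih.1.trans (n1 m (s m)), fun x hx => ?_⟩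
      rw [hs, n2 m (s m) x (ih.1 hx), ih.2 x hx]
  have hFs : ∀ n, ∀ x ∈ (s n).1.2, F x = (s n).1.1 x := fun n x hx => by
    refine tendsto_nhds_unique (hF x) (tendsto_const_nhds.congr' ?_)
    filter_upwards [eventually_ge_atTop n] with m hm
    exact ((hmono n m hm).2 x hx).symm
  refine ⟨F, Subset.antisymm ?_ ?_⟩
  · rintro _ ⟨x, hx, rfl⟩
    rw [e₁] at hx
    obtain ⟨n, hn⟩ := mem_iUnion.1 hx
    have hx' : x ∈ (s (n + 1)).1.2 := n3 n (s n) hn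
    rw [hFs (n + 1) x hx']
    exact (s (n + 1)).2.2.2 x hx'
  · intro y hy
    rw [e₂] at hy
    obtain ⟨n, hn⟩ := mem_iUnion.1 hy
    obtain ⟨x, hx, rfl⟩ := n4 n (s n) hn
    exact ⟨x, (s (n + 1)).2.2.1 hx, hFs (n + 1) x hx⟩

end Unique
end West

namespace West
open Filter

/-! ### The model pair -/

section Model

universe u
variable {ι : Type u}

/-- The points of `𝕀^ω × ℓ₂(ι)` whose second coordinate has exactly `n` nonzero coordinates. -/
def layer (ι : Type u) (n : ℕ) : Set (HilbertCube × L2 ι ℝ) :=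
  {p | {i | p.2 i ≠ 0}.Finite ∧ {i | p.2 i ≠ 0}.ncard = n}

lemma iUnion_layer : (univ : Set HilbertCube) ×ˢ l2fin ι = ⋃ n, layer ι n := by
  ext p
  simp only [mem_prod, mem_univ, true_and, mem_iUnion, layer, mem_ofPred_eq, l2fin]
  exact ⟨fun h => ⟨_, h, rfl⟩, fun ⟨_, h, _⟩ => h⟩

lemma isCompact_box (T : Finset ι) (x : L2 ι ℝ) (r : ℝ) :
    IsCompact {y : L2 ι ℝ | (∀ i ∈ T, |y i - x i| ≤ r) ∧ ∀ i ∉ T, y i = 0} := by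
  classical
  let φ : (ι → ℝ) → L2 ι ℝ := fun t => ∑ i ∈ T, lp.single 2 i (t i)
  have hφ : Continuous φ := continuous_finsetSum _ fun i _ =>
    (lp.isometry_single i).continuous.comp (continuous_apply i)
  have hφa : ∀ t j, φ t j = if j ∈ T then t j else 0 := by
    intro t j
    show (∑ i ∈ T, lp.single 2 i (t i) : L2 ι ℝ) j = _
    rw [lp.coeFn_sum, Finset.sum_apply]
    simp only [lp.single_apply, Pi.single_apply, Finset.sum_ite_eq]
  have e : {y : L2 ι ℝ | (∀ i ∈ T, |y i - x i| ≤ r) ∧ ∀ i ∉ T, y i = 0} =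
      φ '' (univ.pi fun i => Metric.closedBall (if i ∈ T then x i else 0) (max r 0)) ∩
        {y | ∀ i ∈ T, |y i - x i| ≤ r} := by
    ext y
    constructor
    · rintro ⟨h1, h2⟩
      refine ⟨⟨y, fun i _ => ?_, l2_ext fun j => ?_⟩, h1⟩
      · show y i ∈ Metric.closedBall (if i ∈ T then x i else 0) (max r 0)
        split_ifs with hi
        · rw [Metric.mem_closedBall, Real.dist_eq]; exact (h1 i hi).trans (le_max_left _ _)
        · rw [h2 i hi]; exact Metric.mem_closedBall_self (le_max_right _ _)
      · rw [hφa]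
        split_ifs with hj
        · rfl
        · exact (h2 j hj).symm
    · rintro ⟨⟨t, -, rfl⟩, h1⟩
      exact ⟨h1, fun i hi => by rw [hφa, if_neg hi]⟩
  rw [e]
  refine ((isCompact_univ_pi fun i => isCompact_closedBall _ _).image hφ).inter_right ?_
  simp only [ofPred_forall]
  exact isClosed_biInter fun i _ => isClosed_le
    (((l2_continuous_apply i).sub continuous_const).abs) continuous_const

lemma layer_locallyCompact (n : ℕ) : LocallyCompactSpace (layer ι n) := by
  classical
  suffices WeaklyLocallyCompactSpace (layer ι n) from inferInstance
  refine ⟨fun p => ?_⟩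
  obtain ⟨⟨q, x⟩, hfin, hcard⟩ := p
  simp only at hfin hcard
  set T := hfin.toFinset with hT
  have hmem : ∀ i, i ∈ T ↔ x i ≠ 0 := fun i => by simp [hT]
  obtain ⟨m, hm, hmT⟩ : ∃ m > 0, ∀ i ∈ T, m < |x i| := by
    rcases T.eq_empty_or_nonempty with h | h
    · exact ⟨1, one_pos, by simp [h]⟩
    · obtain ⟨j, hj, hmin⟩ := T.exists_min_image (fun i => |x i|) h
      have := abs_pos.2 ((hmem j).1 hj)
      exact ⟨|x j| / 2, by positivity, fun i hi => by have := hmin i hi; linarith⟩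
  have hsupp : ∀ y : L2 ι ℝ, (∀ i ∈ T, |y i - x i| ≤ m) → ∀ i ∈ T, y i ≠ 0 := by
    intro y hy i hi h0
    have h1 := hy i hi
    have h2 := hmT i hi
    rw [h0, zero_sub, abs_neg] at h1
    linarith
  set N : Set (HilbertCube × L2 ι ℝ) :=
    univ ×ˢ {y : L2 ι ℝ | (∀ i ∈ T, |y i - x i| ≤ m) ∧ ∀ i ∉ T, y i = 0} with hN
  have hNc : IsCompact N := isCompact_univ.prod (isCompact_box T x m)
  have hcardT : T.card = n := by rw [← hcard, ncard_eq_toFinset_card _ hfin]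
  have hNsub : N ⊆ layer ι n := by
    rintro ⟨q', y⟩ ⟨-, h1, h2⟩
    have e : {i | y i ≠ 0} = ↑T := by
      ext i
      refine ⟨fun h => by_contra fun h' => h (h2 i h'), fun h => hsupp y h1 i h⟩
    refine ⟨?_, ?_⟩
    · show {i | y i ≠ 0}.Finite
      rw [e]; exact T.finite_toSet
    · show {i | y i ≠ 0}.ncard = n
      rw [e, ncard_coe_finset, hcardT]
  refine ⟨(↑) ⁻¹' N, ?_, ?_⟩
  · rw [Subtype.isCompact_iff, Subtype.image_preimage_coe, inter_eq_right.2 hNsub]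
    exact hNc
  · have ho : IsOpen {p : HilbertCube × L2 ι ℝ | ∀ i ∈ T, |p.2 i - x i| < m} := by
      have := isOpen_biInter_finset (s := T)
        (f := fun i => {p : HilbertCube × L2 ι ℝ | |p.2 i - x i| < m}) fun i _ => isOpen_lt
        ((((l2_continuous_apply i).comp continuous_snd).sub continuous_const).abs) continuous_const
      convert this using 1
      ext p; simp
    refine mem_of_superset ((ho.preimage continuous_subtype_val).mem_nhds ?_) ?_
    · intro i _
      simpa using hm
    · rintro ⟨⟨q', y⟩, hf', hc'⟩ hy
      have h1 : ∀ i ∈ T, |y i - x i| ≤ m := fun i hi => (hy i hi).le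
      refine ⟨mem_univ _, h1, ?_⟩
      have hsub : T ⊆ hf'.toFinset := fun i hi => by
        simpa using hsupp y h1 i hi
      have heq := Finset.eq_of_subset_of_card_le hsub
        (by rw [hcardT, ← ncard_eq_toFinset_card _ hf', hc'])
      intro i hi
      rw [heq] at hi
      simpa using hi

/-- The vector whose coordinate at `c j` is `θⱼ(s)(1 - θⱼ₊₂(s))2⁻ʲ`; for `0 < s ≤ 1` some
coordinate attains the value `2⁻ʲ`, and only finitely many are nonzero. -/
lemma exists_mark {c : ℕ → ι} (hc : Function.Injective c) :
    ∃ v : ℝ → L2 ι ℝ, Continuous v ∧ v 0 = 0 ∧ (∀ s > 0, {i | v s i ≠ 0}.Finite) ∧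
      ∀ s, 0 < s → s ≤ 1 → ∃ j, v s (c j) = (1 / 2) ^ j := by
  let γ : ℝ → ℕ → ℝ := fun s j => theta j s * (1 - theta (j + 2) s) * (1 / 2) ^ j
  let f : ℝ → ι → ℝ := fun s => Function.extend c (γ s) 0
  let d : ι → ℝ := Function.extend c (fun j => (1 / 2) ^ j) 0
  have hγ : ∀ s j, |γ s j| ≤ (1 / 2) ^ j := fun s j => by
    have h1 := theta_nonneg j s
    have h2 := theta_le_one j s
    have h3 := theta_nonneg (j + 2) s
    have h4 := theta_le_one (j + 2) s
    have h5 : 0 ≤ theta j s * (1 - theta (j + 2) s) := mul_nonneg h1 (by linarith)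
    have h6 : theta j s * (1 - theta (j + 2) s) ≤ 1 := mul_le_one₀ h2 (by linarith) (by linarith)
    have h7 : (0:ℝ) < (1 / 2) ^ j := by positivity
    rw [abs_of_nonneg (mul_nonneg h5 h7.le)]
    exact mul_le_of_le_one_left h7.le h6
  have hfc : ∀ s j, f s (c j) = γ s j := fun s j => hc.extend_apply _ _ _
  have hf0 : ∀ s i, i ∉ range c → f s i = 0 := fun s i hi => Function.extend_apply' _ _ _ hi
  have hdc : ∀ j, d (c j) = (1 / 2) ^ j := fun j => hc.extend_apply _ _ _
  have hd0 : ∀ i, i ∉ range c → d i = 0 := fun i hi => Function.extend_apply' _ _ _ hi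
  have hfd : ∀ s i, ‖f s i‖ ≤ d i := fun s i => by
    by_cases hi : i ∈ range c
    · obtain ⟨j, rfl⟩ := hi
      rw [hfc, hdc]; exact hγ s j
    · rw [hf0 s i hi, hd0 i hi, norm_zero]
  have hds : Summable fun i => d i ^ 2 := by
    rw [← hc.summable_iff (fun i hi => by rw [hd0 i hi]; norm_num)]
    have := summable_eps 1
    simp only [one_mul] at this
    simpa only [Function.comp_def, hdc] using this
  have hfs : ∀ s, Summable fun i => ‖f s i‖ ^ 2 := fun s =>
    Summable.of_nonneg_of_le (fun _ => by positivity)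
      (fun i => pow_le_pow_left₀ (norm_nonneg _) (hfd s i) 2) hds
  refine ⟨fun s => l2mk (f s) (hfs s), dominated_continuous hds hfd fun i => ?_,
    l2_ext fun i => ?_, fun s hs => ?_, fun s hs hs1 => ?_⟩
  · simp only [l2mk_apply]
    by_cases hi : i ∈ range c
    · obtain ⟨j, rfl⟩ := hi
      simp only [hfc]
      exact ((theta_continuous j).mul (continuous_const.sub (theta_continuous (j + 2)))).mul
        continuous_const
    · simp only [hf0 _ i hi]; exact continuous_const
  · show f 0 i = 0
    by_cases hi : i ∈ range c
    · obtain ⟨j, rfl⟩ := hi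
      rw [hfc]
      show theta j 0 * (1 - theta (j + 2) 0) * (1 / 2) ^ j = 0
      rw [theta_eq_one (k := j + 2) (by norm_num)]; ring
    · exact hf0 _ i hi
  · obtain ⟨N, hN⟩ := exists_pow_mul_ge hs 2
    refine ((finite_lt_nat N).image c).subset fun i hi => ?_
    by_cases hir : i ∈ range c
    · obtain ⟨j, rfl⟩ := hir
      refine ⟨j, by_contra fun h => hi ?_, rfl⟩
      show f s (c j) = 0
      rw [hfc]
      show theta j s * _ * _ = 0
      rw [theta_eq_zero (hN j (not_lt.1 h))]; ring
    · exact absurd (hf0 s i hir) hi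
  · obtain ⟨j, h1, h2⟩ := exists_nat_pow_near (one_le_inv_iff₀.2 ⟨hs, hs1⟩)
      (show (1:ℝ) < 2 by norm_num)
    refine ⟨j, ?_⟩
    show f s (c j) = _
    have h3 : (2:ℝ) ^ j * s ≤ 1 := by
      calc (2:ℝ) ^ j * s ≤ s⁻¹ * s := by gcongr
        _ = 1 := inv_mul_cancel₀ hs.ne'
    have h4 : 1 ≤ (2:ℝ) ^ (j + 1) * s := by
      calc 1 = s⁻¹ * s := (inv_mul_cancel₀ hs.ne').symm
        _ ≤ _ := by gcongr
    rw [hfc]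
    show theta j s * (1 - theta (j + 2) s) * (1 / 2) ^ j = _
    rw [theta_eq_one h3, theta_eq_zero (k := j + 2) (by rw [pow_succ]; linarith)]
    ring

/-- Cutting off coordinates: at parameter `s` the coordinate `i` is multiplied by `θ_{e i}(s)`. -/
lemma exists_cutoff (e : ι → ℕ) :
    ∃ T : L2 ι ℝ × ℝ → L2 ι ℝ, Continuous T ∧ ∀ x s i, T (x, s) i = theta (e i) s * x i := by
  have hb : ∀ (x : L2 ι ℝ) s i, ‖theta (e i) s * x i‖ ≤ ‖x i‖ := fun x s i => by
    rw [norm_mul, Real.norm_of_nonneg (theta_nonneg _ _)]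
    exact mul_le_of_le_one_left (norm_nonneg _) (theta_le_one _ _)
  have hs : ∀ (p : L2 ι ℝ × ℝ), Summable fun i => ‖theta (e i) p.2 * p.1 i‖ ^ 2 := fun p =>
    Summable.of_nonneg_of_le (fun _ => by positivity)
      (fun i => pow_le_pow_left₀ (norm_nonneg _) (hb _ _ i) 2) (l2_summable p.1)
  refine ⟨fun p => l2mk _ (hs p), ?_, fun x s i => rfl⟩
  refine continuous_prod_of_continuous_lipschitzWith _ 1 (fun x => ?_) (fun s => ?_)
  · refine dominated_continuous (l2_summable x) (fun s i => hb x s i) fun i => ?_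
    simp only [l2mk_apply]
    exact (theta_continuous _).mul continuous_const
  · refine LipschitzWith.of_dist_le_mul fun x y => ?_
    rw [NNReal.coe_one, one_mul, dist_eq_norm, dist_eq_norm]
    refine le_of_sq_le_sq ?_ (norm_nonneg _)
    rw [l2_norm_sq, l2_norm_sq]
    refine Summable.tsum_le_tsum (fun i => ?_) (l2_summable _) (l2_summable _)
    refine pow_le_pow_left₀ (norm_nonneg _) ?_ 2
    have h1 := hb (x - y) s i
    simp only [lp.coeFn_sub, Pi.sub_apply, l2mk_apply] at h1 ⊢
    rwa [mul_sub] at h1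

end Model
end West

namespace West
open Filter

/-! ### Absorption of compacta by the model pair -/

section ModelAbsorbs

universe u
variable {ι : Type u}

/-- The condition that `Y` absorbs compact subsets of `X`, with closeness controlled by open
covers. -/
def CoverAbsorbs {X : Type*} [TopologicalSpace X] (Y : Set X) : Prop :=
  ∀ K : Set X, IsCompact K → ∀ B : Set X, IsCompact B → B ⊆ K ∩ Y →
    ∀ 𝒰 : Set (Set X), IsOpenCover 𝒰 →
      ∃ h : ↥K → X, Topology.IsEmbedding h ∧ Set.range h ⊆ Y ∧
        (∀ k : ↥K, (k : X) ∈ B → h k = (k : X)) ∧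
        (∀ k : ↥K, ∃ U ∈ 𝒰, h k ∈ U ∧ (k : X) ∈ U)

/-- A continuous function into `[0, 1]` vanishing exactly on a given closed set. -/
lemma exists_vanishing {D : Type*} [MetricSpace D] {B : Set D} (hB : IsClosed B) :
    ∃ u : D → ℝ, Continuous u ∧ (∀ z, 0 ≤ u z) ∧ (∀ z, u z ≤ 1) ∧ ∀ z, u z = 0 ↔ z ∈ B := by
  rcases B.eq_empty_or_nonempty with rfl | hne
  · exact ⟨fun _ => 1, continuous_const, fun _ => zero_le_one, fun _ => le_rfl, by simp⟩
  · refine ⟨fun z => min 1 (Metric.infDist z B),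
      continuous_const.min (Metric.continuous_infDist_pt B),
      fun z => le_min zero_le_one Metric.infDist_nonneg, fun z => min_le_left _ _, fun z => ?_⟩
    rw [hB.mem_iff_infDist_zero hne]
    constructor
    · intro h
      replace h : min 1 (Metric.infDist z B) = 0 := h
      rcases min_choice (1:ℝ) (Metric.infDist z B) with h' | h'
      · rw [h'] at h; norm_num at h
      · rwa [h'] at h
    · intro h
      simp [h]

lemma exists_support_enum {Δ : Set (L2 ι ℝ)} (hΔ : IsCompact Δ) :
    ∃ e : ι → ℕ, ∀ N, ∀ x ∈ Δ, {i | x i ≠ 0 ∧ e i < N}.Finite := by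
  obtain ⟨s, hs, hsΔ⟩ := hΔ.isSeparable
  have hcount : (⋃ x ∈ s, {i | x i ≠ 0}).Countable := by
    refine hs.biUnion fun x _ => ?_
    refine ((l2_summable x).countable_support).mono fun i hi => ?_
    simpa using hi
  obtain ⟨e, he⟩ := countable_iff_exists_injOn.1 hcount
  refine ⟨e, fun N x hx => ?_⟩
  have hsub : {i | x i ≠ 0} ⊆ ⋃ x ∈ s, {i | x i ≠ 0} := by
    intro i hi
    obtain ⟨y, hy, hys⟩ := mem_closure_iff.1 (hsΔ hx) {y : L2 ι ℝ | y i ≠ 0}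
      (isOpen_ne_fun (l2_continuous_apply i) continuous_const) hi
    exact mem_iUnion₂.2 ⟨y, hys, hy⟩
  refine Finite.of_finite_image (f := e) ((finite_lt_nat N).subset ?_)
    (he.mono fun i hi => hsub hi.1)
  rintro _ ⟨i, hi, rfl⟩
  exact hi.2

/-- At parameter `s > 0` the second coordinate is cut off to a finite vector and marked so as to
leave the projection of the compactum, while almost all coordinates in the Hilbert cube are
replaced by functions separating the points of the compactum; as `s → 0` the deformation tends to
the identity. Letting `s` vanish exactly on `B` gives the required embedding. -/
theorem model_absorbs [Infinite ι] :
    CoverAbsorbs ((univ : Set HilbertCube) ×ˢ l2fin ι) := by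
  intro K hK B hB hBK 𝒰 h𝒰
  have : CompactSpace K := isCompact_iff_compactSpace.1 hK
  let : MetricSpace K := TopologicalSpace.metrizableSpaceMetric K
  obtain ⟨c, hcc, hc0, hc1, hcs⟩ := exists_separating K
  obtain ⟨u, huc, hu0, hu1, huB⟩ := exists_vanishing
    (hB.isClosed.preimage (continuous_subtype_val (p := (· ∈ K))))
  have hΔ : IsCompact (Prod.snd '' K) := hK.image continuous_snd
  obtain ⟨e, he⟩ := exists_support_enum hΔ
  obtain ⟨w, hwi, hw⟩ := exists_fast_coords hΔ (η := 1 / 4) (by norm_num)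
  obtain ⟨v, hvc, hv0, hvf, hvm⟩ := exists_mark hwi
  obtain ⟨T, hTc, hT⟩ := exists_cutoff e
  have hKΔ : ∀ z : K, z.1.2 ∈ Prod.snd '' K := fun z => ⟨z.1, z.2, rfl⟩
  let qf : K → ℝ → ℕ → ℝ := fun z s m =>
    (z.1.1 m : ℝ) + (1 - theta m s) * (c m.unpair.1 z - z.1.1 m)
  have hqf : ∀ z s m, qf z s m ∈ Icc (0:ℝ) 1 := fun z s m => by
    have h1 := theta_nonneg m s
    have h2 := theta_le_one m s
    have h3 := (z.1.1 m).2.1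
    have h4 := (z.1.1 m).2.2
    have h5 := hc0 m.unpair.1 z
    have h6 := hc1 m.unpair.1 z
    constructor
    · show 0 ≤ (z.1.1 m : ℝ) + (1 - theta m s) * (c m.unpair.1 z - z.1.1 m)
      nlinarith
    · show (z.1.1 m : ℝ) + (1 - theta m s) * (c m.unpair.1 z - z.1.1 m) ≤ 1
      nlinarith
  let P : K × ℝ → HilbertCube × L2 ι ℝ := fun p =>
    (fun m => ⟨qf p.1 p.2 m, hqf p.1 p.2 m⟩, T (p.1.1.2, p.2) + v p.2)
  have hPc : Continuous P := by
    refine Continuous.prodMk (continuous_pi fun m => Continuous.subtype_mk ?_ _) ?_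
    · have h1 : Continuous fun p : K × ℝ => ((p.1.1.1 m : Icc (0:ℝ) 1) : ℝ) :=
        continuous_subtype_val.comp ((continuous_apply m).comp (continuous_fst.comp
          (continuous_subtype_val.comp continuous_fst)))
      exact h1.add ((continuous_const.sub ((theta_continuous m).comp continuous_snd)).mul
        (((hcc _).comp continuous_fst).sub h1))
    · exact (hTc.comp ((continuous_snd.comp (continuous_subtype_val.comp continuous_fst)).prodMk
        continuous_snd)).add (hvc.comp continuous_snd)
  have hP0 : ∀ z, P (z, 0) = z.1 := fun z => by
    refine Prod.ext (funext fun m => Subtype.ext ?_) (l2_ext fun i => ?_)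
    · show (z.1.1 m : ℝ) + (1 - theta m 0) * (c m.unpair.1 z - z.1.1 m) = z.1.1 m
      rw [theta_eq_one (by norm_num)]; ring
    · show (T (z.1.2, 0) + v 0 : L2 ι ℝ) i = z.1.2 i
      rw [hv0, add_zero, hT, theta_eq_one (by norm_num), one_mul]
  -- the deformation is close to the identity for small parameters, by compactness
  have hev : ∀ᶠ s in 𝓝 (0:ℝ), ∀ z ∈ (univ : Set K), ∃ U ∈ 𝒰, P (z, s) ∈ U ∧ z.1 ∈ U := by
    refine isCompact_univ.eventually_forall_of_forall_eventually fun z _ => ?_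
    have hz : z.1 ∈ ⋃₀ 𝒰 := by rw [h𝒰.2]; trivial
    obtain ⟨U, hU, hzU⟩ := hz
    have h1 : Tendsto (fun p : ℝ × K => P (p.2, p.1)) (𝓝 (0, z)) (𝓝 z.1) := by
      have := (hPc.comp continuous_swap).tendsto ((0:ℝ), z)
      rwa [Function.comp_apply, Prod.swap_prod_mk, hP0] at this
    have h2 : Tendsto (fun p : ℝ × K => p.2.1) (𝓝 (0, z)) (𝓝 z.1) :=
      (continuous_subtype_val.comp continuous_snd).tendsto ((0:ℝ), z)
    have hUn := (h𝒰.1 U hU).mem_nhds hzU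
    filter_upwards [h1 hUn, h2 hUn] with p hp hp'
    exact ⟨U, hU, hp, hp'⟩
  obtain ⟨τ', hτ', hτball⟩ := Metric.eventually_nhds_iff.1 hev
  obtain ⟨τ, hτ, hτ1, hττ⟩ : ∃ τ > 0, τ ≤ 1 ∧ τ < τ' :=
    ⟨min 1 (τ' / 2), by positivity, min_le_left _ _,
      (min_le_right _ _).trans_lt (by linarith)⟩
  let σ : K → ℝ := fun z => τ * u z
  have hσ0 : ∀ z, 0 ≤ σ z := fun z => mul_nonneg hτ.le (hu0 z)
  have hστ : ∀ z, σ z ≤ τ := fun z => mul_le_of_le_one_right hτ.le (hu1 z)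
  have hσB : ∀ z, σ z = 0 ↔ z.1 ∈ B := fun z => by
    rw [← mem_preimage, ← huB]
    exact ⟨fun h => (mul_eq_zero.1 h).resolve_left hτ.ne', fun h => by
      show τ * u z = 0
      rw [h, mul_zero]⟩
  let h : K → HilbertCube × L2 ι ℝ := fun z => P (z, σ z)
  have hhc : Continuous h := hPc.comp (continuous_id.prodMk (continuous_const.mul huc))
  have hhB : ∀ z : K, z.1 ∈ B → h z = z.1 := fun z hz => by
    show P (z, σ z) = z.1
    rw [(hσB z).2 hz, hP0]
  -- a point outside `B` is moved off `B` because of the marked coordinate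
  have hoff : ∀ z z' : K, 0 < σ z → σ z' = 0 → h z ≠ h z' := by
    intro z z' hz hz' heq
    rw [hhB z' ((hσB z').1 hz')] at heq
    obtain ⟨j, hj⟩ := hvm (σ z) hz ((hστ z).trans hτ1)
    have h1 : theta (e (w j)) (σ z) * z.1.2 (w j) + (1 / 2) ^ j = z'.1.2 (w j) := by
      rw [← hT, ← hj, ← heq]; rfl
    have h2 := hw j _ (hKΔ z)
    have h3 := hw j _ (hKΔ z')
    have h4 : |theta (e (w j)) (σ z) * z.1.2 (w j)| ≤ |z.1.2 (w j)| := by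
      rw [abs_mul, abs_of_nonneg (theta_nonneg _ _)]
      exact mul_le_of_le_one_left (abs_nonneg _) (theta_le_one _ _)
    have h5 : (1 / 4 : ℝ) ^ j ≤ (1 / 2) ^ j := pow_le_pow_left₀ (by norm_num) (by norm_num) j
    have h6 : (0:ℝ) < (1 / 2) ^ j := by positivity
    have h7 := neg_abs_le (theta (e (w j)) (σ z) * z.1.2 (w j))
    have h8 := le_abs_self (z'.1.2 (w j))
    linarith
  have hinj : Function.Injective h := by
    intro z z' heq
    rcases (hσ0 z).eq_or_lt with hz | hz <;> rcases (hσ0 z').eq_or_lt with hz' | hz'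
    · apply Subtype.ext
      rw [← hhB z ((hσB z).1 hz.symm), ← hhB z' ((hσB z').1 hz'.symm), heq]
    · exact absurd heq.symm (hoff z' z hz' hz.symm)
    · exact absurd heq (hoff z z' hz hz'.symm)
    · obtain ⟨N, hN⟩ := exists_pow_mul_ge hz 2
      obtain ⟨N', hN'⟩ := exists_pow_mul_ge hz' 2
      refine hcs z z' fun n => ?_
      -- the `n`-th separating function is recorded at arbitrarily late coordinates
      set m := Nat.pair n (max N N') with hm
      have hmN : max N N' ≤ m := Nat.right_le_pair _ _
      have hq : ∀ y : K, theta m (σ y) = 0 → (((h y).1 m : Icc (0:ℝ) 1) : ℝ) = c n y := by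
        intro y hy
        show (y.1.1 m : ℝ) + (1 - theta m (σ y)) * (c m.unpair.1 y - y.1.1 m) = c n y
        rw [hy, hm, Nat.unpair_pair]; ring
      rw [← hq z (theta_eq_zero (hN m (le_of_max_le_left hmN))),
        ← hq z' (theta_eq_zero (hN' m (le_of_max_le_right hmN))), heq]
  refine ⟨h, (hhc.isClosedEmbedding hinj).isEmbedding, ?_, hhB, fun z => ?_⟩
  · rintro _ ⟨z, rfl⟩
    rcases (hσ0 z).eq_or_lt with hz | hz
    · have hzB := (hσB z).1 hz.symm
      rw [hhB z hzB]
      exact (hBK hzB).2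
    · refine ⟨mem_univ _, ?_⟩
      obtain ⟨N, hN⟩ := exists_pow_mul_ge hz 2
      refine ((he N _ (hKΔ z)).union (hvf _ hz)).subset fun i hi => ?_
      by_contra hcon
      rw [mem_union, not_or] at hcon
      apply hi
      show T (z.1.2, σ z) i + v (σ z) i = 0
      have h1 : v (σ z) i = 0 := not_not.1 hcon.2
      rw [h1, hT, add_zero]
      by_cases hz0 : z.1.2 i = 0
      · rw [hz0, mul_zero]
      · have hNi : N ≤ e i := not_lt.1 fun hlt => hcon.1 ⟨hz0, hlt⟩
        rw [theta_eq_zero (hN _ hNi), zero_mul]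
  · refine hτball ?_ z (mem_univ _)
    rw [Real.dist_eq, sub_zero, abs_of_nonneg (hσ0 z)]
    exact (hστ z).trans_lt hττ

end ModelAbsorbs
end West

namespace West
open Filter

/-! ### Transfer along homeomorphisms -/

section Transfer

variable {X Z : Type*} [TopologicalSpace X] [TopologicalSpace Z]

/-- A set is a countable union of locally compact subspaces. -/
def SigmaLC (Y : Set X) : Prop := ∃ F : ℕ → Set X, Y = ⋃ n, F n ∧ ∀ n, LocallyCompactSpace ↥(F n)

lemma SigmaLC.image {Y : Set X} (h : SigmaLC Y) (φ : X ≃ₜ Z) : SigmaLC (φ '' Y) := by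
  obtain ⟨F, rfl, hF⟩ := h
  refine ⟨fun n => φ '' F n, image_iUnion, fun n => ?_⟩
  have := hF n
  exact (φ.image (F n)).symm.isClosedEmbedding.locallyCompactSpace

lemma CoverAbsorbs.image {Y : Set X} (h : CoverAbsorbs Y) (φ : X ≃ₜ Z) :
    CoverAbsorbs (φ '' Y) := by
  intro K hK B hB hBK 𝒰 h𝒰
  have h𝒰' : IsOpenCover ((fun U => φ ⁻¹' U) '' 𝒰) := by
    refine ⟨?_, eq_univ_iff_forall.2 fun x => ?_⟩
    · rintro _ ⟨U, hU, rfl⟩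
      exact (h𝒰.1 U hU).preimage φ.continuous
    · have hx : φ x ∈ ⋃₀ 𝒰 := by rw [h𝒰.2]; trivial
      obtain ⟨U, hU, hxU⟩ := hx
      exact ⟨_, ⟨U, hU, rfl⟩, hxU⟩
  obtain ⟨f, f1, f2, f3, f4⟩ := h (φ ⁻¹' K) (φ.isCompact_preimage.2 hK) (φ ⁻¹' B)
    (φ.isCompact_preimage.2 hB)
    (fun x hx => ⟨(hBK hx).1, by
      obtain ⟨y, hy, hyx⟩ := (hBK hx).2
      exact φ.injective hyx ▸ hy⟩)
    ((fun U => φ ⁻¹' U) '' 𝒰) h𝒰'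
  let ψ : K → φ ⁻¹' K := fun k => ⟨φ.symm k, by simp⟩
  have hψ : IsEmbedding ψ := by
    have h1 : IsEmbedding ((↑) ∘ ψ : K → X) := φ.symm.isEmbedding.comp IsEmbedding.subtypeVal
    exact IsEmbedding.of_comp (Continuous.subtype_mk h1.continuous _) continuous_subtype_val h1
  refine ⟨fun k => φ (f (ψ k)), φ.isEmbedding.comp (f1.comp hψ), ?_, fun k hk => ?_, fun k => ?_⟩
  · rintro _ ⟨k, rfl⟩
    exact ⟨_, f2 ⟨_, rfl⟩, rfl⟩
  · show φ (f (ψ k)) = k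
    rw [f3 (ψ k) (by simpa [ψ] using hk)]
    exact φ.apply_symm_apply k
  · obtain ⟨_, ⟨U, hU, rfl⟩, h1, h2⟩ := f4 (ψ k)
    exact ⟨U, hU, h1, by simpa [ψ] using h2⟩

lemma CoverAbsorbs.absorbs {E : Type*} [MetricSpace E] {Y : Set E} (h : CoverAbsorbs Y) :
    Absorbs Y := by
  intro K B hK hB hBK ε hε
  obtain ⟨f, f1, f2, f3, f4⟩ := h K hK B hB hBK (range fun x : E => Metric.ball x (ε / 2))
    ⟨by rintro _ ⟨x, rfl⟩; exact Metric.isOpen_ball, by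
      rw [eq_univ_iff_forall]
      exact fun x => ⟨_, ⟨x, rfl⟩, Metric.mem_ball_self (by positivity)⟩⟩
  refine ⟨f, f1.continuous, f1.injective, fun k => f2 ⟨k, rfl⟩, f3, fun k => ?_⟩
  obtain ⟨_, ⟨x, rfl⟩, h1, h2⟩ := f4 k
  rw [Metric.mem_ball] at h1 h2
  have := dist_triangle_right (f k) k.1 x
  linarith

end Transfer
end West

open West

/-- (West) A pair `(X, Y)` with `Y ⊆ X` is homeomorphic to the pair
`(𝕀^ω × ℓ₂(κ), 𝕀^ω × ℓ₂ᶠ(κ))` for an infinite cardinal `κ` if and only if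
(1) `X` is homeomorphic to `ℓ₂(κ)`, (2) `Y` is a countable union of locally
compact spaces, and (3) `Y` absorbs compact subsets of `X`. -/
theorem pair_homeomorph_hilbertCube_prod_l2_l2fin_iff_west
    {X : Type u} [TopologicalSpace X] (Y : Set X)
    (κ : Cardinal.{u}) (hκ : Cardinal.aleph0 ≤ κ) :
    (∃ h : X ≃ₜ HilbertCube × l2Space κ.out,
        (fun x => h x) '' Y = (Set.univ : Set HilbertCube) ×ˢ l2fin κ.out) ↔
      (Nonempty (X ≃ₜ l2Space κ.out) ∧
        (∃ F : ℕ → Set X, Y = ⋃ n, F n ∧ ∀ n, LocallyCompactSpace ↥(F n)) ∧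
        (∀ K : Set X, IsCompact K → ∀ B : Set X, IsCompact B → B ⊆ K ∩ Y →
          ∀ 𝒰 : Set (Set X), IsOpenCover 𝒰 →
            ∃ h : ↥K → X, Topology.IsEmbedding h ∧ Set.range h ⊆ Y ∧
              (∀ k : ↥K, (k : X) ∈ B → h k = (k : X)) ∧
              (∀ k : ↥K, ∃ U ∈ 𝒰, h k ∈ U ∧ (k : X) ∈ U))) := by
  have : Infinite κ.out := Cardinal.infinite_iff.2 (by rwa [Cardinal.mk_out])
  obtain ⟨φ⟩ := nonempty_cube_l2Space κ.out
  have hS : SigmaLC ((univ : Set HilbertCube) ×ˢ l2fin κ.out) :=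
    ⟨_, iUnion_layer, layer_locallyCompact⟩
  have hA : CoverAbsorbs ((univ : Set HilbertCube) ×ˢ l2fin κ.out) := model_absorbs
  constructor
  · rintro ⟨h, hY⟩
    have e : h.symm '' ((univ : Set HilbertCube) ×ˢ l2fin κ.out) = Y := by
      rw [← hY]
      exact h.symm_image_image Y
    have hS' := hS.image h.symm
    have hA' := hA.image h.symm
    rw [e] at hS' hA'
    exact ⟨⟨h.trans φ⟩, hS', hA'⟩
  · rintro ⟨⟨ψ⟩, hS', hA'⟩
    have hSY : SigmaLC Y := hS'
    have hAY : CoverAbsorbs Y := hA'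
    obtain ⟨F₁, e₁, hF₁⟩ := hSY.image ψ
    obtain ⟨F₂, e₂, hF₂⟩ := hS.image φ
    obtain ⟨A₁, hA₁, u₁⟩ := exists_dc_union e₁ hF₁
    obtain ⟨A₂, hA₂, u₂⟩ := exists_dc_union e₂ hF₂
    obtain ⟨G, hG⟩ := exists_homeo_of_absorbs (hAY.image ψ).absorbs (hA.image φ).absorbs
      hA₁ hA₂ u₁ u₂
    refine ⟨(ψ.trans G).trans φ.symm, ?_⟩
    have e : (fun x => ((ψ.trans G).trans φ.symm) x) '' Y = φ.symm '' (G '' (ψ '' Y)) := by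
      rw [image_image, image_image]; rfl
    rw [e, hG]
    exact φ.symm_image_image _
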